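/- There is a constant c > 0 such that R(x) > c·x^{−1/2}·log log log x for arbitrarily large x, and R(x) < −c·x^{−1/2}·log log log x for arbitrarily large x. (That is, R(x) = Ω_±( x^{−1/2} log log log x ), unconditionally.) -/

import Mathlib

open Filter

/-- `R(x) = ∑_{n ≤ x} Λ(n)/n - log x + γ`. -/
noncomputable def Rfun (x : ℝ) : ℝ :=
  (∑ n ∈ Finset.Icc 1 ⌊x⌋₊, ArithmeticFunction.vonMangoldt n / n) -
    Real.log x + Real.eulerMascheroniConstant

namespace RfunOmega

open MeasureTheory Topology Set ProbabilityTheory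

/-- Landau's local step: a Laplace transform of a positive measure on the half line which agrees
with a function analytic at the abscissa `a` converges to the left of `a`. -/
theorem exists_lt_integrable_of_analyticAt {μ : Measure ℝ} (hpos : ∀ᵐ u ∂μ, 0 ≤ u) {H : ℝ → ℝ}
    {a : ℝ} (hH : AnalyticAt ℝ H a)
    (hint : ∀ σ, a < σ → Integrable (fun u : ℝ => Real.exp (σ * (-u))) μ)
    (heq : ∀ σ, a < σ → mgf (fun u : ℝ => -u) μ σ = H σ) :
    ∃ a' < a, Integrable (fun u : ℝ => Real.exp (a' * (-u))) μ := by
  obtain ⟨p, r, hp⟩ := hH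
  obtain ⟨ρ, hρ0, hρr⟩ : ∃ ρ : NNReal, 0 < ρ ∧ (ρ : ENNReal) < r :=
    ENNReal.lt_iff_exists_nnreal_btwn.1 hp.r_pos |>.imp fun x hx => ⟨by exact_mod_cast hx.1, hx.2⟩
  have hp' := hp.mono (by exact_mod_cast hρ0) hρr.le
  have hρ : (0 : ℝ) < ρ := hρ0
  set y : ℝ := ρ / 4 with hy
  have hyn : ‖y‖₊ = ρ / 4 := by
    ext; simp [hy]
  have hb := hp'.changeOrigin (y := y) (by rw [hyn]; exact_mod_cast (div_lt_self hρ0 (by norm_num)))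
  set b := a + y with hbdef
  have hab : a < b := by rw [hbdef]; linarith
  have hset : Ioi a ⊆ integrableExpSet (fun u : ℝ => -u) μ := fun σ hσ => hint σ hσ
  have hbint : b ∈ interior (integrableExpSet (fun u : ℝ => -u) μ) :=
    interior_mono hset (by rw [isOpen_Ioi.interior_eq]; exact hab)
  have hm := hasFPowerSeriesAt_mgf hbint
  have hev : H =ᶠ[𝓝 b] mgf (fun u : ℝ => -u) μ := by
    filter_upwards [Ioi_mem_nhds hab] with σ hσ using (heq σ hσ).symm
  have hu := hb.hasFPowerSeriesAt.eq_formalMultilinearSeries (hm.congr hev.symm)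
  have hmem : (-(ρ / 2) : ℝ) ∈ Metric.eball (0 : ℝ) ((ρ : ENNReal) - ‖y‖₊) := by
    rw [hyn, ← ENNReal.coe_sub, Metric.mem_eball, edist_zero_right, enorm_eq_nnnorm,
      ENNReal.coe_lt_coe, ← NNReal.coe_lt_coe,
      NNReal.coe_sub (div_le_self (by positivity) (by norm_num))]
    simp only [nnnorm_neg, coe_nnnorm, NNReal.coe_div, Real.norm_eq_abs]
    rw [abs_of_pos (by positivity)]
    push_cast
    linarith
  have hs := (hb.hasSum hmem).summable
  rw [hu] at hs
  refine ⟨a - ρ / 4, by linarith, ?_⟩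
  have hXm : AEMeasurable (fun u : ℝ => -u) μ := by fun_prop
  set F : ℕ → ℝ → ℝ := fun n u => (u * (ρ / 2)) ^ n / n.factorial * Real.exp (b * (-u)) with hF
  have hFint : ∀ n, Integrable (F n) μ := fun n => by
    have := integrable_pow_mul_exp_of_mem_interior_integrableExpSet hbint n
    refine (this.const_mul ((-1) ^ n * (ρ / 2 : ℝ) ^ n / n.factorial)).congr
      (Eventually.of_forall fun u => ?_)
    simp only [hF]
    rw [mul_pow, neg_pow u]
    have : ((-1 : ℝ) ^ n * (-1) ^ n) = 1 := by rw [← mul_pow]; simp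
    linear_combination (u ^ n * (ρ / 2 : ℝ) ^ n / n.factorial * Real.exp (b * -u)) * this
  have hFval : ∀ n, ∫ u, F n u ∂μ = (FormalMultilinearSeries.ofScalars ℝ
        (fun n ↦ (μ[fun ω ↦ (-ω) ^ n * Real.exp (b * -ω)] : ℝ) / n.factorial) n)
          fun _ => (-(ρ / 2) : ℝ) := fun n => by
    rw [FormalMultilinearSeries.ofScalars_apply_eq, smul_eq_mul, div_mul_eq_mul_div,
      ← integral_mul_const, ← integral_div]
    refine integral_congr_ae (Eventually.of_forall fun u => ?_)
    simp only [hF]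
    rw [mul_pow, neg_pow u, neg_pow (ρ / 2 : ℝ)]
    have : ((-1 : ℝ) ^ n * (-1) ^ n) = 1 := by rw [← mul_pow]; simp
    linear_combination (-(u ^ n * (ρ / 2 : ℝ) ^ n / n.factorial * Real.exp (b * -u))) * this
  have hFnn : ∀ᵐ u ∂μ, ∀ n, 0 ≤ F n u := by
    filter_upwards [hpos] with u hu n
    simp only [hF]; positivity
  refine ⟨by fun_prop, ?_⟩
  rw [hasFiniteIntegral_iff_ofReal (Eventually.of_forall fun u => (Real.exp_pos _).le)]
  have key : ∫⁻ u, ENNReal.ofReal (Real.exp ((a - ρ / 4) * -u)) ∂μ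
      = ∑' n, ENNReal.ofReal (∫ u, F n u ∂μ) := by
    have h1 : ∀ᵐ u ∂μ, ENNReal.ofReal (Real.exp ((a - ρ / 4) * -u))
        = ∑' n, ENNReal.ofReal (F n u) := by
      filter_upwards [hFnn] with u hu
      have hs : HasSum (fun n => F n u) (Real.exp (u * (ρ / 2)) * Real.exp (b * (-u))) := by
        have := NormedSpace.expSeries_div_hasSum_exp (𝔸 := ℝ) (u * (ρ / 2))
        rw [← Real.exp_eq_exp_ℝ] at this
        exact this.mul_right _
      rw [← ENNReal.ofReal_tsum_of_nonneg hu hs.summable, hs.tsum_eq, ← Real.exp_add]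
      congr 2
      rw [hbdef, hy]; ring
    rw [lintegral_congr_ae h1, lintegral_tsum (fun n => (hFint n).1.aemeasurable.ennreal_ofReal)]
    refine tsum_congr fun n => ?_
    rw [ofReal_integral_eq_lintegral_ofReal (hFint n) (hFnn.mono fun u hu => hu n)]
  rw [key]
  simp_rw [hFval]
  exact hs.tsum_ofReal_lt_top

/-- **Landau's theorem** for Laplace transforms of positive measures. -/
theorem integrable_exp_of_analyticOnNhd {μ : Measure ℝ} (hpos : ∀ᵐ u ∂μ, 0 ≤ u) {H : ℝ → ℝ}
    (hH : AnalyticOnNhd ℝ H (Ioi 0)) {σ₁ : ℝ}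
    (hint : ∀ σ, σ₁ < σ → Integrable (fun u : ℝ => Real.exp (σ * (-u))) μ)
    (heq : ∀ σ, σ₁ < σ → mgf (fun u : ℝ => -u) μ σ = H σ) {σ : ℝ} (hσ : 0 < σ) :
    Integrable (fun u : ℝ => Real.exp (σ * (-u))) μ := by
  set I : Set ℝ := {σ | 0 < σ ∧ Integrable (fun u : ℝ => Real.exp (σ * (-u))) μ} with hI
  have hup : ∀ s ∈ I, ∀ t, s < t → t ∈ I := fun s hs t hst => by
    refine ⟨hs.1.trans hst, hs.2.mono' (by fun_prop) ?_⟩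
    filter_upwards [hpos] with u hu
    rw [Real.norm_eq_abs, Real.abs_exp]
    apply Real.exp_le_exp.2
    nlinarith
  have hne : I.Nonempty := ⟨max σ₁ 0 + 1, by positivity, hint _ (by linarith [le_max_left σ₁ 0])⟩
  have hbdd : BddBelow I := ⟨0, fun s hs => hs.1.le⟩
  set a := sInf I with ha
  have hIoi : ∀ s, a < s → s ∈ I := fun s hs => by
    obtain ⟨t, ht, hts⟩ := exists_lt_of_csInf_lt hne hs
    exact hup t ht s hts
  have ha0 : 0 ≤ a := le_csInf hne fun s hs => hs.1.le
  rcases ha0.eq_or_lt with h0 | h0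
  · exact (hIoi σ (h0 ▸ hσ)).2
  exfalso
  have hset : Ioi a ⊆ interior (integrableExpSet (fun u : ℝ => -u) μ) :=
    interior_maximal (fun s hs => (hIoi s hs).2) isOpen_Ioi
  have hEq : EqOn (mgf (fun u : ℝ => -u) μ) H (Ioi a) := by
    set c := max (max σ₁ a) 0 + 1
    have hc : max (max σ₁ a) 0 < c := lt_add_one _
    have hc1 : σ₁ < c := lt_of_le_of_lt ((le_max_left _ _).trans (le_max_left _ _)) hc
    have hc2 : a < c := lt_of_le_of_lt ((le_max_right _ _).trans (le_max_left _ _)) hc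
    exact (analyticOnNhd_mgf.mono hset).eqOn_of_preconnected_of_eventuallyEq
      (hH.mono (Ioi_subset_Ioi ha0)) isPreconnected_Ioi hc2
      (by filter_upwards [Ioi_mem_nhds hc1] with s hs using heq s hs)
  obtain ⟨a', ha', hi⟩ := exists_lt_integrable_of_analyticAt hpos (hH a h0)
    (fun s hs => (hIoi s hs).2) hEq
  have hmem : max a' (a / 2) ∈ I := by
    refine ⟨lt_of_lt_of_le (by positivity) (le_max_right _ _), hi.mono' (by fun_prop) ?_⟩
    filter_upwards [hpos] with u hu
    rw [Real.norm_eq_abs, Real.abs_exp]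
    apply Real.exp_le_exp.2
    nlinarith [le_max_left a' (a / 2)]
  exact absurd (csInf_le hbdd hmem) (not_le.2 (max_lt ha' (by linarith)))

theorem integrable_withDensity_exp_iff {g : ℝ → ℝ} (hg : Measurable g) (hpos : ∀ u, 0 < u → 0 ≤ g u)
    (σ : ℝ) :
    Integrable (fun u : ℝ => Real.exp (σ * (-u)))
      ((volume.restrict (Ioi 0)).withDensity fun u => ENNReal.ofReal (g u)) ↔
    IntegrableOn (fun u => g u * Real.exp (-σ * u)) (Ioi 0) := by
  rw [integrable_withDensity_iff_integrable_smul' hg.ennreal_ofReal (by simp)]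
  refine integrable_congr ?_
  filter_upwards [ae_restrict_mem measurableSet_Ioi] with u hu
  simp [ENNReal.toReal_ofReal (hpos u hu)]

theorem complexMGF_withDensity {g : ℝ → ℝ} (hg : Measurable g) (hpos : ∀ u, 0 < u → 0 ≤ g u)
    (z : ℂ) :
    complexMGF (fun u : ℝ => -u)
      ((volume.restrict (Ioi 0)).withDensity fun u => ENNReal.ofReal (g u)) z =
    ∫ u in Ioi (0 : ℝ), (g u : ℂ) * Complex.exp (-z * u) := by
  rw [complexMGF, integral_withDensity_eq_integral_toReal_smul hg.ennreal_ofReal (by simp)]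
  refine setIntegral_congr_fun measurableSet_Ioi fun u hu => ?_
  simp [ENNReal.toReal_ofReal (hpos u hu)]

/-- The Laplace transform of a nonnegative function is analytic on `{Re z > a}` if it converges
for all real `σ > a`. -/
theorem analyticAt_laplace_of_nonneg {g : ℝ → ℝ} (hg : Measurable g) (hpos : ∀ u, 0 < u → 0 ≤ g u)
    {a : ℝ} (hint : ∀ σ, a < σ → IntegrableOn (fun u => g u * Real.exp (-σ * u)) (Ioi 0))
    {z : ℂ} (hz : a < z.re) :
    AnalyticAt ℂ (fun z : ℂ => ∫ u in Ioi (0 : ℝ), (g u : ℂ) * Complex.exp (-z * u)) z := by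
  simp_rw [← complexMGF_withDensity hg hpos]
  refine analyticAt_complexMGF ?_
  have : Ioi a ⊆ interior (integrableExpSet (fun u : ℝ => -u)
      ((volume.restrict (Ioi 0)).withDensity fun u => ENNReal.ofReal (g u))) :=
    interior_maximal (fun s hs => (integrable_withDensity_exp_iff hg hpos s).2 (hint s hs))
      isOpen_Ioi
  exact this hz

theorem norm_cexp_neg_mul (z : ℂ) (u : ℝ) : ‖Complex.exp (-z * u)‖ = Real.exp (-z.re * u) := by
  rw [Complex.norm_exp]; simp

/-- The Laplace transform of a function is analytic on `{Re z > a}` if it converges absolutely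
for all real `σ > a`. -/
theorem analyticAt_laplace {g : ℝ → ℝ} (hg : Measurable g)
    {a : ℝ} (hint : ∀ σ, a < σ → IntegrableOn (fun u => g u * Real.exp (-σ * u)) (Ioi 0))
    {z : ℂ} (hz : a < z.re) :
    AnalyticAt ℂ (fun z : ℂ => ∫ u in Ioi (0 : ℝ), (g u : ℂ) * Complex.exp (-z * u)) z := by
  have key : ∀ (h : ℝ → ℝ), Measurable h → (∀ u, |h u| ≤ |g u|) → ∀ σ, a < σ →
      IntegrableOn (fun u => h u * Real.exp (-σ * u)) (Ioi 0) := fun h hm hle σ hσ => by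
    refine Integrable.mono (hint σ hσ) (by fun_prop) (Eventually.of_forall fun u => ?_)
    rw [norm_mul, norm_mul]
    exact mul_le_mul_of_nonneg_right (hle u) (norm_nonneg _)
  have h1 : ∀ u, |max (g u) 0| ≤ |g u| := fun u => by
    rw [abs_of_nonneg (le_max_right _ _)]; exact max_le (le_abs_self _) (abs_nonneg _)
  have h2 : ∀ u, |max (-g u) 0| ≤ |g u| := fun u => by
    rw [abs_of_nonneg (le_max_right _ _)]; exact max_le (neg_le_abs _) (abs_nonneg _)
  have m1 : Measurable fun u => max (g u) 0 := hg.max measurable_const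
  have m2 : Measurable fun u => max (-g u) 0 := hg.neg.max measurable_const
  have A1 := analyticAt_laplace_of_nonneg m1 (fun u _ => le_max_right _ _) (key _ m1 h1) hz
  have A2 := analyticAt_laplace_of_nonneg m2 (fun u _ => le_max_right _ _) (key _ m2 h2) hz
  refine (A1.sub A2).congr ?_
  have hc : ∀ (h : ℝ → ℝ), Measurable h → (∀ u, |h u| ≤ |g u|) → ∀ w : ℂ, a < w.re →
      IntegrableOn (fun u : ℝ => (h u : ℂ) * Complex.exp (-w * u)) (Ioi 0) :=
    fun h hm hle w hw => by
    refine Integrable.mono (key h hm hle _ hw) (by fun_prop) (Eventually.of_forall fun u => ?_)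
    simp [Complex.norm_exp]
  filter_upwards [(isOpen_lt continuous_const Complex.continuous_re).mem_nhds hz] with w hw
  simp only [Pi.sub_apply]
  rw [← integral_sub (hc _ m1 h1 w hw) (hc _ m2 h2 w hw)]
  refine integral_congr_ae (Eventually.of_forall fun u => ?_)
  simp only [← sub_mul, ← Complex.ofReal_sub]
  congr 2
  rcases le_total (g u) 0 with h | h
  · simp [h]
  · simp [h]

theorem integrableOn_exp_neg_mul {σ : ℝ} (h : 0 < σ) :
    IntegrableOn (fun u : ℝ => Real.exp (-σ * u)) (Ioi 0) :=
  exp_neg_integrableOn_Ioi 0 h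

theorem riemannZeta₁_eq_of_ne_one {s : ℂ} (hs : s ≠ 1) :
    riemannZeta₁ s = (s - 1) * riemannZeta s := by
  rw [riemannZeta_eq_inv_sub_mul hs, mul_inv_cancel_left₀ (sub_ne_zero.2 hs)]

theorem riemannZeta₁_eq_integral {s : ℂ} (hs : 1 < s.re) :
    riemannZeta₁ s = s - s * (s - 1) *
      ∫ u in Ioi (0 : ℝ), ((Int.fract (Real.exp u) : ℝ) : ℂ) * Complex.exp (-s * u) := by
  have h1 := LSeries_eq_mul_integral_of_nonneg (fun _ => (1 : ℝ)) zero_le_one hs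
    (by simpa using Asymptotics.isBigO_refl _ _) (fun _ => zero_le_one)
  have h2 : LSeries (fun _ => ((1 : ℝ) : ℂ)) s = riemannZeta s := by
    rw [← LSeries_one_eq_riemannZeta hs]
    exact LSeries_congr (by simp) s
  have hre0 : 0 < s.re := by linarith
  have hs0 : s ≠ 0 := fun h => by simp [h] at hre0
  have hs1 : s ≠ 1 := fun h => by simp [h] at hs
  have h3 : ∫ t in Ioi (1 : ℝ), (∑ k ∈ Finset.Icc 1 ⌊t⌋₊, ((1 : ℝ) : ℂ)) * (t : ℂ) ^ (-(s + 1)) =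
      ∫ u in Ioi (0 : ℝ), (⌊Real.exp u⌋₊ : ℂ) * Complex.exp (-s * u) := by
    have h0 := integral_comp_exp_Ioi
      (fun t : ℝ => (∑ k ∈ Finset.Icc 1 ⌊t⌋₊, ((1 : ℝ) : ℂ)) * (t : ℂ) ^ (-(s + 1))) 0
    rw [Real.exp_zero] at h0
    rw [← h0]
    refine setIntegral_congr_fun measurableSet_Ioi fun u hu => ?_
    simp only [Complex.ofReal_one, Finset.sum_const, Nat.card_Icc, add_tsub_cancel_right,
      nsmul_eq_mul, mul_one, Complex.real_smul]
    rw [Complex.ofReal_exp, Complex.cpow_def_of_ne_zero (Complex.exp_ne_zero _),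
      ← Complex.ofReal_exp, ← Complex.ofReal_log (Real.exp_pos _).le, Real.log_exp,
      mul_left_comm, Complex.ofReal_exp, ← Complex.exp_add]
    congr 2
    ring
  have hI1 : IntegrableOn (fun u : ℝ => Complex.exp (-(s - 1) * u)) (Ioi 0) := by
    refine (integrableOn_exp_neg_mul (σ := s.re - 1) (by linarith)).mono' (by fun_prop)
      (Eventually.of_forall fun u => ?_)
    rw [norm_cexp_neg_mul]; simp
  have hI2 : IntegrableOn (fun u : ℝ => ((Int.fract (Real.exp u) : ℝ) : ℂ) * Complex.exp (-s * u))
      (Ioi 0) := by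
    refine (integrableOn_exp_neg_mul (σ := s.re) (by linarith)).mono'
      (by
        have : Measurable fun u : ℝ => Int.fract (Real.exp u) := Real.measurable_exp.fract
        fun_prop)
      (Eventually.of_forall fun u => ?_)
    rw [norm_mul, norm_cexp_neg_mul, Complex.norm_real, Real.norm_eq_abs, Int.abs_fract]
    exact mul_le_of_le_one_left (Real.exp_pos _).le (Int.fract_lt_one _).le
  have h4 : ∫ u in Ioi (0 : ℝ), (⌊Real.exp u⌋₊ : ℂ) * Complex.exp (-s * u) =
      (∫ u in Ioi (0 : ℝ), Complex.exp (-(s - 1) * u)) -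
      ∫ u in Ioi (0 : ℝ), ((Int.fract (Real.exp u) : ℝ) : ℂ) * Complex.exp (-s * u) := by
    rw [← integral_sub hI1 hI2]
    refine integral_congr_ae (Eventually.of_forall fun u => ?_)
    simp only
    rw [show (-(s - 1) * u : ℂ) = u + -s * u by ring, Complex.exp_add, ← sub_mul,
      ← Complex.ofReal_exp, ← Complex.ofReal_sub, Int.self_sub_fract,
          ← natCast_floor_eq_intCast_floor]
    · simp
    · exact (Real.exp_pos _).le
  have h5 : ∫ u in Ioi (0 : ℝ), Complex.exp (-(s - 1) * u) = 1 / (s - 1) := by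
    rw [integral_exp_mul_complex_Ioi (by simpa using hs)]
    have : s - 1 ≠ 0 := sub_ne_zero.2 hs1
    simp only [Complex.ofReal_zero, mul_zero, Complex.exp_zero, neg_div_neg_eq]
  rw [riemannZeta₁_eq_of_ne_one hs1, ← h2, h1, h3, h4, h5]
  have : s - 1 ≠ 0 := sub_ne_zero.2 hs1
  field_simp

theorem riemannZeta₁_ofReal_ne_zero {σ : ℝ} (hσ : 0 < σ) : riemannZeta₁ σ ≠ 0 := by
  rcases le_or_gt 1 σ with h | h
  · rcases h.eq_or_lt with h | h
    · simp [← h]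
    · have h1 : (σ : ℂ) ≠ 1 := by exact_mod_cast h.ne'
      rw [riemannZeta₁_eq_of_ne_one h1]
      exact mul_ne_zero (sub_ne_zero.2 h1) (riemannZeta_ne_zero_of_one_le_re (by simpa using h.le))
  have hm : Measurable fun u : ℝ => Int.fract (Real.exp u) := Real.measurable_exp.fract
  have hint : ∀ τ : ℝ, 0 < τ →
      IntegrableOn (fun u => Int.fract (Real.exp u) * Real.exp (-τ * u)) (Ioi 0) := fun τ hτ => by
    refine (integrableOn_exp_neg_mul hτ).mono' (by fun_prop) (Eventually.of_forall fun u => ?_)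
    rw [norm_mul, Real.norm_eq_abs, Real.norm_eq_abs, Int.abs_fract, Real.abs_exp]
    exact mul_le_of_le_one_left (Real.exp_pos _).le (Int.fract_lt_one _).le
  have hU : IsPreconnected {s : ℂ | 0 < s.re} := (convex_halfSpace_re_gt 0).isPreconnected
  have hEq : EqOn riemannZeta₁ (fun s => s - s * (s - 1) *
      ∫ u in Ioi (0 : ℝ), ((Int.fract (Real.exp u) : ℝ) : ℂ) * Complex.exp (-s * u))
          {s : ℂ | 0 < s.re} := by
    refine AnalyticOnNhd.eqOn_of_preconnected_of_eventuallyEq (z₀ := 2)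
      (fun s _ => differentiable_riemannZeta₁.analyticAt s) (fun s hs => ?_) hU (by simp) ?_
    · have := analyticAt_laplace hm hint hs
      fun_prop
    · filter_upwards [(isOpen_lt continuous_const Complex.continuous_re).mem_nhds
        (show (1 : ℝ) < (2 : ℂ).re by simp)] with s hs using riemannZeta₁_eq_integral hs
  have h1 := hEq (show (σ : ℂ) ∈ {s : ℂ | 0 < s.re} by simpa using hσ)
  have h2 : ∫ u in Ioi (0 : ℝ), ((Int.fract (Real.exp u) : ℝ) : ℂ) * Complex.exp (-(σ : ℂ) * u) =
      ((∫ u in Ioi (0 : ℝ), Int.fract (Real.exp u) * Real.exp (-σ * u) : ℝ) : ℂ) := by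
    rw [← integral_complex_ofReal]
    simp
  simp only [h2] at h1
  set J := ∫ u in Ioi (0 : ℝ), Int.fract (Real.exp u) * Real.exp (-σ * u)
  have hJ : 0 ≤ J := integral_nonneg fun u => mul_nonneg (Int.fract_nonneg _) (Real.exp_pos _).le
  rw [h1]
  have : σ - σ * (σ - 1) * J ≠ 0 := by
    have : 0 ≤ σ * (1 - σ) * J := by
      have := sub_pos.2 h
      positivity
    nlinarith
  exact_mod_cast this

/-- The rescaled error term `u ↦ e^{u/2} R(e^u)`. -/
noncomputable def fR (u : ℝ) : ℝ := Real.exp (u / 2) * Rfun (Real.exp u)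

theorem measurable_fR : Measurable fR := by
  have h : Measurable fun x : ℝ =>
      ∑ n ∈ Finset.Icc 1 ⌊x⌋₊, (ArithmeticFunction.vonMangoldt n / n : ℝ) :=
    (measurable_from_nat (f := fun N : ℕ =>
      ∑ n ∈ Finset.Icc 1 N, (ArithmeticFunction.vonMangoldt n / n : ℝ))).comp Nat.measurable_floor
  have h2 : Measurable Rfun := (h.sub Real.measurable_log).add_const _
  unfold fR
  exact (by fun_prop : Measurable fun u : ℝ => Real.exp (u / 2)).mul (h2.comp Real.measurable_exp)

theorem sum_vonMangoldt_div_nonneg (N : ℕ) :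
    0 ≤ ∑ n ∈ Finset.Icc 1 N, (ArithmeticFunction.vonMangoldt n / n : ℝ) :=
  Finset.sum_nonneg fun _ _ => div_nonneg ArithmeticFunction.vonMangoldt_nonneg (Nat.cast_nonneg _)

theorem sum_vonMangoldt_div_le {x : ℝ} (hx : 1 ≤ x) :
    ∑ n ∈ Finset.Icc 1 ⌊x⌋₊, (ArithmeticFunction.vonMangoldt n / n : ℝ) ≤
      Real.log x * (1 + Real.log x) := by
  have h1 : ∑ n ∈ Finset.Icc 1 ⌊x⌋₊, (ArithmeticFunction.vonMangoldt n / n : ℝ) ≤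
      ∑ n ∈ Finset.Icc 1 ⌊x⌋₊, Real.log x * (n : ℝ)⁻¹ := by
    refine Finset.sum_le_sum fun n hn => ?_
    rw [Finset.mem_Icc] at hn
    rw [div_eq_mul_inv]
    refine mul_le_mul_of_nonneg_right (ArithmeticFunction.vonMangoldt_le_log.trans ?_)
      (by positivity)
    exact Real.log_le_log (by exact_mod_cast hn.1)
      ((Nat.cast_le.2 hn.2).trans (Nat.floor_le (by linarith)))
  refine h1.trans ?_
  rw [← Finset.mul_sum]
  refine mul_le_mul_of_nonneg_left ?_ (Real.log_nonneg hx)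
  have := harmonic_floor_le_one_add_log x hx
  rw [harmonic_eq_sum_Icc] at this
  push_cast at this
  exact this

theorem abs_fR_le {u : ℝ} (hu : 0 ≤ u) : |fR u| ≤ Real.exp (u / 2) * (1 + u) ^ 2 := by
  rw [fR, abs_mul, Real.abs_exp]
  refine mul_le_mul_of_nonneg_left ?_ (Real.exp_pos _).le
  have h1 := sum_vonMangoldt_div_le (Real.one_le_exp hu)
  have h2 := sum_vonMangoldt_div_nonneg ⌊Real.exp u⌋₊
  have h3 := Real.one_half_lt_eulerMascheroniConstant
  have h4 := Real.eulerMascheroniConstant_lt_two_thirds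
  rw [Real.log_exp] at h1
  rw [Rfun, Real.log_exp, abs_le]
  constructor <;> nlinarith

theorem one_add_sq_le_exp {b : ℝ} (hb : 0 < b) :
    ∃ C : ℝ, 0 < C ∧ ∀ u : ℝ, 0 ≤ u → (1 + u) ^ 2 ≤ C * Real.exp (b * u) := by
  refine ⟨(max 1 (2 / b)) ^ 2, by positivity, fun u hu => ?_⟩
  have h : 1 + u ≤ max 1 (2 / b) * Real.exp (b / 2 * u) := by
    have h1 : b / 2 * u + 1 ≤ Real.exp (b / 2 * u) := Real.add_one_le_exp _
    have h2 : (1 : ℝ) ≤ max 1 (2 / b) := le_max_left _ _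
    have h3 : 2 / b ≤ max 1 (2 / b) := le_max_right _ _
    have h4 : u = 2 / b * (b / 2 * u) := by field_simp
    have h5 : 0 ≤ b / 2 * u := by positivity
    nlinarith
  calc (1 + u) ^ 2 ≤ (max 1 (2 / b) * Real.exp (b / 2 * u)) ^ 2 := by gcongr
    _ = _ := by rw [mul_pow, ← Real.exp_nat_mul]; congr 2; push_cast; ring

/-- Integrability of functions of at most quadratic growth against `e^{-σu}`. -/
theorem integrableOn_mul_exp_of_le {g : ℝ → ℝ} (hg : Measurable g) {a C : ℝ}
    (hle : ∀ u, 0 < u → |g u| ≤ C * (Real.exp (a * u) * (1 + u) ^ 2)) {σ : ℝ} (hσ : a < σ) :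
    IntegrableOn (fun u => g u * Real.exp (-σ * u)) (Ioi 0) := by
  obtain ⟨D, hD, h⟩ := one_add_sq_le_exp (b := (σ - a) / 2) (by linarith)
  refine Integrable.mono'
    ((integrableOn_exp_neg_mul (σ := (σ - a) / 2) (by linarith)).const_mul (|C| * D))
    (by fun_prop) ?_
  filter_upwards [ae_restrict_mem measurableSet_Ioi] with u hu
  have hu' : 0 < u := hu
  rw [norm_mul, Real.norm_eq_abs, Real.norm_eq_abs, Real.abs_exp]
  calc |g u| * Real.exp (-σ * u)
      ≤ (|C| * (Real.exp (a * u) * (D * Real.exp ((σ - a) / 2 * u)))) * Real.exp (-σ * u) := by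
        refine mul_le_mul_of_nonneg_right ((hle u hu).trans ?_) (Real.exp_pos _).le
        gcongr
        · exact le_abs_self C
        · exact h u hu'.le
    _ = |C| * D * (Real.exp (a * u) * Real.exp ((σ - a) / 2 * u) * Real.exp (-σ * u)) := by ring
    _ = |C| * D * Real.exp (-((σ - a) / 2) * u) := by
        rw [← Real.exp_add, ← Real.exp_add]; congr 2; ring

theorem integrableOn_fR {σ : ℝ} (hσ : 1 / 2 < σ) :
    IntegrableOn (fun u => fR u * Real.exp (-σ * u)) (Ioi 0) := by
  refine integrableOn_mul_exp_of_le measurable_fR (a := 1 / 2) (C := 1) (fun u hu => ?_) hσ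
  rw [one_mul, show 1 / 2 * u = u / 2 by ring]
  exact abs_fR_le (le_of_lt hu)

theorem integrableOn_mul_cexp {g : ℝ → ℝ} (hg : Measurable g) {z : ℂ}
    (h : IntegrableOn (fun u => g u * Real.exp (-z.re * u)) (Ioi 0)) :
    IntegrableOn (fun u : ℝ => (g u : ℂ) * Complex.exp (-z * u)) (Ioi 0) := by
  refine Integrable.mono h (by fun_prop) (Eventually.of_forall fun u => ?_)
  simp [Complex.norm_exp]

theorem tendsto_cexp_neg_mul {w : ℂ} (hw : 0 < w.re) :
    Tendsto (fun u : ℝ => Complex.exp (-w * u)) atTop (𝓝 0) := by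
  rw [tendsto_zero_iff_norm_tendsto_zero]
  simp_rw [norm_cexp_neg_mul]
  exact Real.tendsto_exp_atBot.comp (tendsto_id.const_mul_atTop_of_neg (by linarith))

theorem integral_id_mul_cexp {w : ℂ} (hw : 0 < w.re) :
    ∫ u in Ioi (0 : ℝ), ((u : ℝ) : ℂ) * Complex.exp (-w * u) = 1 / w ^ 2 := by
  have hw0 : w ≠ 0 := fun h => by simp [h] at hw
  have hint := integrableOn_mul_cexp (g := fun u => u) (z := w) (by fun_prop)
    (integrableOn_mul_exp_of_le (by fun_prop) (a := 0) (C := 1)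
      (fun u hu => by rw [abs_of_pos hu]; simp; nlinarith) hw)
  have h1 : ∀ u : ℝ, HasDerivAt
      (fun u : ℝ => -((u / w + 1 / w ^ 2) * Complex.exp (-w * u)) : ℝ → ℂ)
      ((u : ℂ) * Complex.exp (-w * u)) u := fun u => by
    have e1 : HasDerivAt (fun u : ℝ => (u : ℂ)) 1 u := Complex.ofRealCLM.hasDerivAt
    have e2 := ((e1.div_const w).add_const (1 / w ^ 2)).mul (e1.const_mul (-w)).cexp
    refine e2.neg.congr_deriv ?_
    field_simp
    ring
  have h2 : Tendsto (fun u : ℝ => -((u / w + 1 / w ^ 2) * Complex.exp (-w * u)) : ℝ → ℂ)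
      atTop (𝓝 0) := by
    have e1 : Tendsto (fun u : ℝ => (u : ℂ) * Complex.exp (-w * u)) atTop (𝓝 0) := by
      rw [tendsto_zero_iff_norm_tendsto_zero]
      have := (Real.tendsto_pow_mul_exp_neg_atTop_nhds_zero 1)
      have := (this.comp (tendsto_id.const_mul_atTop hw)).const_mul (1 / w.re)
      rw [mul_zero] at this
      refine this.congr' ?_
      filter_upwards [eventually_ge_atTop 0] with u hu
      rw [norm_mul, norm_cexp_neg_mul, Complex.norm_real, Real.norm_of_nonneg hu]
      simp only [Function.comp_apply, id_eq, pow_one, neg_mul]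
      field_simp
    have e2 := ((e1.const_mul (1 / w)).add ((tendsto_cexp_neg_mul hw).const_mul (1 / w ^ 2))).neg
    simp only [mul_zero, add_zero, neg_zero] at e2
    refine e2.congr fun u => ?_
    ring
  have := integral_Ioi_of_hasDerivAt_of_tendsto' (fun u _ => h1 u) hint h2
  rw [this]
  simp

theorem integral_cexp_neg_mul {w : ℂ} (hw : 0 < w.re) :
    ∫ u in Ioi (0 : ℝ), Complex.exp (-w * u) = 1 / w := by
  rw [integral_exp_mul_complex_Ioi (by simpa using hw)]
  simp only [Complex.ofReal_zero, mul_zero, Complex.exp_zero, neg_div_neg_eq]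

theorem LSeries_vonMangoldt_div {w : ℂ} (hw : 0 < w.re) :
    w * ∫ u in Ioi (0 : ℝ), ((∑ n ∈ Finset.Icc 1 ⌊Real.exp u⌋₊,
      (ArithmeticFunction.vonMangoldt n / n : ℝ) : ℝ) : ℂ) * Complex.exp (-w * u) =
    -deriv riemannZeta (1 + w) / riemannZeta (1 + w) := by
  set a : ℕ → ℝ := fun n => ArithmeticFunction.vonMangoldt n / n with ha
  have hs : 1 < (1 + w).re := by simpa using hw
  rw [← ArithmeticFunction.LSeries_vonMangoldt_eq_deriv_riemannZeta_div hs]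
  have hL : LSeries (fun n => ((ArithmeticFunction.vonMangoldt n : ℝ) : ℂ)) (1 + w) =
      LSeries (fun n => (a n : ℂ)) w := by
    unfold LSeries
    refine tsum_congr fun n => ?_
    rcases eq_or_ne n 0 with rfl | hn
    · simp
    have hn' : (n : ℂ) ≠ 0 := by exact_mod_cast hn
    rw [LSeries.term_of_ne_zero hn, LSeries.term_of_ne_zero hn, Complex.cpow_add _ _ hn',
      Complex.cpow_one]
    simp only [ha, Complex.ofReal_div, Complex.ofReal_natCast]
    rw [div_div]
  rw [hL, LSeries_eq_mul_integral_of_nonneg a (r := w.re / 2) (by linarith) (by linarith) ?_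
    (fun n => div_nonneg ArithmeticFunction.vonMangoldt_nonneg (Nat.cast_nonneg _))]
  · congr 1
    have h0 := integral_comp_exp_Ioi
      (fun t : ℝ => (∑ k ∈ Finset.Icc 1 ⌊t⌋₊, (a k : ℂ)) * (t : ℂ) ^ (-(w + 1))) 0
    rw [Real.exp_zero] at h0
    rw [← h0]
    refine setIntegral_congr_fun measurableSet_Ioi fun u hu => ?_
    simp only [Complex.real_smul, Complex.ofReal_sum]
    rw [Complex.ofReal_exp, Complex.cpow_def_of_ne_zero (Complex.exp_ne_zero _),
      ← Complex.ofReal_exp, ← Complex.ofReal_log (Real.exp_pos _).le, Real.log_exp,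
      mul_left_comm, Complex.ofReal_exp, ← Complex.exp_add]
    congr 2
    ring
  · obtain ⟨C, hC, h⟩ := one_add_sq_le_exp (b := w.re / 2) (by linarith)
    refine Asymptotics.IsBigO.of_bound C ?_
    filter_upwards [eventually_ge_atTop 1] with n hn
    have hn' : (1 : ℝ) ≤ n := by exact_mod_cast hn
    have := sum_vonMangoldt_div_le hn'
    have hlog := Real.log_nonneg hn'
    rw [Nat.floor_natCast] at this
    rw [Real.norm_of_nonneg (sum_vonMangoldt_div_nonneg n), Real.norm_of_nonneg (by positivity),
      Real.rpow_def_of_pos (by linarith), mul_comm (Real.log _)]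
    have := h _ hlog
    nlinarith

/-- The Laplace transform of `fR`. -/
noncomputable def FR (z : ℂ) : ℂ := ∫ u in Ioi (0 : ℝ), (fR u : ℂ) * Complex.exp (-z * u)

theorem FR_identity_of_half_lt {z : ℂ} (hz : 1 / 2 < z.re) :
    (z - 1 / 2) * riemannZeta₁ (1 / 2 + z) * FR z =
      Real.eulerMascheroniConstant * riemannZeta₁ (1 / 2 + z) - deriv riemannZeta₁ (1 / 2 + z) := by
  obtain ⟨w, rfl⟩ : ∃ w : ℂ, z = w + 1 / 2 := ⟨z - 1 / 2, by ring⟩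
  have hw : 0 < w.re := by
    have : (w + 1 / 2).re = w.re + 1 / 2 := by simp
    linarith
  have hw0 : w ≠ 0 := fun h => by simp [h] at hw
  set P : ℝ → ℝ := fun u => ∑ n ∈ Finset.Icc 1 ⌊Real.exp u⌋₊,
      (ArithmeticFunction.vonMangoldt n / n : ℝ) with hP
  have hPm : Measurable P := (measurable_from_nat (f := fun N : ℕ =>
      ∑ n ∈ Finset.Icc 1 N, (ArithmeticFunction.vonMangoldt n / n : ℝ))).comp
      (Nat.measurable_floor.comp Real.measurable_exp)
  have hi1 := integrableOn_mul_cexp (z := w) hPm (integrableOn_mul_exp_of_le hPm (a := 0) (C := 1)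
    (fun u hu => by
      have := sum_vonMangoldt_div_le (Real.one_le_exp (le_of_lt hu))
      rw [Real.log_exp] at this
      rw [abs_of_nonneg (sum_vonMangoldt_div_nonneg _)]
      refine this.trans ?_
      simp
      nlinarith) hw)
  have hi2 := integrableOn_mul_cexp (g := fun u => u) (z := w) (by fun_prop)
    (integrableOn_mul_exp_of_le (by fun_prop) (a := 0) (C := 1)
      (fun u hu => by rw [abs_of_pos hu]; simp; nlinarith) hw)
  have hi3 : IntegrableOn (fun u : ℝ => Complex.exp (-w * u)) (Ioi 0) := by
    simpa using integrableOn_mul_cexp (g := fun _ => 1) (z := w) (by fun_prop)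
      (by simpa using integrableOn_exp_neg_mul hw)
  have hF : FR (w + 1 / 2) = (∫ u in Ioi (0 : ℝ), (P u : ℂ) * Complex.exp (-w * u)) - 1 / w ^ 2 +
      Real.eulerMascheroniConstant * (1 / w) := by
    rw [← integral_id_mul_cexp hw, ← integral_cexp_neg_mul hw, ← integral_const_mul,
      ← integral_sub hi1 hi2, ← integral_add (f := fun u : ℝ => (P u : ℂ) * Complex.exp (-w * u) -
          u * Complex.exp (-w * u))
      (hi1.sub hi2) (hi3.const_mul _), FR]
    refine integral_congr_ae (Eventually.of_forall fun u => ?_)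
    simp only [fR, Rfun, hP, Real.log_exp]
    rw [show -(w + 1 / 2) * (u : ℂ) = -(u / 2 : ℝ) + -w * u by push_cast; ring, Complex.exp_add,
      Complex.ofReal_mul, Complex.ofReal_exp, Complex.exp_neg]
    have := Complex.exp_ne_zero ((u / 2 : ℝ) : ℂ)
    field_simp
    push_cast
    ring
  have hL := LSeries_vonMangoldt_div hw
  have hs1 : 1 + w ≠ 1 := by simpa using hw0
  have hζ : riemannZeta (1 + w) ≠ 0 := riemannZeta_ne_zero_of_one_le_re (by simpa using hw.le)
  have hZ : riemannZeta₁ (1 + w) = w * riemannZeta (1 + w) := by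
    rw [riemannZeta₁_eq_of_ne_one hs1]; ring
  have hZ' : deriv riemannZeta₁ (1 + w) = riemannZeta (1 + w) + w * deriv riemannZeta (1 + w) := by
    have : riemannZeta₁ =ᶠ[𝓝 (1 + w)] fun s => (s - 1) * riemannZeta s := by
      filter_upwards [isOpen_ne.mem_nhds hs1] with s hs using riemannZeta₁_eq_of_ne_one hs
    rw [this.deriv_eq]
    have e := ((hasDerivAt_id (1 + w)).sub_const 1).mul
        (differentiableAt_riemannZeta hs1).hasDerivAt
    refine (HasDerivAt.congr_deriv e ?_).deriv
    simp
  rw [show (1 / 2 + (w + 1 / 2) : ℂ) = 1 + w by ring, hF, hZ', hZ]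
  rw [eq_div_iff hζ] at hL
  change w * (∫ u in Ioi (0 : ℝ), (P u : ℂ) * Complex.exp (-w * u)) * _ = _ at hL
  generalize (∫ u in Ioi (0 : ℝ), (P u : ℂ) * Complex.exp (-w * u)) = J at hL ⊢
  field_simp
  linear_combination 2 * w ^ 2 * hL

section

/-- The function `E(s) = γ - Z'(s)/Z(s)` with `Z(s) = (s-1)ζ(s)`. -/
noncomputable def zE (s : ℂ) : ℂ :=
  Real.eulerMascheroniConstant - deriv riemannZeta₁ s / riemannZeta₁ s

theorem zE_one : zE 1 = 0 := by
  simp [zE, riemannZeta₁_one, deriv_riemannZeta₁_one]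

theorem analyticAt_riemannZeta₁ (s : ℂ) : AnalyticAt ℂ riemannZeta₁ s :=
  differentiable_riemannZeta₁.analyticAt s

theorem analyticAt_dslope {f : ℂ → ℂ} {a z : ℂ} (ha : AnalyticAt ℂ f a) (hz : AnalyticAt ℂ f z) :
    AnalyticAt ℂ (dslope f a) z := by
  rcases eq_or_ne z a with rfl | h
  · obtain ⟨p, hp⟩ := ha
    exact hp.has_fpower_series_dslope_fslope.analyticAt
  · have : AnalyticAt ℂ (fun w => (w - a)⁻¹ * (f w - f a)) z :=
      ((analyticAt_id.sub analyticAt_const).inv (sub_ne_zero.2 h)).mul (hz.sub analyticAt_const)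
    refine this.congr ?_
    filter_upwards [isOpen_ne.mem_nhds h] with w hw
    rw [dslope_of_ne _ hw, slope_def_field, div_eq_inv_mul]

theorem analyticAt_zE {s : ℂ} (h : riemannZeta₁ s ≠ 0) : AnalyticAt ℂ zE s :=
  analyticAt_const.sub ((analyticAt_riemannZeta₁ s).deriv.div (analyticAt_riemannZeta₁ s) h)

/-- The function `z ↦ E(1/2+z)/(z-1/2)`. -/
noncomputable def zD (z : ℂ) : ℂ := dslope zE 1 (1 / 2 + z)

theorem analyticAt_zD {σ : ℝ} (hσ : -1 / 2 < σ) : AnalyticAt ℂ zD σ := by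
  have h1 : riemannZeta₁ 1 ≠ 0 := by simp [riemannZeta₁_one]
  have h2 : riemannZeta₁ (1 / 2 + σ) ≠ 0 := by
    have := riemannZeta₁_ofReal_ne_zero (σ := 1 / 2 + σ) (by linarith)
    push_cast at this
    exact this
  exact (analyticAt_dslope (analyticAt_zE h1) (analyticAt_zE h2)).comp_of_eq
    (f := fun z : ℂ => 1 / 2 + z) (analyticAt_const.add analyticAt_id) rfl

theorem zD_eq_FR {z : ℂ} (hz : 1 / 2 < z.re) : zD z = FR z := by
  have hne : z - 1 / 2 ≠ 0 := fun h => by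
    have : z = 1 / 2 := by linear_combination h
    simp [this] at hz
  have hne1 : (1 / 2 + z : ℂ) ≠ 1 := fun h => hne (by linear_combination h)
  have hZ : riemannZeta₁ (1 / 2 + z) ≠ 0 := by
    rw [riemannZeta₁_eq_of_ne_one hne1]
    refine mul_ne_zero (sub_ne_zero.2 hne1) (riemannZeta_ne_zero_of_one_le_re ?_)
    simp
    linarith
  have := FR_identity_of_half_lt hz
  rw [zD, dslope_of_ne _ hne1, slope_def_field, zE_one, zE,
    show (1 / 2 + z - 1 : ℂ) = z - 1 / 2 by ring, div_eq_iff hne]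
  rw [sub_zero, sub_eq_iff_eq_add, eq_comm, ← eq_sub_iff_add_eq', div_eq_iff hZ]
  linear_combination this

variable {η A : ℝ}

theorem measurable_majorant_sub (η A : ℝ) : Measurable fun u => A + √u - η * fR u :=
  (by fun_prop : Measurable fun u : ℝ => A + √u).sub (measurable_fR.const_mul η)

theorem sqrt_le_one_add {u : ℝ} (hu : 0 ≤ u) : √u ≤ 1 + u :=
  Real.sqrt_le_iff.2 ⟨by linarith, by nlinarith⟩

theorem integrableOn_majorant (hA : 0 ≤ A) {σ : ℝ} (hσ : 0 < σ) :
    IntegrableOn (fun u => (A + √u) * Real.exp (-σ * u)) (Ioi 0) := by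
  refine integrableOn_mul_exp_of_le (by fun_prop) (a := 0) (C := A + 1) (fun u hu => ?_) hσ
  have := sqrt_le_one_add hu.le
  rw [abs_of_nonneg (by positivity)]
  simp only [zero_mul, Real.exp_zero, one_mul]
  nlinarith [mul_nonneg hA hu.le, mul_nonneg hA (sq_nonneg u)]

theorem integrableOn_gap (hA : 0 ≤ A)
    (hle : ∀ u, 0 < u → η * fR u ≤ A + √u) {σ : ℝ} (hσ : 0 < σ) :
    IntegrableOn (fun u => (A + √u - η * fR u) * Real.exp (-σ * u)) (Ioi 0) := by
  have hm := measurable_majorant_sub η A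
  have hpos : ∀ u, 0 < u → 0 ≤ A + √u - η * fR u := fun u hu => sub_nonneg.2 (hle u hu)
  set M : ℂ → ℂ := fun z => ∫ u in Ioi (0 : ℝ), ((A + √u : ℝ) : ℂ) * Complex.exp (-z * u) with hM
  rw [← integrable_withDensity_exp_iff hm hpos]
  have hint : ∀ σ : ℝ, 1 / 2 < σ →
      IntegrableOn (fun u => (A + √u - η * fR u) * Real.exp (-σ * u)) (Ioi 0) := fun σ hσ => by
    have := (integrableOn_majorant hA (by linarith : 0 < σ)).sub ((integrableOn_fR hσ).const_mul η)
    refine this.congr (Eventually.of_forall fun u => ?_)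
    simp only [Pi.sub_apply]
    ring
  refine integrable_exp_of_analyticOnNhd (σ₁ := 1 / 2)
    (H := fun σ : ℝ => (M σ - η * zD σ).re) ?_ ?_ ?_ ?_ hσ
  · refine (withDensity_absolutelyContinuous _ _).ae_le ?_
    filter_upwards [ae_restrict_mem measurableSet_Ioi] with u hu using le_of_lt hu
  · intro s hs
    have h1 : AnalyticAt ℂ M s := analyticAt_laplace (g := fun u => A + √u) (by fun_prop) (a := 0)
      (fun τ hτ => integrableOn_majorant hA hτ) (by simpa using hs)
    have h2 : AnalyticAt ℂ zD s := analyticAt_zD (by have : 0 < s := hs; linarith)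
    exact (h1.sub (analyticAt_const.mul h2)).re_ofReal
  · intro s hs
    exact (integrable_withDensity_exp_iff hm hpos s).2 (hint s hs)
  · intro s hs
    have hs' : 1 / 2 < (s : ℂ).re := by simpa using hs
    rw [← re_complexMGF_ofReal, complexMGF_withDensity hm hpos, zD_eq_FR hs', FR, hM]
    simp only
    rw [← integral_const_mul, ← integral_sub]
    · congr 2
      ext u
      push_cast
      ring
    · exact integrableOn_mul_cexp (g := fun u => A + √u) (by fun_prop)
        (integrableOn_majorant hA (by simpa using (by linarith : 0 < s)))
    · exact (integrableOn_mul_cexp measurable_fR (integrableOn_fR hs')).const_mul _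

theorem integrableOn_fR_of_le (hη : η = 1 ∨ η = -1) (hA : 0 ≤ A)
    (hle : ∀ u, 0 < u → η * fR u ≤ A + √u) {σ : ℝ} (hσ : 0 < σ) :
    IntegrableOn (fun u => fR u * Real.exp (-σ * u)) (Ioi 0) := by
  have h := ((integrableOn_majorant hA hσ).sub (integrableOn_gap hA hle hσ)).const_mul η
  refine h.congr (Eventually.of_forall fun u => ?_)
  simp only [Pi.sub_apply]
  rcases hη with rfl | rfl <;> ring

theorem analyticAt_FR (hη : η = 1 ∨ η = -1) (hA : 0 ≤ A)
    (hle : ∀ u, 0 < u → η * fR u ≤ A + √u) {z : ℂ} (hz : 0 < z.re) : AnalyticAt ℂ FR z :=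
  analyticAt_laplace measurable_fR (fun _ hσ => integrableOn_fR_of_le hη hA hle hσ) hz

theorem FR_identity (hη : η = 1 ∨ η = -1) (hA : 0 ≤ A)
    (hle : ∀ u, 0 < u → η * fR u ≤ A + √u) {z : ℂ} (hz : 0 < z.re) :
    (z - 1 / 2) * riemannZeta₁ (1 / 2 + z) * FR z =
      Real.eulerMascheroniConstant * riemannZeta₁ (1 / 2 + z) - deriv riemannZeta₁ (1 / 2 + z) := by
  have hU : IsPreconnected {s : ℂ | 0 < s.re} := (convex_halfSpace_re_gt 0).isPreconnected
  have hc : ∀ s : ℂ, AnalyticAt ℂ (fun z : ℂ => riemannZeta₁ (1 / 2 + z)) s := fun s =>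
    (analyticAt_riemannZeta₁ _).comp_of_eq (f := fun z : ℂ => 1 / 2 + z)
      (analyticAt_const.add analyticAt_id) rfl
  have hc' : ∀ s : ℂ, AnalyticAt ℂ (fun z : ℂ => deriv riemannZeta₁ (1 / 2 + z)) s := fun s =>
    (analyticAt_riemannZeta₁ _).deriv.comp_of_eq (f := fun z : ℂ => 1 / 2 + z)
      (analyticAt_const.add analyticAt_id) rfl
  have hEq : EqOn (fun z => (z - 1 / 2) * riemannZeta₁ (1 / 2 + z) * FR z)
      (fun z => Real.eulerMascheroniConstant * riemannZeta₁ (1 / 2 + z) -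
        deriv riemannZeta₁ (1 / 2 + z)) {s : ℂ | 0 < s.re} := by
    refine AnalyticOnNhd.eqOn_of_preconnected_of_eventuallyEq (𝕜 := ℂ) (z₀ := 2)
      (fun s hs => ?_) (fun s hs => ?_) hU (by simp) ?_
    · exact ((analyticAt_id.sub analyticAt_const).mul (hc s)).mul (analyticAt_FR hη hA hle hs)
    · exact (analyticAt_const.mul (hc s)).sub (hc' s)
    · filter_upwards [(isOpen_lt continuous_const Complex.continuous_re).mem_nhds
        (show (1 / 2 : ℝ) < (2 : ℂ).re by norm_num)] with s hs using FR_identity_of_half_lt hs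
  exact hEq hz

theorem riemannZeta₁_not_eventually_zero (s : ℂ) : ¬ ∀ᶠ w in 𝓝 s, riemannZeta₁ w = 0 := fun h => by
  have := AnalyticOnNhd.eqOn_zero_of_preconnected_of_eventuallyEq_zero (𝕜 := ℂ) (U := univ)
    (fun s _ => analyticAt_riemannZeta₁ s) isPreconnected_univ (mem_univ s) h (mem_univ 1)
  simp [riemannZeta₁_one] at this

theorem riemannZeta₁_ne_zero (hη : η = 1 ∨ η = -1) (hA : 0 ≤ A)
    (hle : ∀ u, 0 < u → η * fR u ≤ A + √u) {s : ℂ} (hs : 1 / 2 < s.re) :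
    riemannZeta₁ s ≠ 0 := fun h0 => by
  have hz : 0 < (s - 1 / 2).re := by simp; linarith
  have hA1 : AnalyticAt ℂ (fun s : ℂ => Real.eulerMascheroniConstant -
      (s - 1) * FR (s - 1 / 2)) s :=
    analyticAt_const.sub ((analyticAt_id.sub analyticAt_const).mul
      ((analyticAt_FR hη hA hle hz).comp_of_eq (f := fun z : ℂ => z - 1 / 2)
        (analyticAt_id.sub analyticAt_const) rfl))
  have hEq : deriv riemannZeta₁ =ᶠ[𝓝 s] riemannZeta₁ *
      fun s : ℂ => Real.eulerMascheroniConstant - (s - 1) * FR (s - 1 / 2) := by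
    filter_upwards [(isOpen_lt continuous_const Complex.continuous_re).mem_nhds hs] with w hw
    have := FR_identity hη hA hle (z := w - 1 / 2) (by simp; linarith)
    simp only [Pi.mul_apply]
    rw [show (1 / 2 + (w - 1 / 2) : ℂ) = w by ring] at this
    linear_combination this
  have h1 := (analyticAt_riemannZeta₁ s).analyticOrderAt_deriv_add_one
  simp only [h0, sub_zero] at h1
  rw [analyticOrderAt_congr hEq, analyticOrderAt_mul (analyticAt_riemannZeta₁ s) hA1] at h1
  have h2 : analyticOrderAt riemannZeta₁ s ≠ ⊤ := fun h =>
    riemannZeta₁_not_eventually_zero s (analyticOrderAt_eq_top.1 h)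
  change _ = analyticOrderAt riemannZeta₁ s at h1
  obtain ⟨n, hn⟩ := ENat.ne_top_iff_exists.1 h2
  rw [← hn] at h1
  cases hφ : analyticOrderAt
    (fun s : ℂ => Real.eulerMascheroniConstant - (s - 1) * FR (s - 1 / 2)) s with
  | top => rw [hφ] at h1; simp at h1
  | coe m => rw [hφ] at h1; norm_cast at h1; omega

end

section

variable {η A : ℝ}

theorem integral_majorant {σ : ℝ} (hσ : 0 < σ) :
    ∫ u in Ioi (0 : ℝ), (A + √u) * Real.exp (-σ * u) =
      A / σ + (1 / σ) ^ (3 / 2 : ℝ) * Real.Gamma (3 / 2) := by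
  have h1 := Real.integral_rpow_mul_exp_neg_mul_Ioi (a := 3 / 2) (by norm_num) hσ
  have h2 : IntegrableOn (fun u => √u * Real.exp (-σ * u)) (Ioi 0) := by
    simpa using integrableOn_majorant (A := 0) le_rfl hσ
  have h3 : ∫ u in Ioi (0 : ℝ), √u * Real.exp (-σ * u) =
      (1 / σ) ^ (3 / 2 : ℝ) * Real.Gamma (3 / 2) := by
    rw [← h1]
    refine integral_congr_ae (Eventually.of_forall fun u => ?_)
    simp only [Real.sqrt_eq_rpow]
    norm_num
  have h4 : ∫ u in Ioi (0 : ℝ), Real.exp (-σ * u) = 1 / σ := by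
    have := integral_exp_mul_Ioi (a := -σ) (by linarith) 0
    rw [this]; simp
  simp_rw [add_mul]
  rw [integral_add ((integrableOn_exp_neg_mul hσ).const_mul A) h2, h3, integral_const_mul, h4]
  ring

theorem exists_integral_gap_le (hη : η = 1 ∨ η = -1) (hA : 0 ≤ A)
    (hle : ∀ u, 0 < u → η * fR u ≤ A + √u) :
    ∃ C, 0 ≤ C ∧ ∀ σ, 0 < σ → σ ≤ 1 →
      ∫ u in Ioi (0 : ℝ), (A + √u - η * fR u) * Real.exp (-σ * u) ≤ C * σ ^ (-(3 / 2) : ℝ) := by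
  obtain ⟨B, hB⟩ := isCompact_Icc.exists_bound_of_continuousOn (s := Icc (0 : ℝ) 1)
    (f := fun σ : ℝ => zD σ) (fun σ hσ => by
      have := (analyticAt_zD (σ := σ) (by have := hσ.1; linarith)).continuousAt
      exact (this.comp (f := fun x : ℝ => (x : ℂ))
        Complex.continuous_ofReal.continuousAt).continuousWithinAt)
  have hB0 : 0 ≤ B := (norm_nonneg _).trans (hB 0 (by simp))
  have hG : 0 < Real.Gamma (3 / 2) := Real.Gamma_pos_of_pos (by norm_num)
  refine ⟨A + Real.Gamma (3 / 2) + B, by positivity, fun σ h0 h1 => ?_⟩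
  have hzD : zD σ = FR σ := by
    have hU : IsPreconnected (Ioi (0 : ℝ)) := isPreconnected_Ioi
    have e1 : AnalyticOnNhd ℝ (fun s : ℝ => zD s) (Ioi 0) := fun s hs =>
      ((analyticAt_zD (σ := s) (by have : 0 < s := hs; linarith)).restrictScalars
        (𝕜 := ℝ)).comp_of_eq (f := fun s : ℝ => (s : ℂ)) (Complex.ofRealCLM.analyticAt s) rfl
    have e2 : AnalyticOnNhd ℝ (fun s : ℝ => FR s) (Ioi 0) := fun s hs =>
      ((analyticAt_FR hη hA hle (z := s) (by simpa using hs)).restrictScalars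
        (𝕜 := ℝ)).comp_of_eq (f := fun s : ℝ => (s : ℂ)) (Complex.ofRealCLM.analyticAt s) rfl
    refine e1.eqOn_of_preconnected_of_eventuallyEq e2 hU (z₀ := 2) (by simp) ?_ h0
    filter_upwards [isOpen_Ioi.mem_nhds (show (2 : ℝ) ∈ Ioi (1 / 2) by norm_num)] with s hs
    exact zD_eq_FR (by simpa using hs)
  have hF : |(FR σ).re| ≤ B := by
    rw [← hzD]
    exact (Complex.abs_re_le_norm _).trans (hB σ ⟨h0.le, h1⟩)
  have hF' : ∫ u in Ioi (0 : ℝ), fR u * Real.exp (-σ * u) = (FR σ).re := by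
    rw [FR, ← Complex.ofReal_re (∫ u in Ioi (0 : ℝ), fR u * Real.exp (-σ * u)),
      ← integral_complex_ofReal]
    simp
  have h2 : ∫ u in Ioi (0 : ℝ), (A + √u - η * fR u) * Real.exp (-σ * u) =
      A / σ + (1 / σ) ^ (3 / 2 : ℝ) * Real.Gamma (3 / 2) - η * (FR σ).re := by
    rw [← integral_majorant h0, ← hF', ← integral_const_mul, ← integral_sub
      (integrableOn_majorant hA h0) ((integrableOn_fR_of_le hη hA hle h0).const_mul η)]
    congr 1; ext u; ring
  have h3 : -(η * (FR σ).re) ≤ B := by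
    have := abs_le.1 hF
    rcases hη with rfl | rfl <;> linarith
  have hp : σ ^ (-(3 / 2) : ℝ) = (1 / σ) ^ (3 / 2 : ℝ) := by
    rw [one_div, Real.inv_rpow h0.le, Real.rpow_neg h0.le]
  have hp1 : 1 ≤ σ ^ (-(3 / 2) : ℝ) :=
      Real.one_le_rpow_of_pos_of_le_one_of_nonpos h0 h1 (by norm_num)
  have hp2 : 1 / σ ≤ σ ^ (-(3 / 2) : ℝ) := by
    rw [one_div, ← Real.rpow_neg_one]
    exact Real.rpow_le_rpow_of_exponent_ge h0 h1 (by norm_num)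
  rw [h2, ← hp]
  have : A / σ = A * (1 / σ) := by ring
  have := mul_le_mul_of_nonneg_left hp2 hA
  have := mul_le_mul_of_nonneg_left hp1 hB0
  nlinarith

theorem lintegral_mul_exp_ge {u : ℝ} (hu : 0 < u) :
    ENNReal.ofReal (Real.exp (-1) / 2 * ((1 + u) ^ 2)⁻¹) ≤
      ∫⁻ σ in Ioc (0 : ℝ) 1, ENNReal.ofReal (σ * Real.exp (-σ * u)) := by
  have hu1 : 0 < 1 + u := by linarith
  have h1 : (1 + u)⁻¹ ≤ 1 := inv_le_one_of_one_le₀ (by linarith)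
  calc ENNReal.ofReal (Real.exp (-1) / 2 * ((1 + u) ^ 2)⁻¹)
      = ENNReal.ofReal (∫ σ in Ioc (0 : ℝ) (1 + u)⁻¹, σ * Real.exp (-1)) := by
        rw [← intervalIntegral.integral_of_le (by positivity), intervalIntegral.integral_mul_const,
          integral_id]
        congr 1
        field_simp
        ring
    _ = ∫⁻ σ in Ioc (0 : ℝ) (1 + u)⁻¹, ENNReal.ofReal (σ * Real.exp (-1)) := by
        rw [ofReal_integral_eq_lintegral_ofReal]
        · exact (by fun_prop : Continuous fun σ : ℝ => σ * Real.exp (-1)).integrableOn_Ioc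
        · filter_upwards [ae_restrict_mem measurableSet_Ioc] with σ hσ
          exact mul_nonneg hσ.1.le (Real.exp_pos _).le
    _ ≤ ∫⁻ σ in Ioc (0 : ℝ) (1 + u)⁻¹, ENNReal.ofReal (σ * Real.exp (-σ * u)) := by
        refine setLIntegral_mono (by fun_prop) fun σ hσ => ENNReal.ofReal_le_ofReal ?_
        refine mul_le_mul_of_nonneg_left (Real.exp_le_exp.2 ?_) hσ.1.le
        have : σ * (1 + u) ≤ 1 := by
          calc _ ≤ (1 + u)⁻¹ * (1 + u) := mul_le_mul_of_nonneg_right hσ.2 hu1.le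
            _ = 1 := inv_mul_cancel₀ hu1.ne'
        nlinarith [hσ.1]
    _ ≤ _ := lintegral_mono_set (Ioc_subset_Ioc_right h1)

theorem integrableOn_gap_div_sq (hη : η = 1 ∨ η = -1) (hA : 0 ≤ A)
    (hle : ∀ u, 0 < u → η * fR u ≤ A + √u) :
    IntegrableOn (fun u => (A + √u - η * fR u) / (1 + u) ^ 2) (Ioi 0) := by
  obtain ⟨C, hC, hCb⟩ := exists_integral_gap_le hη hA hle
  have hm := measurable_majorant_sub η A
  set g : ℝ → ℝ := fun u => A + √u - η * fR u with hg
  have hpos : ∀ u, 0 < u → 0 ≤ g u := fun u hu => sub_nonneg.2 (hle u hu)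
  have hfin : ∫⁻ σ in Ioc (0 : ℝ) 1, ∫⁻ u in Ioi (0 : ℝ),
      ENNReal.ofReal (g u) * ENNReal.ofReal (σ * Real.exp (-σ * u)) < ⊤ := by
    have h1 : IntegrableOn (fun σ : ℝ => C * σ ^ (-(1 / 2) : ℝ)) (Ioc 0 1) := by
      have := (intervalIntegral.intervalIntegrable_rpow' (a := 0) (b := 1) (r := -(1 / 2))
        (by norm_num)).const_mul C
      exact (intervalIntegrable_iff_integrableOn_Ioc_of_le zero_le_one).1 this
    refine lt_of_le_of_lt (setLIntegral_mono
      (g := fun σ : ℝ => ENNReal.ofReal (C * σ ^ (-(1 / 2) : ℝ))) (by fun_prop) fun σ hσ => ?_)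
      h1.lintegral_lt_top
    have h2 : ∫⁻ u in Ioi (0 : ℝ), ENNReal.ofReal (g u) * ENNReal.ofReal (σ * Real.exp (-σ * u)) =
        ENNReal.ofReal (σ * ∫ u in Ioi (0 : ℝ), g u * Real.exp (-σ * u)) := by
      rw [← integral_const_mul, ofReal_integral_eq_lintegral_ofReal]
      · refine setLIntegral_congr_fun measurableSet_Ioi fun u hu => ?_
        rw [← ENNReal.ofReal_mul (hpos u hu)]
        congr 1
        ring
      · exact (integrableOn_gap hA hle hσ.1).const_mul σ
      · filter_upwards [ae_restrict_mem measurableSet_Ioi] with u hu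
        exact mul_nonneg hσ.1.le (mul_nonneg (hpos u hu) (Real.exp_pos _).le)
    rw [h2]
    refine ENNReal.ofReal_le_ofReal ?_
    calc σ * _ ≤ σ * (C * σ ^ (-(3 / 2) : ℝ)) :=
          mul_le_mul_of_nonneg_left (hCb σ hσ.1 hσ.2) hσ.1.le
      _ = C * (σ ^ (1 : ℝ) * σ ^ (-(3 / 2) : ℝ)) := by rw [Real.rpow_one]; ring
      _ = _ := by rw [← Real.rpow_add hσ.1]; norm_num
  rw [lintegral_lintegral_swap (by fun_prop)] at hfin
  have key : ∫⁻ u in Ioi (0 : ℝ), ENNReal.ofReal (Real.exp (-1) / 2 * (g u / (1 + u) ^ 2)) < ⊤ := by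
    refine lt_of_le_of_lt (setLIntegral_mono' measurableSet_Ioi fun u hu => ?_) hfin
    rw [lintegral_const_mul _ (by fun_prop), show Real.exp (-1) / 2 * (g u / (1 + u) ^ 2) =
      g u * (Real.exp (-1) / 2 * ((1 + u) ^ 2)⁻¹) by ring, ENNReal.ofReal_mul (hpos u hu)]
    gcongr
    exact lintegral_mul_exp_ge hu
  have hI : IntegrableOn (fun u => Real.exp (-1) / 2 * (g u / (1 + u) ^ 2)) (Ioi 0) := by
    refine ⟨((hm.div (by fun_prop)).const_mul _).aestronglyMeasurable,
        (hasFiniteIntegral_iff_ofReal ?_).2 key⟩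
    filter_upwards [ae_restrict_mem measurableSet_Ioi] with u hu
    have := hpos u hu
    positivity
  refine (hI.const_mul (2 * Real.exp 1)).congr (Eventually.of_forall fun u => ?_)
  simp only [Real.exp_neg]
  field_simp
  rfl

theorem integrableOn_inv_sq : IntegrableOn (fun u : ℝ => ((1 + u) ^ 2)⁻¹) (Ioi 0) := by
  refine (integrable_one_add_norm (E := ℝ) (μ := volume) (r := 2) (by simp)).integrableOn.congr ?_
  filter_upwards [ae_restrict_mem measurableSet_Ioi] with u hu
  have hu' : 0 < u := hu
  rw [Real.norm_of_nonneg hu'.le, Real.rpow_neg (by linarith)]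
  norm_cast

theorem integrableOn_sqrt_div_sq : IntegrableOn (fun u : ℝ => √u / (1 + u) ^ 2) (Ioi 0) := by
  refine Integrable.mono'
    (integrable_one_add_norm (E := ℝ) (μ := volume) (r := 3 / 2) (by simp; norm_num)).integrableOn
    (Measurable.aestronglyMeasurable (Measurable.div (by fun_prop) (by fun_prop))) ?_
  filter_upwards [ae_restrict_mem measurableSet_Ioi] with u hu
  have hu' : 0 < u := hu
  have h1 : 0 < 1 + u := by linarith
  rw [Real.norm_of_nonneg hu'.le, Real.norm_of_nonneg (by positivity), div_le_iff₀ (by positivity),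
    ← Real.rpow_natCast, ← Real.rpow_add h1, Real.sqrt_eq_rpow]
  norm_num
  exact Real.rpow_le_rpow hu'.le (by linarith) (by norm_num)

theorem integrableOn_fR_div_sq (hη : η = 1 ∨ η = -1) (hA : 0 ≤ A)
    (hle : ∀ u, 0 < u → η * fR u ≤ A + √u) :
    IntegrableOn (fun u => fR u / (1 + u) ^ 2) (Ioi 0) := by
  have h := (((integrableOn_inv_sq.const_mul A).add integrableOn_sqrt_div_sq).sub
    (integrableOn_gap_div_sq hη hA hle)).const_mul η
  refine h.congr (Eventually.of_forall fun u => ?_)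
  simp only [Pi.sub_apply, Pi.add_apply]
  rcases hη with rfl | rfl <;> ring

end

theorem norm_GammaSeq_le {a b : ℝ} (ha : 0 < a) {s : ℂ} (h1 : a ≤ s.re) (h2 : s.re ≤ b) {n : ℕ}
    (hn : n ≠ 0) : ‖Complex.GammaSeq s n‖ ≤ Real.Gamma a + Real.Gamma b := by
  have hs : 0 < s.re := ha.trans_le h1
  have hb : 0 < b := hs.trans_le h2
  rw [Complex.GammaSeq_eq_approx_Gamma_integral hs hn,
    intervalIntegral.integral_of_le (Nat.cast_nonneg n), Real.Gamma_eq_integral ha,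
    Real.Gamma_eq_integral hb,
    ← integral_add (Real.GammaIntegral_convergent ha) (Real.GammaIntegral_convergent hb)]
  have hI := (Real.GammaIntegral_convergent ha).add (Real.GammaIntegral_convergent hb)
  refine (norm_integral_le_of_norm_le (hI.mono_set Ioc_subset_Ioi_self) ?_).trans
    (setIntegral_mono_set hI ?_ Ioc_subset_Ioi_self.eventuallyLE)
  · filter_upwards [ae_restrict_mem measurableSet_Ioc] with x hx
    have hx0 : 0 < x := hx.1
    have h3 : 0 ≤ 1 - x / n := by
      have := div_le_one_of_le₀ hx.2 (Nat.cast_nonneg n)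
      linarith
    rw [norm_mul, Complex.norm_real, Real.norm_of_nonneg (pow_nonneg h3 n),
      Complex.norm_cpow_eq_rpow_re_of_pos hx0]
    have h4 : (1 - x / n) ^ n ≤ Real.exp (-x) := Real.one_sub_div_pow_le_exp_neg hx.2
    have h5 : x ^ (s - 1).re ≤ x ^ (a - 1) + x ^ (b - 1) := by
      rw [Complex.sub_re, Complex.one_re]
      rcases le_total x 1 with h | h
      · have := Real.rpow_le_rpow_of_exponent_ge hx0 h (by linarith : a - 1 ≤ s.re - 1)
        have := Real.rpow_nonneg hx0.le (b - 1)
        linarith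
      · have := Real.rpow_le_rpow_of_exponent_le h (by linarith : s.re - 1 ≤ b - 1)
        have := Real.rpow_nonneg hx0.le (a - 1)
        linarith
    calc _ ≤ Real.exp (-x) * (x ^ (a - 1) + x ^ (b - 1)) := by gcongr
      _ = _ := by
        rw [Pi.add_apply]
        ring
  · filter_upwards [ae_restrict_mem measurableSet_Ioi] with x hx
    have hx0 : 0 < x := hx
    simp only [Pi.zero_apply, Pi.add_apply]
    positivity

theorem hasDerivAt_GammaSeq {s : ℂ} (hs : 0 < s.re) {n : ℕ} (hn : n ≠ 0) :
    HasDerivAt (fun s => Complex.GammaSeq s n) (Complex.GammaSeq s n *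
      (Real.log n - ∑ j ∈ Finset.range (n + 1), 1 / (s + j))) s := by
  have hn' : (n : ℂ) ≠ 0 := by exact_mod_cast hn
  have hne : ∀ j : ℕ, s + j ≠ 0 := fun j h => by
    have := congrArg Complex.re h
    simp at this
    have h2 : (0 : ℝ) ≤ j := Nat.cast_nonneg j
    linarith
  have h1 : HasDerivAt (fun s : ℂ => (n : ℂ) ^ s * (n.factorial : ℂ))
      ((n : ℂ) ^ s * Complex.log n * n.factorial) s := by
    have := ((hasDerivAt_id s).const_cpow (c := (n : ℂ)) (Or.inl hn')).mul_const
      (n.factorial : ℂ)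
    simpa using this
  have h2 : HasDerivAt (fun s : ℂ => ∏ j ∈ Finset.range (n + 1), (s + j))
      ((∏ j ∈ Finset.range (n + 1), (s + j)) * ∑ j ∈ Finset.range (n + 1), 1 / (s + j)) s := by
    have h3 : DifferentiableAt ℂ (fun s : ℂ => ∏ j ∈ Finset.range (n + 1), (s + j)) s := by fun_prop
    have h4 : logDeriv (fun s : ℂ => ∏ j ∈ Finset.range (n + 1), (s + j)) s =
        ∑ j ∈ Finset.range (n + 1), 1 / (s + j) := by
      have h5 := logDeriv_prod (s := Finset.range (n + 1)) (f := fun (j : ℕ) (s : ℂ) => s + j)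
        (x := s) (fun j _ => hne j) (fun j _ => by fun_prop)
      rw [h5]
      refine Finset.sum_congr rfl fun j _ => ?_
      rw [logDeriv_apply]
      simp
    rw [← h4, logDeriv_apply, mul_div_cancel₀]
    · exact h3.hasDerivAt
    · exact Finset.prod_ne_zero_iff.2 fun j _ => hne j
  have hp : ∏ j ∈ Finset.range (n + 1), (s + j) ≠ 0 := Finset.prod_ne_zero_iff.2 fun j _ => hne j
  have h5 := h1.div h2 hp
  refine HasDerivAt.congr_deriv (f := fun s => Complex.GammaSeq s n) h5 ?_
  rw [Complex.GammaSeq, ← Complex.natCast_log]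
  field_simp

theorem tendsto_digamma {s : ℂ} (hs : 0 < s.re) :
    Tendsto (fun n : ℕ => (Real.log n : ℂ) - ∑ j ∈ Finset.range (n + 1), 1 / (s + j)) atTop
      (𝓝 (Complex.digamma s)) := by
  set r : ℝ := s.re / 2 with hr
  have hr0 : 0 < r := by positivity
  have hball : ∀ w ∈ Metric.closedBall s r, r ≤ w.re ∧ w.re ≤ s.re + r := fun w hw => by
    have h1 := (Complex.abs_re_le_norm (w - s)).trans (mem_closedBall_iff_norm.1 hw)
    rw [Complex.sub_re, abs_le] at h1
    constructor <;> linarith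
  have hU : IsOpen {w : ℂ | 0 < w.re} := isOpen_lt continuous_const Complex.continuous_re
  have hsub : Metric.closedBall s r ⊆ {w : ℂ | 0 < w.re} := fun w hw =>
    hr0.trans_le (hball w hw).1
  have hG : DifferentiableOn ℂ Complex.Gamma {w : ℂ | 0 < w.re} := fun w hw =>
    (Complex.differentiableAt_Gamma w fun m h => by
      have hw' : 0 < w.re := hw
      rw [h] at hw'
      simp at hw'
      have : (0 : ℝ) ≤ m := Nat.cast_nonneg m
      linarith).differentiableWithinAt
  have hd : ∀ n : ℕ, n ≠ 0 → DifferentiableOn ℂ (fun s => Complex.GammaSeq s n)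
      {w : ℂ | 0 < w.re} :=
    fun n hn w hw => (hasDerivAt_GammaSeq hw hn).differentiableAt.differentiableWithinAt
  have hcirc : Tendsto (fun n : ℕ => ∮ z in C(s, r), ((z - s) ^ 2)⁻¹ • Complex.GammaSeq z n) atTop
      (𝓝 (∮ z in C(s, r), ((z - s) ^ 2)⁻¹ • Complex.Gamma z)) := by
    refine intervalIntegral.tendsto_integral_filter_of_dominated_convergence
      (fun _ => r * ((r ^ 2)⁻¹ * (Real.Gamma r + Real.Gamma (s.re + r)))) ?_ ?_ ?_ ?_
    · filter_upwards [eventually_ne_atTop 0] with n hn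
      have hc : ContinuousOn (fun z => ((z - s) ^ 2)⁻¹ • Complex.GammaSeq z n)
          (Metric.sphere s r) := by
        have hc0 : ContinuousOn (fun z : ℂ => ((z - s) ^ 2)⁻¹) (Metric.sphere s r) := by
          refine ContinuousOn.inv₀ (f := fun z : ℂ => (z - s) ^ 2) (by fun_prop) fun z hz => ?_
          refine pow_ne_zero _ (sub_ne_zero.2 fun h => ?_)
          rw [h] at hz
          simp at hz
          exact hr0.ne hz
        exact hc0.smul
          ((hd n hn).continuousOn.mono (Metric.sphere_subset_closedBall.trans hsub))
      exact (hc.circleIntegrable hr0.le).out.aestronglyMeasurable_restrict_uIoc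
    · filter_upwards [eventually_ne_atTop 0] with n hn
      refine Eventually.of_forall fun θ _ => ?_
      have hm : circleMap s r θ ∈ Metric.closedBall s r := circleMap_mem_closedBall s hr0.le θ
      have := norm_GammaSeq_le hr0 (hball _ hm).1 (hball _ hm).2 hn
      rw [norm_smul, norm_smul, deriv_circleMap, norm_inv, norm_pow, circleMap_sub_center]
      simp only [norm_mul, norm_circleMap_zero, Complex.norm_I, mul_one, abs_of_pos hr0]
      gcongr
    · exact intervalIntegrable_const
    · refine Eventually.of_forall fun θ _ => ?_
      exact ((Complex.GammaSeq_tendsto_Gamma _).const_smul _).const_smul _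
  have hder : Tendsto (fun n : ℕ => deriv (fun s => Complex.GammaSeq s n) s) atTop
      (𝓝 (deriv Complex.Gamma s)) := by
    rw [← Complex.two_pi_I_inv_smul_circleIntegral_sub_sq_inv_smul_of_differentiable hU hsub hG
      (Metric.mem_ball_self hr0)]
    refine (hcirc.const_smul _).congr' ?_
    filter_upwards [eventually_ne_atTop 0] with n hn
    exact Complex.two_pi_I_inv_smul_circleIntegral_sub_sq_inv_smul_of_differentiable hU hsub
      (hd n hn) (Metric.mem_ball_self hr0)
  have hG0 : Complex.Gamma s ≠ 0 := Complex.Gamma_ne_zero_of_re_pos hs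
  have hlim := hder.div (Complex.GammaSeq_tendsto_Gamma s) hG0
  rw [Complex.digamma_def, logDeriv_apply]
  refine hlim.congr' ?_
  filter_upwards [eventually_ne_atTop 0,
    (Complex.GammaSeq_tendsto_Gamma s).eventually_ne hG0] with n hn hne
  simp only [Pi.div_apply]
  rw [(hasDerivAt_GammaSeq hs hn).deriv, mul_div_cancel_left₀ _ hne]

theorem sum_inv_sq_le (N : ℕ) : ∑ j ∈ Finset.range N, 1 / (1 + (j : ℝ)) ^ 2 ≤ (2 : ℝ) := by
  suffices h : ∑ j ∈ Finset.range (N + 1), 1 / (1 + (j : ℝ)) ^ 2 ≤ (2 : ℝ) - 1 / (1 + (N : ℝ)) by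
    rw [Finset.sum_range_succ] at h
    have h1 : (0 : ℝ) ≤ 1 / (1 + (N : ℝ)) ^ 2 := by positivity
    have h2 : (0 : ℝ) ≤ 1 / (1 + (N : ℝ)) := by positivity
    linarith
  induction N with
  | zero => norm_num
  | succ n ih =>
    rw [Finset.sum_range_succ]
    have h : 1 / (1 + ((n + 1 : ℕ) : ℝ)) ^ 2 ≤ 1 / (1 + (n : ℝ)) - 1 / (1 + ((n + 1 : ℕ) : ℝ)) := by
      push_cast
      have : (0 : ℝ) ≤ n := Nat.cast_nonneg n
      rw [div_sub_div _ _ (by positivity) (by positivity), div_le_div_iff₀ (by positivity)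
        (by positivity)]
      nlinarith
    linarith

theorem norm_digamma_sub_le {z w : ℂ} (hz : 1 ≤ z.re) (hw : 1 ≤ w.re) :
    ‖Complex.digamma z - Complex.digamma w‖ ≤ 2 * ‖z - w‖ := by
  refine le_of_tendsto ((tendsto_digamma (by linarith)).sub (tendsto_digamma (by linarith))).norm
    (Eventually.of_forall fun n => ?_)
  have key : ∀ {z : ℂ}, 1 ≤ z.re → ∀ j : ℕ, 1 + (j : ℝ) ≤ ‖z + j‖ := fun {z} hz j => by
    refine le_trans ?_ (Complex.re_le_norm _)
    simpa using hz
  have hne : ∀ {z : ℂ}, 1 ≤ z.re → ∀ j : ℕ, z + j ≠ 0 := fun {z} hz j h => by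
    have h1 := key hz j
    rw [h, norm_zero] at h1
    have : (0 : ℝ) ≤ j := Nat.cast_nonneg j
    linarith
  rw [sub_sub_sub_cancel_left, ← Finset.sum_sub_distrib]
  calc _ ≤ ∑ j ∈ Finset.range (n + 1), ‖z - w‖ * (1 / (1 + (j : ℝ)) ^ 2) := by
        refine norm_sum_le_of_le _ fun j _ => ?_
        rw [div_sub_div _ _ (hne hw j) (hne hz j), norm_div, norm_mul, mul_one_div,
          show 1 * (z + j) - (w + j) * 1 = z - w by ring, sq]
        have := key hz j
        have := key hw j
        gcongr
    _ ≤ _ := by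
        rw [← Finset.mul_sum, mul_comm]
        exact mul_le_mul_of_nonneg_right (sum_inv_sq_le _) (norm_nonneg _)

/-- The archimedean part of the logarithmic derivative of the completed zeta function. -/
noncomputable def Bfun (z : ℂ) : ℂ :=
  Real.eulerMascheroniConstant - Real.log Real.pi / 2 + Complex.digamma (5 / 4 + z / 2) / 2

theorem norm_Bfun_sub_le {z w : ℂ} (hz : 0 ≤ z.re) (hw : 0 ≤ w.re) :
    ‖Bfun z - Bfun w‖ ≤ ‖z - w‖ := by
  have h : ∀ {z : ℂ}, 0 ≤ z.re → 1 ≤ (5 / 4 + z / 2).re := fun {z} hz => by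
    have : (5 / 4 + z / 2).re = 5 / 4 + z.re / 2 := by norm_num
    rw [this]
    linarith
  have h1 := norm_digamma_sub_le (h hz) (h hw)
  rw [Bfun, Bfun, add_sub_add_left_eq_sub, ← sub_div, norm_div]
  rw [show (5 / 4 + z / 2 - (5 / 4 + w / 2) : ℂ) = (z - w) / 2 by ring, norm_div] at h1
  have := norm_nonneg (z - w)
  norm_num at h1 ⊢
  linarith

theorem continuousOn_Bfun : ContinuousOn Bfun {z | 0 ≤ z.re} := by
  refine LipschitzOnWith.continuousOn (K := 1) (LipschitzOnWith.of_dist_le_mul fun z hz w hw => ?_)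
  rw [dist_eq_norm, dist_eq_norm, NNReal.coe_one, one_mul]
  exact norm_Bfun_sub_le hz hw

/-- The real part of `Bfun` on the imaginary axis. -/
noncomputable def Bre (t : ℝ) : ℝ := (Bfun (t * Complex.I)).re

theorem abs_Bre_sub_le (s t : ℝ) : |Bre s - Bre t| ≤ |s - t| := by
  have h := norm_Bfun_sub_le (z := s * Complex.I) (w := t * Complex.I) (by simp) (by simp)
  rw [← sub_mul, norm_mul, Complex.norm_I, mul_one, ← Complex.ofReal_sub, Complex.norm_real] at h
  rw [Bre, Bre, ← Complex.sub_re]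
  exact (Complex.abs_re_le_norm _).trans h

theorem continuous_Bre : Continuous Bre := by
  refine LipschitzWith.continuous (K := 1) (LipschitzWith.of_dist_le_mul fun s t => ?_)
  rw [Real.dist_eq, Real.dist_eq, NNReal.coe_one, one_mul]
  exact abs_Bre_sub_le s t

theorem tendsto_Bre (t : ℝ) :
    Tendsto (fun n : ℕ => ∑ j ∈ Finset.range (n + 1),
      (t / 2) ^ 2 / ((j + 5 / 4) * ((j + 5 / 4) ^ 2 + (t / 2) ^ 2))) atTop
      (𝓝 (2 * (Bre t - Bre 0))) := by
  have h1 := tendsto_digamma (s := 5 / 4 + t * Complex.I / 2) (by norm_num)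
  have h2 := tendsto_digamma (s := 5 / 4) (by norm_num)
  have h3 := (Complex.continuous_re.tendsto _).comp (h1.sub h2)
  have h4 : (Complex.digamma (5 / 4 + t * Complex.I / 2) - Complex.digamma (5 / 4)).re =
      2 * (Bre t - Bre 0) := by
    rw [Bre, Bre, ← Complex.sub_re, Bfun, Bfun, add_sub_add_left_eq_sub, ← sub_div]
    norm_num
    ring
  rw [h4] at h3
  refine h3.congr fun n => ?_
  rw [Function.comp_apply, sub_sub_sub_cancel_left, ← Finset.sum_sub_distrib, Complex.re_sum]
  refine Finset.sum_congr rfl fun j _ => ?_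
  have hx : (0 : ℝ) < j + 5 / 4 := by positivity
  have e1 : (5 / 4 + j : ℂ) = ((j + 5 / 4 : ℝ) : ℂ) := by push_cast; ring
  have e2 : (5 / 4 + t * Complex.I / 2 + j : ℂ) =
      ((j + 5 / 4 : ℝ) : ℂ) + (t / 2 : ℝ) * Complex.I := by
    push_cast; ring
  rw [e1, e2, Complex.sub_re, ← Complex.ofReal_one, ← Complex.ofReal_div, Complex.ofReal_re,
    Complex.ofReal_one, one_div (_ + _ * Complex.I), Complex.inv_re, Complex.normSq_add_mul_I]
  simp only [Complex.add_re, Complex.ofReal_re, Complex.re_ofReal_mul, Complex.I_re, mul_zero,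
    add_zero]
  generalize (j : ℝ) + 5 / 4 = x at hx
  generalize t / 2 = y
  have : x ^ 2 + y ^ 2 ≠ 0 := by positivity
  field_simp
  ring

theorem Bre_zero_le (t : ℝ) : Bre 0 ≤ Bre t := by
  have := ge_of_tendsto (tendsto_Bre t) (Eventually.of_forall fun n =>
    show (0 : ℝ) ≤ _ from Finset.sum_nonneg fun j _ => by positivity)
  linarith

theorem exists_abs_Bre_le : ∃ C : ℝ, 0 ≤ C ∧ ∀ t, |Bre t| ≤ C * (1 + √|t|) := by
  have hs : Summable fun n : ℕ => 1 / |(n : ℝ) + 5 / 4| ^ (3 / 2 : ℝ) :=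
    (Real.summable_one_div_nat_add_rpow (5 / 4) (3 / 2)).2 (by norm_num)
  set K := ∑' n : ℕ, 1 / |(n : ℝ) + 5 / 4| ^ (3 / 2 : ℝ) with hK
  have hK0 : 0 ≤ K := tsum_nonneg fun n => by positivity
  refine ⟨|Bre 0| + K, by positivity, fun t => ?_⟩
  have h1 : 2 * (Bre t - Bre 0) ≤ √|t| * K := by
    refine le_of_tendsto (tendsto_Bre t) (Eventually.of_forall fun n => ?_)
    refine le_trans ?_ (mul_le_mul_of_nonneg_left
      (hs.sum_le_tsum (Finset.range (n + 1)) fun j _ => by positivity) (Real.sqrt_nonneg _))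
    rw [Finset.mul_sum]
    refine Finset.sum_le_sum fun j _ => ?_
    have hx : (0 : ℝ) < j + 5 / 4 := by positivity
    rw [abs_of_pos hx, show (3 / 2 : ℝ) = 1 + 1 / 2 by norm_num, Real.rpow_add hx, Real.rpow_one,
      ← Real.sqrt_eq_rpow, mul_one_div]
    generalize (j : ℝ) + 5 / 4 = x at hx
    rw [div_le_div_iff₀ (by positivity) (by positivity)]
    have ha := Real.sqrt_nonneg |t|
    have hb := Real.sqrt_nonneg x
    have ha2 : t ^ 2 = √|t| ^ 4 := by
      rw [← sq_abs t, show √|t| ^ 4 = (√|t| ^ 2) ^ 2 by ring, Real.sq_sqrt (abs_nonneg t)]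
    have hb2 := Real.sq_sqrt hx.le
    rw [div_pow, ha2]
    generalize √|t| = a at ha ha2 ⊢
    generalize √x = b at hb hb2 ⊢
    subst hb2
    have h5 : a ^ 3 * b ≤ a ^ 4 + b ^ 4 := by
      nlinarith [sq_nonneg (a ^ 2 - a * b), sq_nonneg (a ^ 2 - b ^ 2), sq_nonneg (a * b - b ^ 2)]
    have h6 : 0 ≤ a * b ^ 2 * (b ^ 4 + a ^ 4 / 4 - a ^ 3 * b / 4) :=
      mul_nonneg (by positivity) (by nlinarith [pow_nonneg hb 4])
    linarith
  have h2 := Bre_zero_le t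
  have h3 : 0 ≤ √|t| := Real.sqrt_nonneg _
  have h4 : |Bre t| ≤ |Bre 0| + (Bre t - Bre 0) := by
    have := abs_add_le (Bre 0) (Bre t - Bre 0)
    rwa [add_sub_cancel, abs_of_nonneg (sub_nonneg.2 h2)] at this
  nlinarith [abs_nonneg (Bre 0), mul_nonneg h3 hK0, mul_nonneg h3 (abs_nonneg (Bre 0))]

theorem exists_log_le_Bre : ∃ C : ℝ, ∀ t, 2 ≤ t → Real.log t / 4 - C ≤ Bre t := by
  refine ⟨Real.log 2 / 4 + 1 / 4 - Bre 0, fun t ht => ?_⟩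
  suffices h : Real.log (t / 2) / 2 - 1 / 2 ≤ 2 * (Bre t - Bre 0) by
    rw [Real.log_div (by positivity) two_ne_zero] at h
    linarith
  have hy : 1 ≤ t / 2 := by linarith
  have hN : 1 ≤ ⌊t / 2⌋₊ := (Nat.one_le_floor_iff _).2 hy
  obtain ⟨N, hN⟩ : ∃ N, ⌊t / 2⌋₊ = N + 1 := ⟨_, (Nat.sub_add_cancel hN).symm⟩
  have hle : (N : ℝ) + 1 ≤ t / 2 := by
    have := Nat.floor_le (zero_le_one.trans hy)
    rw [hN] at this
    exact_mod_cast this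
  have hlog : Real.log (t / 2) ≤ harmonic (N + 1) := by
    refine le_trans (Real.log_le_log (by positivity) ?_) (log_add_one_le_harmonic (N + 1))
    have := (Nat.lt_floor_add_one (t / 2)).le
    rw [hN] at this
    exact_mod_cast this
  have hh : ((harmonic (N + 1) : ℚ) : ℝ) = ∑ j ∈ Finset.range N, 1 / ((j : ℝ) + 2) + 1 := by
    rw [harmonic, Finset.sum_range_succ']
    push_cast
    congr 1
    · refine Finset.sum_congr rfl fun j _ => ?_
      rw [one_div]
      ring
    · norm_num
  refine ge_of_tendsto (tendsto_Bre t) ?_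
  filter_upwards [eventually_ge_atTop N] with n hn
  calc Real.log (t / 2) / 2 - 1 / 2 ≤ ∑ j ∈ Finset.range N, 1 / ((j : ℝ) + 2) / 2 := by
        rw [← Finset.sum_div]
        linarith
    _ ≤ ∑ j ∈ Finset.range N, (t / 2) ^ 2 / ((j + 5 / 4) * ((j + 5 / 4) ^ 2 + (t / 2) ^ 2)) := by
        refine Finset.sum_le_sum fun j hj => ?_
        have h1 : ((j + 1 : ℕ) : ℝ) ≤ N := by
          exact_mod_cast Finset.mem_range.1 hj
        push_cast at h1
        have h2 : (j : ℝ) + 5 / 4 ≤ t / 2 := by linarith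
        have h3 : (0 : ℝ) < j + 5 / 4 := by positivity
        rw [div_div, div_le_div_iff₀ (by positivity) (by positivity)]
        generalize hx : (j : ℝ) + 5 / 4 = x at *
        rw [show (j : ℝ) + 2 = x + 3 / 4 by rw [← hx]; ring]
        have h4 : x ^ 2 ≤ (t / 2) ^ 2 := by gcongr
        nlinarith [mul_le_mul_of_nonneg_left h4 h3.le, sq_nonneg (t / 2)]
    _ ≤ _ := Finset.sum_le_sum_of_subset_of_nonneg
        (Finset.range_subset_range.2 (by omega)) fun j _ _ => by positivity

theorem exists_eq_pow_mul {g : ℂ → ℂ} (hg : Differentiable ℂ g) {a : ℂ}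
    (ha : ¬ ∀ᶠ z in 𝓝 a, g z = 0) :
    ∃ (n : ℕ) (G : ℂ → ℂ), Differentiable ℂ G ∧ G a ≠ 0 ∧ ∀ z, g z = (z - a) ^ n * G z := by
  obtain ⟨n, k, hk, hka, hgk⟩ := (hg.analyticAt a).exists_eventuallyEq_pow_smul_nonzero_iff.2 ha
  let G : ℂ → ℂ := fun z => if z = a then k a else g z / (z - a) ^ n
  have hGk : G =ᶠ[𝓝 a] k := by
    filter_upwards [hgk] with z hz
    by_cases h : z = a
    · simp [G, h]
    · have : (z - a) ^ n ≠ 0 := pow_ne_zero _ (sub_ne_zero.2 h)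
      simp only [G, if_neg h, hz, smul_eq_mul]
      field_simp
  refine ⟨n, G, fun z => ?_, by simpa [G] using hka, fun z => ?_⟩
  · by_cases h : z = a
    · rw [h]
      exact hGk.differentiableAt_iff.2 hk.differentiableAt
    · have hne : (fun z => g z / (z - a) ^ n) =ᶠ[𝓝 z] G := by
        filter_upwards [isOpen_ne.mem_nhds h] with w hw
        simp only [G, if_neg hw]
      refine hne.differentiableAt_iff.1 ?_
      refine DifferentiableAt.div (hg z) (by fun_prop) (pow_ne_zero _ (sub_ne_zero.2 h))
  · by_cases h : z = a
    · rw [h, hgk.self_of_nhds]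
      simp [G]
    · have : (z - a) ^ n ≠ 0 := pow_ne_zero _ (sub_ne_zero.2 h)
      simp only [G, if_neg h]
      field_simp

theorem finite_zeros {g : ℂ → ℂ} (hg : Differentiable ℂ g) (h0 : ∃ a, g a ≠ 0) {K : Set ℂ}
    (hK : IsCompact K) : {z ∈ K | g z = 0}.Finite := by
  by_contra hinf
  obtain ⟨x, -, hx⟩ := Set.Infinite.exists_accPt_of_subset_isCompact hinf hK fun z hz => hz.1
  obtain ⟨a, ha⟩ := h0
  have hfr : ∃ᶠ z in 𝓝[≠] x, g z = 0 := (accPt_iff_frequently_nhdsNE.1 hx).mono fun z hz => hz.2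
  exact ha ((hg.differentiableOn.analyticOnNhd isOpen_univ).eqOn_zero_of_preconnected_of_frequently_eq_zero
    (𝕜 := ℂ) isPreconnected_univ (mem_univ x) hfr (mem_univ a))

theorem exists_factorization {g : ℂ → ℂ} (hg : Differentiable ℂ g) (h0 : ∃ a, g a ≠ 0)
    (S : Finset ℂ) : ∃ (m : ℂ → ℕ) (G : ℂ → ℂ), Differentiable ℂ G ∧ (∀ ρ ∈ S, G ρ ≠ 0) ∧
      ∀ z, g z = (∏ ρ ∈ S, (z - ρ) ^ m ρ) * G z := by
  induction S using Finset.induction_on with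
  | empty => exact ⟨fun _ => 0, g, hg, by simp, by simp⟩
  | insert a S haS ih =>
    obtain ⟨m, G, hG, hGS, hgG⟩ := ih
    obtain ⟨b, hb⟩ := h0
    have hGa : ¬ ∀ᶠ z in 𝓝 a, G z = 0 := fun h => by
      have := (hG.differentiableOn.analyticOnNhd isOpen_univ).eqOn_zero_of_preconnected_of_eventuallyEq_zero
        (𝕜 := ℂ) isPreconnected_univ (mem_univ a) h (mem_univ b)
      rw [hgG, this] at hb
      simp at hb
    obtain ⟨n, G', hG', hG'a, hGG'⟩ := exists_eq_pow_mul hG hGa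
    refine ⟨Function.update m a n, G', hG', fun ρ hρ => ?_, fun z => ?_⟩
    · rcases Finset.mem_insert.1 hρ with rfl | hρ
      · exact hG'a
      · have := hGS ρ hρ
        rw [hGG'] at this
        exact right_ne_zero_of_mul this
    · have hS : ∏ ρ ∈ S, (z - ρ) ^ Function.update m a n ρ = ∏ ρ ∈ S, (z - ρ) ^ m ρ :=
        Finset.prod_congr rfl fun ρ hρ => by
          rw [Function.update_of_ne (fun h => haS (h ▸ hρ) : ρ ≠ a)]
      rw [Finset.prod_insert haS, hgG, hGG', Function.update_self, hS]
      ring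

theorem tendsto_integral_poisson {Q : ℝ → ℝ → ℂ} {M γ : ℝ}
    (hmeas : ∀ σ, Measurable (Q σ)) (hM : ∀ᶠ σ in 𝓝[>] 0, ∀ t, ‖Q σ t‖ ≤ M)
    (hc : ContinuousAt (Function.uncurry Q) (0, γ)) :
    Tendsto (fun σ => ∫ t, Q σ t * ((σ / (σ ^ 2 + (t - γ) ^ 2) : ℝ) : ℂ)) (𝓝[>] 0)
      (𝓝 (Real.pi * Q 0 γ)) := by
  have h1 : Tendsto (fun σ => ∫ x : ℝ, Q σ (σ * x + γ) * (((1 + x ^ 2)⁻¹ : ℝ) : ℂ)) (𝓝[>] 0)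
      (𝓝 (∫ x : ℝ, Q 0 γ * (((1 + x ^ 2)⁻¹ : ℝ) : ℂ))) := by
    refine tendsto_integral_filter_of_dominated_convergence (fun x => M * (1 + x ^ 2)⁻¹) ?_ ?_
      (integrable_inv_one_add_sq.const_mul M) ?_
    · refine Eventually.of_forall fun σ => ?_
      refine (((hmeas σ).comp (by fun_prop)).mul
        (Complex.measurable_ofReal.comp (by fun_prop))).aestronglyMeasurable
    · filter_upwards [hM] with σ hσ
      refine Eventually.of_forall fun x => ?_
      rw [norm_mul, Complex.norm_real, Real.norm_of_nonneg (by positivity)]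
      gcongr
      exact hσ _
    · refine Eventually.of_forall fun x => Tendsto.mul_const _ ?_
      have h2 : Tendsto (fun σ : ℝ => (σ, σ * x + γ)) (𝓝[>] 0) (𝓝 (0, γ)) := by
        have : Continuous (fun σ : ℝ => (σ, σ * x + γ)) := by fun_prop
        have h3 := this.tendsto 0
        simp only [zero_mul, zero_add] at h3
        exact h3.mono_left nhdsWithin_le_nhds
      exact hc.tendsto.comp h2
  rw [integral_const_mul, integral_complex_ofReal, integral_univ_inv_one_add_sq, mul_comm] at h1
  refine h1.congr' ?_
  filter_upwards [self_mem_nhdsWithin] with σ hσ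
  have hσ : 0 < σ := hσ
  rw [← integral_add_right_eq_self (fun t => Q σ t * ((σ / (σ ^ 2 + (t - γ) ^ 2) : ℝ) : ℂ)) γ]
  have h3 := Measure.integral_comp_mul_left (fun t => Q σ (t + γ) *
    ((σ / (σ ^ 2 + (t + γ - γ) ^ 2) : ℝ) : ℂ)) σ
  rw [abs_of_pos (inv_pos.2 hσ), eq_inv_smul_iff₀ hσ.ne', ← integral_smul] at h3
  rw [← h3]
  refine integral_congr_ae (Eventually.of_forall fun x => ?_)
  simp only [add_sub_cancel_right, Complex.real_smul]
  rw [mul_left_comm, ← Complex.ofReal_mul]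
  congr 2
  field_simp

theorem logDeriv_of_factorization {g G : ℂ → ℂ} (hG : Differentiable ℂ G) {S : Finset ℂ} {m : ℂ → ℕ}
    (h : ∀ z, g z = (∏ ρ ∈ S, (z - ρ) ^ m ρ) * G z) {z : ℂ} (hz : g z ≠ 0) :
    logDeriv g z = ∑ ρ ∈ S, m ρ / (z - ρ) + logDeriv G z := by
  have hg : g = fun z => (∏ ρ ∈ S, (z - ρ) ^ m ρ) * G z := funext h
  rw [h] at hz
  have h1 := left_ne_zero_of_mul hz
  have h2 := Finset.prod_ne_zero_iff.1 h1
  rw [hg, logDeriv_mul z h1 (right_ne_zero_of_mul hz) (by fun_prop) (hG z)]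
  congr 1
  have h3 := logDeriv_prod (s := S) (f := fun (ρ z : ℂ) => (z - ρ) ^ m ρ) (x := z) h2
    (fun ρ _ => by fun_prop)
  rw [h3]
  refine Finset.sum_congr rfl fun ρ _ => ?_
  have h4 := logDeriv_fun_pow (f := fun z : ℂ => z - ρ) (x := z) (by fun_prop) (m ρ)
  rw [h4, logDeriv_apply, deriv_sub_const, deriv_id'', mul_one_div]

theorem integrable_of_bounded_of_support {f : ℝ → ℂ} (hf : Measurable f) {M R : ℝ}
    (hM : ∀ t, ‖f t‖ ≤ M) (hR : ∀ t, R < |t| → f t = 0) : Integrable f := by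
  have h : Integrable ((Icc (-R) R).indicator f) :=
    (Measure.integrableOn_of_bounded (M := M) measure_Icc_lt_top.ne hf.aestronglyMeasurable
      (Eventually.of_forall hM)).integrable_indicator measurableSet_Icc
  rwa [indicator_eq_self.2] at h
  intro t ht
  by_contra hc
  rw [mem_Icc, ← abs_le, not_le] at hc
  exact ht (hR t hc)

theorem re_natCast_div_sub {ρ : ℂ} (hρ : ρ.re = 0) (n : ℕ) (σ t : ℝ) :
    ((n : ℂ) / (σ + t * Complex.I - ρ)).re = n * (σ / (σ ^ 2 + (t - ρ.im) ^ 2)) := by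
  have h : σ + t * Complex.I - ρ = σ + ((t - ρ.im : ℝ) : ℂ) * Complex.I := by
    apply Complex.ext <;> simp [hρ]
  rw [h, div_eq_mul_inv, ← Complex.ofReal_natCast, Complex.re_ofReal_mul, Complex.inv_re,
    Complex.normSq_add_mul_I]
  simp

theorem exists_zeros_tendsto {g : ℂ → ℂ} (hg : Differentiable ℂ g) (h0 : ∃ a, g a ≠ 0)
    (him : ∀ z, g z = 0 → z.re = 0) (hre : ∀ t : ℝ, (logDeriv g (t * Complex.I)).re = 0) (R : ℝ) :
    ∃ (S : Finset ℝ) (m : ℝ → ℕ), (∀ γ ∈ S, 1 ≤ m γ) ∧ ∀ (Q : ℝ → ℝ → ℂ) (M : ℝ),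
      (∀ σ, Measurable (Q σ)) → (∀ t, ContinuousAt (Function.uncurry Q) (0, t)) →
      (∀ᶠ σ in 𝓝[>] 0, ∀ t, ‖Q σ t‖ ≤ M) → (∀ σ t, R < |t| → Q σ t = 0) →
      Tendsto (fun σ : ℝ => ∫ t : ℝ, Q σ t * ((logDeriv g (σ + t * Complex.I)).re : ℂ)) (𝓝[>] 0)
        (𝓝 (Real.pi * ∑ γ ∈ S, m γ * Q 0 γ)) := by
  set K : Set ℂ := Metric.closedBall 0 (R + 1) with hK
  have hfin := finite_zeros hg h0 (isCompact_closedBall (0 : ℂ) (R + 1))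
  set S₀ := hfin.toFinset with hS₀
  have hmem : ∀ {z}, z ∈ S₀ ↔ z ∈ K ∧ g z = 0 := fun {z} => by simp [hS₀, hK]
  obtain ⟨m, G, hG, hGS, hfac⟩ := exists_factorization hg h0 S₀
  have hGK : ∀ z ∈ K, G z ≠ 0 := fun z hz h => by
    by_cases hgz : g z = 0
    · exact hGS z (hmem.2 ⟨hz, hgz⟩) h
    · rw [hfac, h, mul_zero] at hgz
      exact hgz rfl
  have hcont : ∀ z ∈ K, ContinuousAt (logDeriv G) z := fun z hz =>
    ((hG.deriv.continuous).continuousAt.div hG.continuous.continuousAt (hGK z hz) :)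
  have hmeasG : Measurable (logDeriv G) :=
    Measurable.div (measurable_deriv G) hG.continuous.measurable
  have hm : ∀ ρ ∈ S₀, 1 ≤ m ρ := fun ρ hρ => by
    have h1 := (hmem.1 hρ).2
    rw [hfac, mul_eq_zero, or_iff_left (hGS ρ hρ), Finset.prod_eq_zero_iff] at h1
    obtain ⟨ρ', -, h2⟩ := h1
    rw [pow_eq_zero_iff', sub_eq_zero] at h2
    rw [h2.1]
    exact Nat.one_le_iff_ne_zero.2 h2.2
  have hρre : ∀ ρ ∈ S₀, ρ.re = 0 := fun ρ hρ => him ρ (hmem.1 hρ).2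
  have hzK : ∀ {σ t : ℝ}, |σ| ≤ 1 → |t| ≤ R → (σ : ℂ) + t * Complex.I ∈ K := fun {σ t} h1 h2 => by
    rw [hK, mem_closedBall_zero_iff]
    refine (norm_add_le _ _).trans ?_
    rw [norm_mul, Complex.norm_I, mul_one, Complex.norm_real, Complex.norm_real, Real.norm_eq_abs,
      Real.norm_eq_abs]
    linarith
  have hGre : ∀ t : ℝ, |t| ≤ R → (logDeriv G (t * Complex.I)).re = 0 := fun t ht => by
    have hφ : ContinuousAt (fun t : ℝ => (logDeriv G (t * Complex.I)).re) t := by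
      have h1 : (t : ℂ) * Complex.I ∈ K := by simpa using hzK (σ := 0) (by simp) ht
      have h2 : ContinuousAt (fun t : ℝ => (t : ℂ) * Complex.I) t := by fun_prop
      exact Complex.continuous_re.continuousAt.comp (ContinuousAt.comp (hcont _ h1) h2)
    have hev : ∀ᶠ s : ℝ in 𝓝[≠] t, (logDeriv G (s * Complex.I)).re = 0 := by
      have h1 : ∀ᶠ s : ℝ in 𝓝[≠] t, s ∉ (S₀.image Complex.im).erase t :=
        Eventually.filter_mono nhdsWithin_le_nhds
          ((Finset.isClosed _).isOpen_compl.mem_nhds (by simp) :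
            ((((S₀.image Complex.im).erase t : Finset ℝ) : Set ℝ)ᶜ) ∈ 𝓝 t)
      have h2 : ∀ᶠ s : ℝ in 𝓝[≠] t, |s| < R + 1 :=
        Eventually.filter_mono nhdsWithin_le_nhds
          (continuous_abs.continuousAt.eventually_lt continuousAt_const (by linarith))
      filter_upwards [h1, h2, self_mem_nhdsWithin] with s hs1 hs2 hs3
      have hgs : g (s * Complex.I) ≠ 0 := fun h => by
        refine hs1 (Finset.mem_erase.2 ⟨hs3, Finset.mem_image.2 ⟨s * Complex.I, hmem.2 ⟨?_, h⟩,
          by simp⟩⟩)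
        rw [hK, mem_closedBall_zero_iff]
        simpa using hs2.le
      have h3 := hre s
      rw [logDeriv_of_factorization hG hfac hgs, Complex.add_re, Complex.re_sum,
        Finset.sum_eq_zero fun ρ hρ => ?_, zero_add] at h3
      · exact h3
      · have := re_natCast_div_sub (hρre ρ hρ) (m ρ) 0 s
        simpa using this
    exact tendsto_nhds_unique (hφ.mono_left nhdsWithin_le_nhds)
      (tendsto_const_nhds.congr' (hev.mono fun _ h => h.symm))
  obtain ⟨B, hB⟩ := (isCompact_closedBall (0 : ℂ) (R + 1)).exists_bound_of_continuousOn
    (f := logDeriv G) fun z hz => (hcont z hz).continuousWithinAt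
  refine ⟨S₀.image Complex.im, fun γ => m (γ * Complex.I), fun γ hγ => ?_,
    fun Q M hQm hQc hQM hQR => ?_⟩
  · obtain ⟨ρ, hρ, rfl⟩ := Finset.mem_image.1 hγ
    have : (ρ.im : ℂ) * Complex.I = ρ := by
      apply Complex.ext <;> simp [hρre ρ hρ]
    simp only [this]
    exact hm ρ hρ
  have hsum : ∑ γ ∈ S₀.image Complex.im, (m (γ * Complex.I) : ℂ) * Q 0 γ =
      ∑ ρ ∈ S₀, m ρ * Q 0 ρ.im := by
    rw [Finset.sum_image fun a ha b hb h => Complex.ext ((hρre a ha).trans (hρre b hb).symm) h]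
    refine Finset.sum_congr rfl fun ρ hρ => ?_
    have : (ρ.im : ℂ) * Complex.I = ρ := by
      apply Complex.ext <;> simp [hρre ρ hρ]
    rw [this]
  have hsm : ∀ᶠ σ : ℝ in 𝓝[>] 0, 0 < σ ∧ σ ≤ 1 :=
    (Ioc_mem_nhdsGT one_pos)
  have hmG : ∀ σ : ℝ, Measurable fun t : ℝ => Q σ t * ((logDeriv G (σ + t * Complex.I)).re : ℂ) :=
    fun σ => (hQm σ).mul (Complex.measurable_ofReal.comp (Complex.measurable_re.comp
      (hmeasG.comp (by fun_prop))))
  have hGB : ∀ {σ t : ℝ}, 0 < σ ∧ σ ≤ 1 → |t| ≤ R →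
      ‖((logDeriv G (σ + t * Complex.I)).re : ℂ)‖ ≤ B := fun {σ t} hσ ht => by
    rw [Complex.norm_real, Real.norm_eq_abs]
    refine (Complex.abs_re_le_norm _).trans (hB _ (hzK ?_ ht))
    rw [abs_of_pos hσ.1]
    exact hσ.2
  have hlimG : Tendsto (fun σ : ℝ => ∫ t : ℝ, Q σ t * ((logDeriv G (σ + t * Complex.I)).re : ℂ))
      (𝓝[>] 0) (𝓝 (∫ t : ℝ, (0 : ℂ))) := by
    refine tendsto_integral_filter_of_dominated_convergence
      ((Icc (-R) R).indicator fun _ => M * B) ?_ ?_ ?_ ?_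
    · exact Eventually.of_forall fun σ => (hmG σ).aestronglyMeasurable
    · filter_upwards [hsm, hQM] with σ hσ hσM
      refine Eventually.of_forall fun t => ?_
      by_cases ht : |t| ≤ R
      · rw [indicator_of_mem (mem_Icc.2 (abs_le.1 ht)), norm_mul]
        exact mul_le_mul (hσM t) (hGB hσ ht) (norm_nonneg _) ((norm_nonneg _).trans (hσM t))
      · rw [hQR σ t (not_le.1 ht), indicator_of_notMem fun h => ht (abs_le.2 (mem_Icc.1 h))]
        simp
    · exact (integrable_indicator_iff measurableSet_Icc).2
        (integrableOn_const measure_Icc_lt_top.ne)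
    · refine Eventually.of_forall fun t => ?_
      by_cases ht : |t| ≤ R
      · have h1 : Tendsto (fun σ => Q σ t) (𝓝[>] 0) (𝓝 (Q 0 t)) := by
          have h2 : Tendsto (fun σ : ℝ => (σ, t)) (𝓝[>] 0) (𝓝 (0, t)) :=
            (Continuous.tendsto (by fun_prop) 0).mono_left nhdsWithin_le_nhds
          exact (hQc t).tendsto.comp h2
        have h3 : Tendsto (fun σ : ℝ => ((logDeriv G (σ + t * Complex.I)).re : ℂ)) (𝓝[>] 0)
            (𝓝 ((logDeriv G (t * Complex.I)).re : ℂ)) := by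
          have h4 : ContinuousAt (fun σ : ℝ => (σ : ℂ) + t * Complex.I) 0 := by fun_prop
          have h5 : ContinuousAt (logDeriv G) (((0 : ℝ) : ℂ) + t * Complex.I) :=
            hcont _ (hzK (by simp) ht)
          have h6 := ((Complex.continuous_ofReal.comp Complex.continuous_re).continuousAt.comp
            (ContinuousAt.comp (f := fun σ : ℝ => (σ : ℂ) + t * Complex.I) h5 h4)).tendsto
          simp only [Function.comp_def, Complex.ofReal_zero, zero_add] at h6
          exact h6.mono_left nhdsWithin_le_nhds
        have h7 := h1.mul h3
        rwa [hGre t ht, Complex.ofReal_zero, mul_zero] at h7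
      · simp [hQR _ t (not_le.1 ht)]
  have hlim := (tendsto_finsetSum S₀ fun ρ hρ =>
    (tendsto_integral_poisson (γ := ρ.im) hQm hQM (hQc _)).const_mul (m ρ : ℂ)).add hlimG
  rw [integral_zero, add_zero] at hlim
  rw [hsum, Finset.mul_sum]
  simp_rw [mul_left_comm (Real.pi : ℂ)]
  refine hlim.congr' ?_
  filter_upwards [hsm, hQM] with σ hσ hσM
  have hIG : Integrable fun t : ℝ => Q σ t * ((logDeriv G (σ + t * Complex.I)).re : ℂ) := by
    refine integrable_of_bounded_of_support (hmG σ) (M := M * |B|) (R := R) (fun t => ?_)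
      fun t ht => by simp [hQR σ t ht]
    have hM0 := (norm_nonneg _).trans (hσM t)
    by_cases ht : |t| ≤ R
    · rw [norm_mul]
      exact mul_le_mul (hσM t) ((hGB hσ ht).trans (le_abs_self B)) (norm_nonneg _) hM0
    · rw [hQR σ t (not_le.1 ht), zero_mul, norm_zero]
      positivity
  have hIP : ∀ γ : ℝ, Integrable fun t : ℝ => Q σ t * ((σ / (σ ^ 2 + (t - γ) ^ 2) : ℝ) : ℂ) :=
      fun γ => by
    refine integrable_of_bounded_of_support (M := M * (1 / σ)) (R := R)
      ((hQm σ).mul (Complex.measurable_ofReal.comp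
        (Measurable.div (by fun_prop) (by fun_prop)))) (fun t => ?_)
      fun t ht => by simp [hQR σ t ht]
    rw [norm_mul, Complex.norm_real, Real.norm_eq_abs]
    have h1 := hσ.1
    rw [abs_of_nonneg (by positivity)]
    refine mul_le_mul (hσM t) ?_ (by positivity) ((norm_nonneg _).trans (hσM t))
    rw [div_le_div_iff₀ (by positivity) h1]
    nlinarith [sq_nonneg (t - γ)]
  simp_rw [← integral_const_mul]
  rw [← integral_finsetSum _ fun ρ _ => (hIP ρ.im).const_mul _, ← integral_add
    (integrable_finsetSum _ fun ρ _ => (hIP ρ.im).const_mul _) hIG]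
  refine integral_congr_ae (Eventually.of_forall fun t => ?_)
  by_cases ht : |t| ≤ R
  · have hgz : g (σ + t * Complex.I) ≠ 0 := fun h => by
      have := him _ h
      simp at this
      exact hσ.1.ne' this
    simp only
    rw [logDeriv_of_factorization hG hfac hgz, Complex.add_re, Complex.re_sum, Complex.ofReal_add,
      mul_add, Complex.ofReal_sum, Finset.mul_sum]
    congr 1
    refine Finset.sum_congr rfl fun ρ hρ => ?_
    rw [re_natCast_div_sub (hρre ρ hρ)]
    push_cast
    ring
  · simp [hQR σ t (not_le.1 ht)]

section

/-- The Riemann xi function `s (s - 1) Λ(s)`, recentred so that the critical line is the imaginary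
axis. -/
noncomputable def Xi (z : ℂ) : ℂ := (z ^ 2 - 1 / 4) * completedRiemannZeta₀ (1 / 2 + z) + 1

theorem differentiable_Xi : Differentiable ℂ Xi := by
  have h : Differentiable ℂ fun z : ℂ => completedRiemannZeta₀ (1 / 2 + z) :=
    differentiable_completedZeta₀.comp (by fun_prop)
  exact (Differentiable.mul (by fun_prop) h).add_const 1

theorem Xi_neg (z : ℂ) : Xi (-z) = Xi z := by
  rw [Xi, Xi, ← completedRiemannZeta₀_one_sub (1 / 2 + z), show (1 - (1 / 2 + z) : ℂ) =
      1 / 2 + -z by ring,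
    neg_sq]

theorem Xi_half : Xi (1 / 2) = 1 := by
  rw [Xi]
  norm_num

theorem Xi_eq {z : ℂ} (hz : 0 < z.re) (hz' : z ≠ 1 / 2) :
    Xi z = (z ^ 2 - 1 / 4) * (riemannZeta (1 / 2 + z) * Complex.Gammaℝ (1 / 2 + z)) := by
  have hs : (1 / 2 + z : ℂ) ≠ 0 := fun h => by
    have := congrArg Complex.re h
    norm_num at this
    linarith
  have hs1 : (1 - (1 / 2 + z) : ℂ) ≠ 0 := fun h => hz' (by linear_combination -h)
  have hG : Complex.Gammaℝ (1 / 2 + z) ≠ 0 :=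
    Complex.Gammaℝ_ne_zero_of_re_pos (by norm_num; linarith)
  rw [riemannZeta_def_of_ne_zero hs, div_mul_cancel₀ _ hG, completedRiemannZeta_eq, Xi,
    show z ^ 2 - 1 / 4 = -((1 / 2 + z) * (1 - (1 / 2 + z))) by ring]
  generalize 1 / 2 + z = s at hs hs1 ⊢
  field_simp
  ring

theorem Xi_eq_Gamma {z : ℂ} (hz : 0 < z.re) (hz' : z ≠ 1 / 2) :
    Xi z = 2 * (Real.pi : ℂ) ^ (-(1 / 2 + z) / 2) * Complex.Gamma (5 / 4 + z / 2) *
      riemannZeta₁ (1 / 2 + z) := by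
  have hs : ((1 / 2 + z) / 2 : ℂ) ≠ 0 := fun h => by
    have := congrArg Complex.re h
    norm_num at this
    linarith
  have hs1 : (1 / 2 + z : ℂ) ≠ 1 := fun h => hz' (by linear_combination h)
  rw [Xi_eq hz hz', Complex.Gammaℝ_def, riemannZeta₁_eq_of_ne_one hs1,
    show (5 / 4 + z / 2 : ℂ) = (1 / 2 + z) / 2 + 1 by ring, Complex.Gamma_add_one _ hs]
  ring

theorem conj_Xi (z : ℂ) : starRingEnd ℂ (Xi (starRingEnd ℂ z)) = Xi z := by
  have h1 : Differentiable ℂ (starRingEnd ℂ ∘ Xi ∘ starRingEnd ℂ) := fun z => by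
    have := (differentiable_Xi (starRingEnd ℂ z)).conj_conj
    simpa using this
  have hev : (starRingEnd ℂ ∘ Xi ∘ starRingEnd ℂ) =ᶠ[𝓝 1] Xi := by
    have h2 : ∀ᶠ z : ℂ in 𝓝 1, 1 / 2 < z.re :=
      continuousAt_const.eventually_lt Complex.continuous_re.continuousAt (by norm_num)
    filter_upwards [h2] with z hz
    have hne : ∀ {z : ℂ}, 1 / 2 < z.re → z ≠ 1 / 2 := fun {z} hz h => by
      rw [h] at hz
      norm_num at hz
    have hc : 1 / 2 < (starRingEnd ℂ z).re := by rwa [Complex.conj_re]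
    have hπ : ((Real.pi : ℝ) : ℂ).arg ≠ Real.pi := by
      rw [Complex.arg_ofReal_of_nonneg Real.pi_pos.le]
      exact Real.pi_pos.ne
    rw [Function.comp_apply, Function.comp_apply, Xi_eq (by linarith) (hne hz),
      Xi_eq (by linarith) (hne hc),
      show (1 / 2 + starRingEnd ℂ z : ℂ) = starRingEnd ℂ (1 / 2 + z) by simp [map_ofNat],
      riemannZeta_conj, Complex.Gammaℝ_def, Complex.Gammaℝ_def,
      show (-starRingEnd ℂ (1 / 2 + z) / 2 : ℂ) =
          starRingEnd ℂ (-(1 / 2 + z) / 2) by simp [map_ofNat],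
      show (starRingEnd ℂ (1 / 2 + z) / 2 : ℂ) =
          starRingEnd ℂ ((1 / 2 + z) / 2) by simp [map_ofNat],
      Complex.Gamma_conj, Complex.cpow_conj _ _ hπ]
    simp [map_ofNat]
  exact congrFun ((h1.differentiableOn.analyticOnNhd isOpen_univ).eq_of_eventuallyEq (𝕜 := ℂ)
    (differentiable_Xi.differentiableOn.analyticOnNhd isOpen_univ) hev) z

theorem re_logDeriv_Xi (t : ℝ) : (logDeriv Xi (t * Complex.I)).re = 0 := by
  have hconj : starRingEnd ℂ (t * Complex.I) = -(t * Complex.I) := by simp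
  have hd : deriv Xi (-(t * Complex.I)) = -deriv Xi (t * Complex.I) := by
    have h1 := deriv_comp_neg Xi (t * Complex.I)
    rw [show (fun x => Xi (-x)) = Xi from funext Xi_neg] at h1
    rw [h1, neg_neg]
  have hd2 := congrFun (deriv_conj_conj (𝕜 := ℂ) (f := Xi)) (t * Complex.I)
  rw [show starRingEnd ℂ ∘ Xi ∘ starRingEnd ℂ = Xi from funext conj_Xi] at hd2
  simp only [Function.comp_apply, hconj, hd] at hd2
  have hX := conj_Xi (t * Complex.I)
  rw [hconj, Xi_neg] at hX
  have hL : starRingEnd ℂ (logDeriv Xi (t * Complex.I)) = -logDeriv Xi (t * Complex.I) := by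
    rw [logDeriv_apply, map_div₀, hX, ← neg_div]
    congr 1
    rw [map_neg] at hd2
    linear_combination hd2
  have := congrArg Complex.re hL
  rw [Complex.conj_re, Complex.neg_re] at this
  linarith

variable {η A : ℝ}

theorem Xi_zero_re (hη : η = 1 ∨ η = -1) (hA : 0 ≤ A) (hle : ∀ u, 0 < u → η * fR u ≤ A + √u)
    {z : ℂ} (hz : Xi z = 0) : z.re = 0 := by
  have key : ∀ {z : ℂ}, 0 < z.re → Xi z ≠ 0 := fun {z} hz h => by
    by_cases hz' : z = 1 / 2
    · rw [hz', Xi_half] at h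
      exact one_ne_zero h
    · rw [Xi_eq_Gamma hz hz'] at h
      refine mul_ne_zero (mul_ne_zero (mul_ne_zero two_ne_zero ?_) ?_) ?_ h
      · rw [Complex.cpow_ne_zero_iff]
        exact Or.inl (by exact_mod_cast Real.pi_ne_zero)
      · refine Complex.Gamma_ne_zero_of_re_pos ?_
        norm_num
        linarith
      · exact riemannZeta₁_ne_zero hη hA hle (by norm_num; linarith)
  rcases lt_trichotomy z.re 0 with h | h | h
  · exact absurd (by rwa [Xi_neg]) (key (z := -z) (by simpa using h))
  · exact h
  · exact absurd hz (key h)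

theorem logDeriv_Xi (hη : η = 1 ∨ η = -1) (hA : 0 ≤ A) (hle : ∀ u, 0 < u → η * fR u ≤ A + √u)
    {z : ℂ} (hz : 0 < z.re) (hz' : z.re < 1 / 2) :
    logDeriv Xi z = Bfun z - (z - 1 / 2) * FR z := by
  have hne : ∀ {z : ℂ}, z.re < 1 / 2 → z ≠ 1 / 2 := fun {z} hz h => by
    rw [h] at hz
    norm_num at hz
  have hev : Xi =ᶠ[𝓝 z] fun z => 2 * (Real.pi : ℂ) ^ (-(1 / 2 + z) / 2) *
      Complex.Gamma (5 / 4 + z / 2) * riemannZeta₁ (1 / 2 + z) := by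
    filter_upwards [continuousAt_const.eventually_lt Complex.continuous_re.continuousAt hz,
      Complex.continuous_re.continuousAt.eventually_lt continuousAt_const hz'] with w hw hw'
    exact Xi_eq_Gamma hw (hne hw')
  have hpi : (Real.pi : ℂ) ≠ 0 := by exact_mod_cast Real.pi_ne_zero
  have hZ : riemannZeta₁ (1 / 2 + z) ≠ 0 :=
    riemannZeta₁_ne_zero hη hA hle (by norm_num; linarith)
  have hre : 0 < (5 / 4 + z / 2).re := by norm_num; linarith
  have hΓ : Complex.Gamma (5 / 4 + z / 2) ≠ 0 := Complex.Gamma_ne_zero_of_re_pos hre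
  have hΓd : DifferentiableAt ℂ Complex.Gamma (5 / 4 + z / 2) :=
    Complex.differentiableAt_Gamma _ fun m h => by
      rw [h] at hre
      simp at hre
      have : (0 : ℝ) ≤ m := Nat.cast_nonneg m
      linarith
  have d1 : HasDerivAt (fun z : ℂ => 2 * (Real.pi : ℂ) ^ (-(1 / 2 + z) / 2))
      (2 * (Real.pi : ℂ) ^ (-(1 / 2 + z) / 2) * (-(Real.log Real.pi : ℂ) / 2)) z := by
    have h1 : HasDerivAt (fun z : ℂ => -(1 / 2 + z) / 2) (-1 / 2) z :=
      (((hasDerivAt_id z).const_add (1 / 2)).neg.div_const 2)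
    have h2 := (h1.const_cpow (c := (Real.pi : ℂ)) (Or.inl hpi)).const_mul 2
    rw [← Complex.ofReal_log Real.pi_pos.le] at h2
    exact h2.congr_deriv (by ring)
  have d2 : HasDerivAt (fun z : ℂ => Complex.Gamma (5 / 4 + z / 2))
      (deriv Complex.Gamma (5 / 4 + z / 2) * (1 / 2)) z :=
    hΓd.hasDerivAt.comp z (((hasDerivAt_id z).div_const 2).const_add (5 / 4))
  have d3 : HasDerivAt (fun z : ℂ => riemannZeta₁ (1 / 2 + z))
      (deriv riemannZeta₁ (1 / 2 + z)) z := by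
    have := (differentiable_riemannZeta₁ (1 / 2 + z)).hasDerivAt.comp z
      ((hasDerivAt_id z).const_add (1 / 2))
    rwa [mul_one] at this
  have hp : (Real.pi : ℂ) ^ (-(1 / 2 + z) / 2) ≠ 0 := by
    rw [Complex.cpow_ne_zero_iff]
    exact Or.inl hpi
  have hF := FR_identity hη hA hle hz
  have d := (d1.mul d2).mul d3
  rw [logDeriv_apply, hev.deriv_eq, hev.self_of_nhds, Bfun, Complex.digamma_def, logDeriv_apply]
  erw [d.deriv]
  simp only [Pi.mul_apply]
  generalize riemannZeta₁ (1 / 2 + z) = Z at *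
  generalize deriv riemannZeta₁ (1 / 2 + z) = Z' at *
  generalize Complex.Gamma (5 / 4 + z / 2) = Γ at *
  generalize (Real.pi : ℂ) ^ (-(1 / 2 + z) / 2) = p at *
  generalize deriv Complex.Gamma (5 / 4 + z / 2) = Γ' at *
  field_simp
  linear_combination (2 : ℂ) * Γ * hF

end

section

/-- The tent function of height `1` supported on `[-T, T]`. -/
noncomputable def tent (T t : ℝ) : ℝ := max 0 (1 - |t| / T)

theorem continuous_tent (T : ℝ) : Continuous (tent T) := by
  unfold tent
  fun_prop

theorem tent_nonneg (T t : ℝ) : 0 ≤ tent T t := le_max_left _ _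

variable {T : ℝ}

theorem tent_le_one (hT : 0 < T) (t : ℝ) : tent T t ≤ 1 :=
  max_le zero_le_one (sub_le_self _ (by positivity))

theorem tent_of_le {t : ℝ} (hT : 0 < T) (ht : T ≤ |t|) : tent T t = 0 :=
  max_eq_left (sub_nonpos.2 ((one_le_div hT).2 ht))

theorem tent_of_abs_le {t : ℝ} (hT : 0 < T) (ht : |t| ≤ T) : tent T t = 1 - |t| / T :=
  max_eq_right (sub_nonneg.2 ((div_le_one hT).2 ht))

theorem tent_neg (T t : ℝ) : tent T (-t) = tent T t := by rw [tent, tent, abs_neg]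

theorem abs_tent_sub_le (hT : 0 < T) (s t : ℝ) : |tent T s - tent T t| ≤ |s - t| / T := by
  refine (abs_max_sub_max_le_max _ _ _ _).trans ?_
  rw [sub_self, abs_zero, sub_sub_sub_cancel_left, ← sub_div, abs_div, abs_of_pos hT,
      max_eq_right (by positivity)]
  refine div_le_div_of_nonneg_right ?_ hT.le
  rw [abs_sub_comm s]
  exact abs_abs_sub_abs_le _ _

theorem integrable_tent (hT : 0 < T) : Integrable (tent T) := by
  refine (continuous_tent T).integrable_of_hasCompactSupport ?_
  refine HasCompactSupport.of_support_subset_isCompact (isCompact_Icc (a := -T) (b := T)) ?_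
  intro t ht
  by_contra h
  rw [mem_Icc, ← abs_le, not_le] at h
  exact ht (tent_of_le hT h.le)

/-- The Fourier transform of `tent T`, the Fejér kernel. -/
noncomputable def fejer (T w : ℝ) : ℝ := ∫ t, tent T t * Real.cos (t * w)

theorem fejer_neg (T w : ℝ) : fejer T (-w) = fejer T w := by
  simp [fejer]

theorem integrable_tent_mul (hT : 0 < T) {φ : ℝ → ℝ} (hφ : Continuous φ) (hb : ∀ t, |φ t| ≤ 1) :
    Integrable fun t => tent T t * φ t := by
  refine (integrable_tent hT).mono' ((continuous_tent T).mul hφ).aestronglyMeasurable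
    (Eventually.of_forall fun t => ?_)
  rw [norm_mul, Real.norm_of_nonneg (tent_nonneg T t)]
  exact mul_le_of_le_one_right (tent_nonneg T t) (hb t)

theorem fejer_eq (hT : 0 < T) {w : ℝ} (hw : w ≠ 0) :
    fejer T w = 2 * (1 - Real.cos (T * w)) / (T * w ^ 2) := by
  have h1 : ∀ t, tent T t * Real.cos (t * w) = (fun x => tent T x * Real.cos (x * w)) |t| :=
      fun t => by
    simp only [tent, abs_abs]
    rcases abs_choice t with h | h <;> simp [h]
  rw [fejer, integral_congr_ae (Eventually.of_forall h1),
    integral_comp_abs (f := fun x => tent T x * Real.cos (x * w))]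
  have h2 : ∫ x in Ioi (0 : ℝ), tent T x * Real.cos (x * w) =
      ∫ x in (0)..T, (1 - x / T) * Real.cos (x * w) := by
    have h4 : ∫ x in Ioi (0 : ℝ), tent T x * Real.cos (x * w) =
        ∫ x in Ioc 0 T, tent T x * Real.cos (x * w) := by
      refine setIntegral_eq_of_subset_of_forall_sdiff_eq_zero measurableSet_Ioi
        (fun x hx => hx.1) fun x hx => ?_
      have hx0 : 0 < x := hx.1
      have hxT : T < x := not_le.1 fun h => hx.2 ⟨hx0, h⟩
      rw [tent_of_le hT (by rw [abs_of_pos hx0]; exact hxT.le), zero_mul]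
    rw [intervalIntegral.integral_of_le hT.le, h4]
    refine setIntegral_congr_fun measurableSet_Ioc fun x hx => ?_
    rw [tent_of_abs_le hT (by rw [abs_of_pos hx.1]; exact hx.2), abs_of_pos hx.1]
  have h3 : ∫ x in (0)..T, (1 - x / T) * Real.cos (x * w) =
      (1 - Real.cos (T * w)) / (T * w ^ 2) := by
    have hd : ∀ x ∈ uIcc 0 T, HasDerivAt (fun x => (1 - x / T) * (Real.sin (x * w) / w) -
        Real.cos (x * w) / (T * w ^ 2)) ((1 - x / T) * Real.cos (x * w)) x := fun x _ => by
      have e1 : HasDerivAt (fun x => 1 - x / T) (-(1 / T)) x :=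
        ((hasDerivAt_id x).div_const T).const_sub 1
      have e0 : HasDerivAt (fun x => x * w) w x := by simpa using (hasDerivAt_id x).mul_const w
      have e2 : HasDerivAt (fun x => Real.sin (x * w) / w) (Real.cos (x * w) * w / w) x :=
        e0.sin.div_const w
      have e3 : HasDerivAt (fun x => Real.cos (x * w) / (T * w ^ 2))
        (-Real.sin (x * w) * w / (T * w ^ 2)) x := e0.cos.div_const _
      refine HasDerivAt.congr_deriv ((e1.mul e2).sub e3) ?_
      field_simp
      ring
    rw [intervalIntegral.integral_eq_sub_of_hasDerivAt hd
      (Continuous.intervalIntegrable (by fun_prop) _ _)]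
    field_simp
    simp
    ring
  rw [h2, h3]
  ring

theorem integral_tent_le (hT : 0 < T) : ∫ t, tent T t ≤ 2 * T := by
  have h : ∫ t, tent T t ≤ ∫ t, (Icc (-T) T).indicator (fun _ => (1 : ℝ)) t := by
    refine integral_mono (integrable_tent hT) ((integrable_indicator_iff measurableSet_Icc).2
      (integrableOn_const measure_Icc_lt_top.ne)) fun t => ?_
    by_cases ht : |t| ≤ T
    · rw [indicator_of_mem (mem_Icc.2 (abs_le.1 ht))]
      exact tent_le_one hT t
    · rw [tent_of_le hT (not_le.1 ht).le]
      exact indicator_nonneg (fun _ _ => zero_le_one) _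
  rw [integral_indicator measurableSet_Icc, setIntegral_const, Measure.real, Real.volume_Icc,
    ENNReal.toReal_ofReal (by linarith)] at h
  simpa [two_mul] using h

theorem fejer_nonneg (hT : 0 < T) (w : ℝ) : 0 ≤ fejer T w := by
  by_cases hw : w = 0
  · rw [hw, fejer]
    exact integral_nonneg fun t => by simpa using tent_nonneg T t
  · rw [fejer_eq hT hw]
    have := Real.cos_le_one (T * w)
    have : 0 ≤ 1 - Real.cos (T * w) := by linarith
    positivity

/-- A Lorentzian majorant of the Fejér kernel. -/
noncomputable def lor (T w : ℝ) : ℝ := 5 * T / (1 + (T * w) ^ 2)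

theorem lor_nonneg (hT : 0 < T) (w : ℝ) : 0 ≤ lor T w := by
  unfold lor
  positivity

theorem fejer_le_lor (hT : 0 < T) (w : ℝ) : fejer T w ≤ lor T w := by
  by_cases hw : w = 0
  · have := integral_tent_le hT
    simp only [hw, fejer, lor, mul_zero, Real.cos_zero, mul_one]
    norm_num
    linarith
  have hw2 : 0 < w ^ 2 := by positivity
  rw [lor, fejer_eq hT hw, div_le_div_iff₀ (by positivity) (by positivity)]
  have h1 := Real.one_sub_sq_div_two_le_cos (x := T * w)
  have h2 := Real.neg_one_le_cos (T * w)
  have h3 : 2 * (1 - Real.cos (T * w)) * (1 + (T * w) ^ 2) ≤ 5 * (T * w) ^ 2 := by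
    nlinarith [sq_nonneg (T * w)]
  linarith

theorem integrable_lor (hT : 0 < T) : Integrable (lor T) := by
  have h := (integrable_inv_one_add_sq.comp_mul_left' hT.ne').const_mul (5 * T)
  exact h

theorem integral_lor (hT : 0 < T) : ∫ w, lor T w = 5 * Real.pi := by
  have h := Measure.integral_comp_mul_left (fun x : ℝ => (1 + x ^ 2)⁻¹) T
  rw [integral_univ_inv_one_add_sq, abs_of_pos (inv_pos.2 hT), smul_eq_mul] at h
  simp only [lor, div_eq_mul_inv]
  rw [integral_const_mul, h]
  field_simp

theorem integral_tent_mul_cexp (hT : 0 < T) (w : ℝ) :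
    ∫ t : ℝ, (tent T t : ℂ) * Complex.exp (t * w * Complex.I) = fejer T w := by
  have hs : ∫ t : ℝ, tent T t * Real.sin (t * w) = 0 := by
    have h := integral_neg_eq_self (fun t : ℝ => tent T t * Real.sin (t * w)) volume
    simp only [tent_neg, neg_mul, Real.sin_neg, mul_neg, integral_neg] at h
    linarith
  have hI := integrable_tent_mul hT (φ := fun t => Real.cos (t * w)) (by fun_prop)
    fun t => Real.abs_cos_le_one _
  have hI2 := integrable_tent_mul hT (φ := fun t => Real.sin (t * w)) (by fun_prop)
    fun t => Real.abs_sin_le_one _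
  have h1 : ∀ t : ℝ, (tent T t : ℂ) * Complex.exp (t * w * Complex.I) =
      ((tent T t * Real.cos (t * w) : ℝ) : ℂ) + ((tent T t * Real.sin (t * w) : ℝ) : ℂ) *
          Complex.I :=
    fun t => by
      rw [Complex.exp_mul_I]
      push_cast
      ring
  simp_rw [h1]
  rw [integral_add hI.ofReal (hI2.ofReal.mul_const _), integral_mul_const, integral_complex_ofReal,
    integral_complex_ofReal, hs, fejer]
  simp

end

section

variable {T : ℝ}

theorem continuous_fejer (hT : 0 < T) : Continuous (fejer T) := by
  unfold fejer
  refine continuous_of_dominated (bound := tent T) (fun w => ?_)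
    (fun w => ?_) (integrable_tent hT) ?_
  · exact ((continuous_tent T).mul (by fun_prop)).aestronglyMeasurable
  · refine Eventually.of_forall fun t => ?_
    rw [norm_mul, Real.norm_of_nonneg (tent_nonneg T t)]
    exact mul_le_of_le_one_right (tent_nonneg T t) (Real.abs_cos_le_one _)
  · exact Eventually.of_forall fun t => by fun_prop

/-- The Fourier transform of `tent T` divided by `-a + it`. -/
noncomputable def tentDivHat (a T w : ℝ) : ℂ :=
  ∫ t : ℝ, (tent T t : ℂ) * Complex.exp (t * w * Complex.I) / (-a + t * Complex.I)

theorem tentDivHat_eq {a : ℝ} (ha : 0 < a) (hT : 0 < T) (w : ℝ) :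
    tentDivHat a T w = -∫ r in Ioi (0 : ℝ), ((Real.exp (-a * r) * fejer T (w + r) : ℝ) : ℂ) := by
  have h1 : ∀ t : ℝ, (tent T t : ℂ) * Complex.exp (t * w * Complex.I) / (-a + t * Complex.I) =
      -∫ r in Ioi (0 : ℝ), (tent T t : ℂ) * Complex.exp (t * w * Complex.I) *
        Complex.exp (-(a - t * Complex.I) * r) := fun t => by
    rw [integral_const_mul, integral_cexp_neg_mul (by simpa using ha), ← mul_neg, ← div_neg,
        neg_sub,
      mul_one_div]
    congr 1
    ring
  have h2 : ∀ r : ℝ, ∫ t : ℝ, (tent T t : ℂ) * Complex.exp (t * w * Complex.I) *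
        Complex.exp (-(a - t * Complex.I) * r) =
      ((Real.exp (-a * r) * fejer T (w + r) : ℝ) : ℂ) := fun r => by
    rw [Complex.ofReal_mul, ← integral_tent_mul_cexp hT, ← integral_const_mul]
    refine integral_congr_ae (Eventually.of_forall fun t => ?_)
    simp only
    rw [mul_assoc, ← Complex.exp_add, Complex.ofReal_exp, mul_left_comm, ← Complex.exp_add]
    congr 2
    push_cast
    ring
  simp only [tentDivHat, h1]
  rw [integral_neg, integral_integral_swap]
  · simp only [h2]
  · refine Integrable.mono' ((integrable_tent hT).mul_prod (integrableOn_exp_neg_mul ha)) ?_ ?_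
    · refine Continuous.aestronglyMeasurable ?_
      have := continuous_tent T
      simp only [Function.uncurry_def]
      fun_prop
    · refine Eventually.of_forall fun p => ?_
      simp only [Function.uncurry_def, norm_mul, norm_cexp_neg_mul, Complex.norm_real,
        Real.norm_of_nonneg (tent_nonneg _ _)]
      rw [← Complex.ofReal_mul, Complex.norm_exp_ofReal_mul_I]
      simp

theorem norm_tentDivHat_le {a : ℝ} (ha : 0 < a) (hT : 0 < T) (w : ℝ) :
    ‖tentDivHat a T w‖ ≤ 5 * Real.pi := by
  rw [tentDivHat_eq ha hT, norm_neg, ← integral_lor hT, ← integral_add_left_eq_self (lor T) w]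
  refine (norm_integral_le_integral_norm _).trans ?_
  refine (integral_mono_of_nonneg (Eventually.of_forall fun _ => norm_nonneg _)
    ((integrable_lor hT).comp_add_left w).integrableOn ?_).trans
    (setIntegral_le_integral ((integrable_lor hT).comp_add_left w)
      (Eventually.of_forall fun _ => lor_nonneg hT _))
  refine (ae_restrict_iff' measurableSet_Ioi).2 (Eventually.of_forall fun r hr => ?_)
  have hr0 : 0 < r := hr
  simp only
  rw [Complex.norm_real, Real.norm_of_nonneg (mul_nonneg (Real.exp_pos _).le (fejer_nonneg hT _))]
  have := Real.exp_le_one_iff.2 (show -a * r ≤ 0 by nlinarith)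
  exact (mul_le_of_le_one_left (fejer_nonneg hT _) this).trans (fejer_le_lor hT _)

theorem norm_tentDivHat_le_lor {a : ℝ} (ha : 0 < a) (hT : 0 < T) {w : ℝ} (hw : 0 ≤ w) :
    ‖tentDivHat a T w‖ ≤ 1 / a * lor T w := by
  rw [tentDivHat_eq ha hT, norm_neg]
  refine (norm_integral_le_integral_norm _).trans ?_
  have h1 : ∫ r in Ioi (0 : ℝ), Real.exp (-a * r) = 1 / a := by
    rw [integral_exp_mul_Ioi (by linarith)]
    simp
  rw [← h1, ← integral_mul_const]
  refine integral_mono_of_nonneg (Eventually.of_forall fun _ => norm_nonneg _)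
    ((integrableOn_exp_neg_mul ha).mul_const _) ?_
  refine (ae_restrict_iff' measurableSet_Ioi).2 (Eventually.of_forall fun r hr => ?_)
  have hr0 : 0 < r := hr
  simp only
  rw [Complex.norm_real, Real.norm_of_nonneg (mul_nonneg (Real.exp_pos _).le (fejer_nonneg hT _))]
  refine mul_le_mul_of_nonneg_left ((fejer_le_lor hT _).trans ?_) (Real.exp_pos _).le
  unfold lor
  gcongr
  linarith

theorem lor_le {w r : ℝ} (hT : 1 ≤ T) (hr : 0 < r) (h : r ≤ w) : lor T w ≤ 5 / r ^ 2 := by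
  have h2 : r ^ 2 ≤ w ^ 2 := by gcongr
  have : 0 < r ^ 2 := by positivity
  rw [lor, div_le_div_iff₀ (by positivity) (by positivity)]
  nlinarith [mul_le_mul_of_nonneg_left h2 (show 0 ≤ T by linarith),
    mul_le_mul_of_nonneg_left hT (show 0 ≤ T * w ^ 2 by positivity)]

end

section

variable {T a : ℝ}

theorem neg_add_mul_I_ne_zero (ha : 0 < a) (t : ℝ) : (-a + t * Complex.I : ℂ) ≠ 0 := fun h => by
  have := congrArg Complex.re h
  simp at this
  exact ha.ne' this

theorem le_norm_neg_add_mul_I (ha : 0 < a) (t : ℝ) : a ≤ ‖(-a + t * Complex.I : ℂ)‖ := by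
  have := Complex.abs_re_le_norm (-a + t * Complex.I : ℂ)
  simpa [abs_of_pos ha] using this

/-- The test function dual to `kern`. -/
noncomputable def testFun (a T v t : ℝ) : ℂ :=
  (tent T t : ℂ) * Complex.exp (t * v * Complex.I) / (-a + t * Complex.I)

theorem norm_testFun (a T v t : ℝ) : ‖testFun a T v t‖ = tent T t / ‖(-a + t * Complex.I : ℂ)‖ := by
  rw [testFun, norm_div, norm_mul, ← Complex.ofReal_mul, Complex.norm_exp_ofReal_mul_I,
    Complex.norm_real, Real.norm_of_nonneg (tent_nonneg _ _), mul_one]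

theorem continuous_testFun (ha : 0 < a) (T v : ℝ) : Continuous (testFun a T v) := by
  have := continuous_tent T
  unfold testFun
  exact Continuous.div (by fun_prop) (by fun_prop) (neg_add_mul_I_ne_zero ha)

theorem integrable_testFun (ha : 0 < a) (hT : 0 < T) (v : ℝ) : Integrable (testFun a T v) := by
  refine Integrable.mono' ((integrable_tent hT).mul_const (1 / a))
    (continuous_testFun ha T v).aestronglyMeasurable (Eventually.of_forall fun t => ?_)
  rw [norm_testFun, mul_one_div]
  exact div_le_div_of_nonneg_left (tent_nonneg _ _) ha (le_norm_neg_add_mul_I ha t)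

/-- The kernel on the side of the primes of the explicit formula. -/
noncomputable def kern (a T v u : ℝ) : ℂ :=
  (fejer T (u - v) - fejer T (u + v) - 2 * a * tentDivHat a T (u + v)) / 2

theorem re_mul_cexp (a t u : ℝ) :
    (((-a + t * Complex.I : ℂ) * Complex.exp (-(t * Complex.I) * u)).re : ℂ) =
      ((-a + t * Complex.I : ℂ) * Complex.exp (-(t * Complex.I) * u) +
        (-a - t * Complex.I : ℂ) * Complex.exp (t * Complex.I * u)) / 2 := by
  rw [Complex.re_eq_add_conj]
  simp [← Complex.exp_conj, sub_eq_add_neg]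

theorem integral_testFun_mul (ha : 0 < a) (hT : 0 < T) (v u : ℝ) :
    ∫ t : ℝ, testFun a T v t *
      (((-a + t * Complex.I : ℂ) * Complex.exp (-(t * Complex.I) * u)).re : ℂ) = kern a T v u := by
  have h : ∀ t : ℝ, testFun a T v t *
      (((-a + t * Complex.I : ℂ) * Complex.exp (-(t * Complex.I) * u)).re : ℂ) =
      ((tent T t : ℂ) * Complex.exp (t * ((-(u - v) : ℝ) : ℂ) * Complex.I) -
        (tent T t : ℂ) * Complex.exp (t * ((u + v : ℝ) : ℂ) * Complex.I) -
        2 * a * testFun a T (u + v) t) / 2 := fun t => by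
    have hw := neg_add_mul_I_ne_zero ha t
    have e1 : Complex.exp (t * ((-(u - v) : ℝ) : ℂ) * Complex.I) =
        Complex.exp (t * v * Complex.I) * Complex.exp (-(t * Complex.I) * u) := by
      rw [← Complex.exp_add]
      congr 1
      push_cast
      ring
    have e2 : Complex.exp (t * ((u + v : ℝ) : ℂ) * Complex.I) =
        Complex.exp (t * v * Complex.I) * Complex.exp (t * Complex.I * u) := by
      rw [← Complex.exp_add]
      congr 1
      push_cast
      ring
    rw [re_mul_cexp, testFun, testFun, e1, e2]
    generalize Complex.exp (t * v * Complex.I) = x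
    generalize Complex.exp (-(t * Complex.I) * u) = y
    generalize Complex.exp (t * Complex.I * u) = y'
    have h3 : (-a - t * Complex.I : ℂ) = -(-a + t * Complex.I) - 2 * a := by ring
    rw [h3]
    generalize (-a + t * Complex.I : ℂ) = w at *
    field_simp
    ring
  have i1 : ∀ w : ℝ, Integrable fun t : ℝ => (tent T t : ℂ) * Complex.exp (t * w * Complex.I) :=
      fun w => by
    have := continuous_tent T
    refine Integrable.mono' (integrable_tent hT) (Continuous.aestronglyMeasurable (by fun_prop))
      (Eventually.of_forall fun t => ?_)
    rw [norm_mul, ← Complex.ofReal_mul, Complex.norm_exp_ofReal_mul_I,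
      Complex.norm_real, Real.norm_of_nonneg (tent_nonneg _ _), mul_one]
  simp_rw [h]
  have i2 : Integrable fun t : ℝ =>
      (tent T t : ℂ) * Complex.exp (t * ((-(u - v) : ℝ) : ℂ) * Complex.I) -
        (tent T t : ℂ) * Complex.exp (t * ((u + v : ℝ) : ℂ) * Complex.I) := (i1 _).sub (i1 _)
  rw [integral_div, integral_sub i2 ((integrable_testFun ha hT _).const_mul _),
    integral_sub (i1 _) (i1 _), integral_tent_mul_cexp hT, integral_tent_mul_cexp hT,
    integral_const_mul, fejer_neg, kern]
  rfl

theorem integral_testFun_mul_FR {σ : ℝ} (hσ : σ < 1 / 2) (hT : 0 < T)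
    (hf : IntegrableOn (fun u => fR u * Real.exp (-σ * u)) (Ioi 0)) (v : ℝ) :
    ∫ t : ℝ, testFun (1 / 2 - σ) T v t *
        (((σ + t * Complex.I - 1 / 2 : ℂ) * FR (σ + t * Complex.I)).re : ℂ) =
      ∫ u in Ioi (0 : ℝ), ((fR u * Real.exp (-σ * u) : ℝ) : ℂ) * kern (1 / 2 - σ) T v u := by
  set a := 1 / 2 - σ with ha_def
  have ha : 0 < a := by linarith
  have h1 : ∀ t : ℝ, (((σ + t * Complex.I - 1 / 2 : ℂ) * FR (σ + t * Complex.I)).re : ℂ) =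
      ∫ u in Ioi (0 : ℝ), ((fR u * Real.exp (-σ * u) : ℝ) : ℂ) *
        (((-a + t * Complex.I : ℂ) * Complex.exp (-(t * Complex.I) * u)).re : ℂ) := fun t => by
    have hw : (σ + t * Complex.I - 1 / 2 : ℂ) = -a + t * Complex.I := by
      rw [ha_def]
      push_cast
      ring
    have hi : IntegrableOn (fun u : ℝ => (fR u : ℂ) *
        Complex.exp (-(σ + t * Complex.I) * u)) (Ioi 0) :=
      integrableOn_mul_cexp measurable_fR (by simpa using hf)
    rw [hw, FR, ← integral_const_mul]
    have h2 := Complex.reCLM.integral_comp_comm (hi.const_mul (-a + t * Complex.I : ℂ))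
    simp only [Complex.reCLM_apply] at h2
    rw [← h2, ← integral_complex_ofReal]
    refine integral_congr_ae (Eventually.of_forall fun u => ?_)
    simp only
    rw [← Complex.ofReal_mul]
    congr 1
    rw [← Complex.re_ofReal_mul]
    congr 1
    have : Complex.exp (-(σ + t * Complex.I) * u) =
        (Real.exp (-σ * u) : ℂ) * Complex.exp (-(t * Complex.I) * u) := by
      rw [Complex.ofReal_exp, ← Complex.exp_add]
      congr 1
      push_cast
      ring
    rw [this]
    push_cast
    ring
  simp_rw [h1, ← integral_const_mul]
  rw [integral_integral_swap]
  · refine integral_congr_ae (Eventually.of_forall fun u => ?_)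
    simp only
    rw [← integral_testFun_mul ha hT, ← integral_const_mul]
    refine integral_congr_ae (Eventually.of_forall fun t => ?_)
    simp only
    ring
  · refine Integrable.mono' ((integrable_tent hT).mul_prod hf.norm) ?_ ?_
    · refine Measurable.aestronglyMeasurable ?_
      have m1 : Measurable fun p : ℝ × ℝ => testFun a T v p.1 :=
        (continuous_testFun ha T v).measurable.comp measurable_fst
      have m2 : Measurable fun p : ℝ × ℝ => fR p.2 := measurable_fR.comp measurable_snd
      simp only [Function.uncurry_def]
      refine m1.mul (Measurable.mul (by fun_prop) ?_)
      fun_prop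
    · refine Eventually.of_forall fun p => ?_
      have hp := (ha.trans_le (le_norm_neg_add_mul_I ha p.1))
      simp only [Function.uncurry_def]
      rw [norm_mul, norm_mul, norm_testFun, Complex.norm_real, Complex.norm_real]
      have h3 : ‖((-a + p.1 * Complex.I : ℂ) * Complex.exp (-(p.1 * Complex.I) * p.2)).re‖ ≤
          ‖(-a + p.1 * Complex.I : ℂ)‖ := by
        refine (Complex.abs_re_le_norm _).trans ?_
        rw [norm_mul, norm_cexp_neg_mul]
        simp
      have h4 := tent_nonneg T p.1
      calc _ ≤ tent T p.1 / ‖(-a + p.1 * Complex.I : ℂ)‖ *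
            (‖fR p.2 * Real.exp (-σ * p.2)‖ * ‖(-a + p.1 * Complex.I : ℂ)‖) := by gcongr
        _ = _ := by
          field_simp

end

section

variable {T a η A σ v : ℝ}

theorem continuous_tentDivHat (ha : 0 < a) (hT : 0 < T) : Continuous (tentDivHat a T) := by
  refine continuous_of_dominated (F := fun w t => testFun a T w t) (bound := fun t => tent T t / a)
    (fun w => (continuous_testFun ha T w).aestronglyMeasurable) (fun w => ?_)
    ((integrable_tent hT).div_const a) ?_
  · refine Eventually.of_forall fun t => ?_
    rw [norm_testFun]
    exact div_le_div_of_nonneg_left (tent_nonneg _ _) ha (le_norm_neg_add_mul_I ha t)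
  · refine Eventually.of_forall fun t => ?_
    unfold testFun
    fun_prop

theorem continuous_kern (ha : 0 < a) (hT : 0 < T) (v : ℝ) : Continuous (kern a T v) := by
  have := continuous_tentDivHat ha hT
  have := continuous_fejer hT
  unfold kern
  fun_prop

theorem norm_kern_le (ha : 0 < a) (ha' : a ≤ 1 / 2) (hT : 0 < T) (v u : ℝ) :
    ‖kern a T v u‖ ≤ (lor T (u - v) + lor T (u + v) + ‖tentDivHat a T (u + v)‖) / 2 := by
  rw [kern, norm_div]
  simp only [Complex.norm_ofNat]
  have h1 : ∀ w, ‖(fejer T w : ℂ)‖ ≤ lor T w := fun w => by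
    rw [Complex.norm_real, Real.norm_of_nonneg (fejer_nonneg hT _)]
    exact fejer_le_lor hT w
  have h2 : ‖2 * (a : ℂ) * tentDivHat a T (u + v)‖ ≤ ‖tentDivHat a T (u + v)‖ := by
    rw [norm_mul, norm_mul, Complex.norm_real, Complex.norm_ofNat, Real.norm_of_nonneg ha.le]
    exact mul_le_of_le_one_left (norm_nonneg _) (by linarith)
  gcongr
  refine (norm_sub_le _ _).trans (add_le_add ((norm_sub_le _ _).trans (add_le_add (h1 _) (h1 _))) h2)

theorem lor_le_mul (hT : 0 < T) (w : ℝ) : lor T w ≤ 5 * T :=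
  div_le_self (by positivity) (by nlinarith [sq_nonneg (T * w)])

theorem integrableOn_fR_mul_kern (ha : 0 < a) (ha' : a ≤ 1 / 2) (hT : 0 < T)
    (hf : IntegrableOn (fun u => fR u * Real.exp (-σ * u)) (Ioi 0)) (v : ℝ) :
    IntegrableOn (fun u => ((fR u * Real.exp (-σ * u) : ℝ) : ℂ) * kern a T v u) (Ioi 0) := by
  refine Integrable.mul_bdd (c := (5 * T + 5 * T + 5 * Real.pi) / 2) hf.ofReal
    (continuous_kern ha hT v).aestronglyMeasurable (Eventually.of_forall fun u => ?_)
  refine (norm_kern_le ha ha' hT v u).trans ?_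
  have := lor_le_mul hT (u - v)
  have := lor_le_mul hT (u + v)
  have := norm_tentDivHat_le ha hT (u + v)
  linarith

theorem integrable_sqrt_abs_div : Integrable fun x : ℝ => √|x| * (1 + x ^ 2)⁻¹ := by
  have h := integrable_rpow_neg_one_add_norm_sq (E := ℝ) (μ := volume) (r := 3 / 2) (by norm_num)
  refine h.mono' (Continuous.aestronglyMeasurable (Continuous.mul (by fun_prop)
    (Continuous.inv₀ (by fun_prop) fun x => by positivity))) (Eventually.of_forall fun x => ?_)
  rw [Real.norm_of_nonneg (by positivity), Real.norm_eq_abs, sq_abs]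
  have h1 : √|x| ≤ (1 + x ^ 2) ^ (1 / 4 : ℝ) := by
    have : |x| ≤ (1 + x ^ 2) ^ (1 / 2 : ℝ) := by
      rw [← Real.sqrt_eq_rpow]
      exact Real.abs_le_sqrt (by linarith)
    calc √|x| ≤ √((1 + x ^ 2) ^ (1 / 2 : ℝ)) := Real.sqrt_le_sqrt this
      _ = _ := by
        rw [Real.sqrt_eq_rpow, ← Real.rpow_mul (by positivity)]
        norm_num
  calc √|x| * (1 + x ^ 2)⁻¹ ≤ (1 + x ^ 2) ^ (1 / 4 : ℝ) * (1 + x ^ 2)⁻¹ := by gcongr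
    _ = _ := by
      rw [← Real.rpow_neg_one (1 + x ^ 2), ← Real.rpow_add (by positivity)]
      norm_num

theorem sqrt_mul_lor_le (hT : 1 ≤ T) (w : ℝ) :
    √|w| * lor T w ≤ 5 * T * (√|T * w| * (1 + (T * w) ^ 2)⁻¹) := by
  have h : |w| ≤ |T * w| := by
    rw [abs_mul]
    exact le_mul_of_one_le_left (abs_nonneg w) (hT.trans (le_abs_self T))
  have := Real.sqrt_le_sqrt h
  calc √|w| * lor T w ≤ √|T * w| * lor T w :=
        mul_le_mul_of_nonneg_right this (lor_nonneg (by linarith) w)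
    _ = _ := by
      rw [lor]
      ring

theorem integrable_sqrt_mul_lor (hT : 1 ≤ T) : Integrable fun w => √|w| * lor T w := by
  have hT0 : 0 < T := by linarith
  refine ((integrable_sqrt_abs_div.comp_mul_left' hT0.ne').const_mul (5 * T)).mono' ?_
    (Eventually.of_forall fun w => ?_)
  · exact (Continuous.aestronglyMeasurable (by fun_prop)).mul (integrable_lor hT0).aestronglyMeasurable
  · rw [Real.norm_of_nonneg (mul_nonneg (Real.sqrt_nonneg _) (lor_nonneg hT0 w))]
    exact sqrt_mul_lor_le hT w

theorem integral_sqrt_mul_lor_le (hT : 1 ≤ T) :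
    ∫ w, √|w| * lor T w ≤ 5 * ∫ x : ℝ, √|x| * (1 + x ^ 2)⁻¹ := by
  have hT0 : 0 < T := by linarith
  refine (integral_mono (integrable_sqrt_mul_lor hT)
    ((integrable_sqrt_abs_div.comp_mul_left' hT0.ne').const_mul (5 * T))
    fun w => sqrt_mul_lor_le hT w).trans ?_
  rw [integral_const_mul, Measure.integral_comp_mul_left (fun x : ℝ => √|x| * (1 + x ^ 2)⁻¹) T,
    abs_of_pos (inv_pos.2 hT0), smul_eq_mul]
  refine le_of_eq ?_
  field_simp

end

section

variable {T η A σ v : ℝ}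

theorem exists_abs_fR_le (R : ℝ) : ∃ C, 0 ≤ C ∧ ∀ u, 0 < u → u ≤ R → |fR u| ≤ C := by
  refine ⟨Real.exp (R / 2) * (1 + R) ^ 2, by positivity, fun u hu huR => ?_⟩
  refine (abs_fR_le hu.le).trans ?_
  gcongr

/-- The side of the primes of the smoothed explicit formula. -/
noncomputable def primeSide (σ T v : ℝ) : ℂ :=
  ∫ u in Ioi (0 : ℝ), ((fR u * Real.exp (-σ * u) : ℝ) : ℂ) * kern (1 / 2 - σ) T v u

theorem exists_norm_primeSide_le (hη : η = 1 ∨ η = -1) (hA : 0 ≤ A)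
    (hle : ∀ u, 0 < u → η * fR u ≤ A + √u) :
    ∃ C, 0 ≤ C ∧ ∀ T, 1 ≤ T → ∀ σ, 0 < σ → σ ≤ 1 / 4 → ∀ v, |v| ≤ 1 → ‖primeSide σ T v‖ ≤ C := by
  obtain ⟨C₀, hC₀, hC₀'⟩ := exists_abs_fR_le 2
  have hI : IntegrableOn (fun u => |fR u| / (1 + u) ^ 2) (Ioi 0) := by
    refine (integrableOn_fR_div_sq hη hA hle).norm.congr (Eventually.of_forall fun u => ?_)
    simp
  set I := ∫ u in Ioi (0 : ℝ), |fR u| / (1 + u) ^ 2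
  set J := ∫ u in Ioi (0 : ℝ), ((1 + u) ^ 2)⁻¹
  have hI0 : 0 ≤ I := integral_nonneg fun u => by positivity
  have hJ0 : 0 ≤ J := integral_nonneg fun u => by positivity
  refine ⟨C₀ * (5 * Real.pi) + C₀ * (5 * Real.pi) + 80 * C₀ * J + 135 * I,
    by positivity, fun T hT σ hσ hσ' v hv => ?_⟩
  have hT0 : 0 < T := by linarith
  have ha : 0 < 1 / 2 - σ := by linarith
  have h1 : IntegrableOn (fun u => C₀ * lor T (u - v)) (Ioi 0) :=
    (((integrable_lor hT0).comp_sub_right v).const_mul C₀).integrableOn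
  have h2 : IntegrableOn (fun u => C₀ * lor T (u + v)) (Ioi 0) :=
    (((integrable_lor hT0).comp_add_right v).const_mul C₀).integrableOn
  have h3 : IntegrableOn (fun u : ℝ => 80 * C₀ * ((1 + u) ^ 2)⁻¹) (Ioi 0) :=
    integrableOn_inv_sq.const_mul _
  have h4 : IntegrableOn (fun u => 135 * (|fR u| / (1 + u) ^ 2)) (Ioi 0) := hI.const_mul _
  have e1 : ∫ u in Ioi (0 : ℝ), C₀ * lor T (u - v) ≤ C₀ * (5 * Real.pi) := by
    rw [integral_const_mul, ← integral_lor hT0, ← integral_sub_right_eq_self (lor T) v]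
    exact mul_le_mul_of_nonneg_left (setIntegral_le_integral ((integrable_lor hT0).comp_sub_right v)
      (Eventually.of_forall fun _ => lor_nonneg hT0 _)) hC₀
  have e2 : ∫ u in Ioi (0 : ℝ), C₀ * lor T (u + v) ≤ C₀ * (5 * Real.pi) := by
    rw [integral_const_mul, ← integral_lor hT0, ← integral_add_right_eq_self (lor T) v]
    exact mul_le_mul_of_nonneg_left (setIntegral_le_integral ((integrable_lor hT0).comp_add_right v)
      (Eventually.of_forall fun _ => lor_nonneg hT0 _)) hC₀
  have key : ‖primeSide σ T v‖ ≤ ∫ u in Ioi (0 : ℝ), (C₀ * lor T (u - v) + C₀ * lor T (u + v) +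
      80 * C₀ * ((1 + u) ^ 2)⁻¹ + 135 * (|fR u| / (1 + u) ^ 2)) := by
    refine (norm_integral_le_integral_norm _).trans ?_
    refine integral_mono_of_nonneg (Eventually.of_forall fun _ => norm_nonneg _)
      (((h1.add h2).add h3).add h4) ?_
    refine (ae_restrict_iff' measurableSet_Ioi).2 (Eventually.of_forall fun u hu => ?_)
    have hu0 : 0 < u := hu
    have hexp := Real.exp_le_one_iff.2 (show -σ * u ≤ 0 by nlinarith)
    have hk := norm_kern_le ha (by linarith) hT0 v u
    have l1 := lor_nonneg hT0 (u - v)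
    have l2 := lor_nonneg hT0 (u + v)
    simp only
    rw [norm_mul, Complex.norm_real, norm_mul, Real.norm_eq_abs,
        Real.norm_of_nonneg (Real.exp_pos _).le]
    have hb : |fR u| * Real.exp (-σ * u) * ‖kern (1 / 2 - σ) T v u‖ ≤
        |fR u| * ((lor T (u - v) + lor T (u + v) + ‖tentDivHat (1 / 2 - σ) T (u + v)‖) / 2) := by
      have := mul_le_of_le_one_right (abs_nonneg (fR u)) hexp
      gcongr
    refine hb.trans ?_
    rcases le_or_gt u 2 with h | h
    · have hd := norm_tentDivHat_le ha hT0 (u + v)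
      have hpi := Real.pi_lt_d2
      have hu9 : 1 ≤ 9 * ((1 + u) ^ 2)⁻¹ := by
        rw [← div_eq_mul_inv, one_le_div (by positivity)]
        nlinarith
      have h5 : (lor T (u - v) + lor T (u + v) + ‖tentDivHat (1 / 2 - σ) T (u + v)‖) / 2 ≤
          lor T (u - v) + lor T (u + v) + 80 * ((1 + u) ^ 2)⁻¹ := by linarith
      have h6 : 0 ≤ 135 * (|fR u| / (1 + u) ^ 2) := by positivity
      have h7 := mul_le_mul (hC₀' u hu0 h) h5 (by positivity) hC₀
      linarith
    · rw [abs_le] at hv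
      have hr : 0 < (1 + u) / 3 := by positivity
      have m1 := lor_le hT hr (show (1 + u) / 3 ≤ u - v by linarith)
      have m2 := lor_le hT hr (show (1 + u) / 3 ≤ u + v by linarith)
      have hd := norm_tentDivHat_le_lor ha hT0 (show 0 ≤ u + v by linarith)
      have ha4 : 1 / (1 / 2 - σ) ≤ 4 := by
        rw [div_le_iff₀ ha]
        linarith
      have hd' := hd.trans (mul_le_mul_of_nonneg_right ha4 l2)
      have h5 : (lor T (u - v) + lor T (u + v) + ‖tentDivHat (1 / 2 - σ) T (u + v)‖) / 2 ≤
          135 * (1 / (1 + u) ^ 2) := by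
        have : 5 / ((1 + u) / 3) ^ 2 = 45 * (1 / (1 + u) ^ 2) := by
          field_simp
          norm_num
        linarith
      have h6 := mul_le_mul_of_nonneg_left h5 (abs_nonneg (fR u))
      have h7 : 0 ≤ 80 * C₀ * ((1 + u) ^ 2)⁻¹ := by positivity
      have h8 := mul_nonneg hC₀ l1
      have h9 := mul_nonneg hC₀ l2
      rw [mul_left_comm, mul_one_div] at h6
      linarith
  refine key.trans ?_
  have h12 : IntegrableOn (fun u => C₀ * lor T (u - v) + C₀ * lor T (u + v)) (Ioi 0) := h1.add h2
  have h123 : IntegrableOn (fun u => C₀ * lor T (u - v) + C₀ * lor T (u + v) +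
      80 * C₀ * ((1 + u) ^ 2)⁻¹) (Ioi 0) := h12.add h3
  rw [integral_add h123 h4, integral_add h12 h3, integral_add h1 h2,
    integral_const_mul (80 * C₀), integral_const_mul 135]
  linarith

theorem exists_re_primeSide_le (hη : η = 1 ∨ η = -1) (hA : 0 ≤ A)
    (hle : ∀ u, 0 < u → η * fR u ≤ A + √u) :
    ∃ C, 0 ≤ C ∧ ∀ T, 1 ≤ T → ∀ σ, 0 < σ → σ ≤ 1 / 4 → ∀ v, 1 ≤ v → ∀ L, 0 ≤ L →
      (∀ u, 0 < u → η * fR u ≤ L + √|u - v|) → η * (primeSide σ T v).re ≤ 8 * L + C := by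
  have hI : IntegrableOn (fun u => |fR u| / (1 + u) ^ 2) (Ioi 0) := by
    refine (integrableOn_fR_div_sq hη hA hle).norm.congr (Eventually.of_forall fun u => ?_)
    simp
  set I := ∫ u in Ioi (0 : ℝ), |fR u| / (1 + u) ^ 2
  set J := ∫ x : ℝ, √|x| * (1 + x ^ 2)⁻¹
  have hI0 : 0 ≤ I := integral_nonneg fun u => by positivity
  have hJ0 : 0 ≤ J := integral_nonneg fun u => by positivity
  refine ⟨5 * J + 13 * I, by positivity, fun T hT σ hσ hσ' v hv L hL hfL => ?_⟩
  have hT0 : 0 < T := by linarith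
  have ha : 0 < 1 / 2 - σ := by linarith
  have hint := integrableOn_fR_mul_kern ha (by linarith) hT0 (integrableOn_fR_of_le hη hA hle hσ) v
  have hre := Complex.reCLM.integral_comp_comm hint
  simp only [Complex.reCLM_apply] at hre
  rw [primeSide, ← hre, ← integral_const_mul]
  have h1 : Integrable (fun u => L / 2 * lor T (u - v)) :=
    ((integrable_lor hT0).comp_sub_right v).const_mul _
  have h2 : Integrable (fun u => √|u - v| * lor T (u - v)) :=
    (integrable_sqrt_mul_lor hT).comp_sub_right v
  have h4 : IntegrableOn (fun u => 13 * (|fR u| / (1 + u) ^ 2)) (Ioi 0) := hI.const_mul _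
  have e1 : ∫ u in Ioi (0 : ℝ), L / 2 * lor T (u - v) ≤ L / 2 * (5 * Real.pi) := by
    rw [integral_const_mul, ← integral_lor hT0, ← integral_sub_right_eq_self (lor T) v]
    exact mul_le_mul_of_nonneg_left (setIntegral_le_integral ((integrable_lor hT0).comp_sub_right v)
      (Eventually.of_forall fun _ => lor_nonneg hT0 _)) (by positivity)
  have e2 : ∫ u in Ioi (0 : ℝ), √|u - v| * lor T (u - v) ≤ 5 * J := by
    refine (setIntegral_le_integral h2 (Eventually.of_forall fun _ =>
      mul_nonneg (Real.sqrt_nonneg _) (lor_nonneg hT0 _))).trans ?_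
    rw [integral_sub_right_eq_self (fun w => √|w| * lor T w) v]
    exact integral_sqrt_mul_lor_le hT
  have key : ∫ u in Ioi (0 : ℝ),
      η * (((fR u * Real.exp (-σ * u) : ℝ) : ℂ) * kern (1 / 2 - σ) T v u).re ≤
      ∫ u in Ioi (0 : ℝ), (L / 2 * lor T (u - v) + √|u - v| * lor T (u - v) +
        13 * (|fR u| / (1 + u) ^ 2)) := by
    refine setIntegral_mono_on (hint.re.const_mul η)
      ((h1.integrableOn.add h2.integrableOn).add h4) measurableSet_Ioi fun u hu => ?_
    have hu0 : 0 < u := hu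
    have hexp := Real.exp_le_one_iff.2 (show -σ * u ≤ 0 by nlinarith)
    have hexp0 := Real.exp_pos (-σ * u)
    have l1 := lor_nonneg hT0 (u - v)
    have l2 := lor_nonneg hT0 (u + v)
    have hf1 := fejer_le_lor hT0 (u - v)
    have hf0 := fejer_nonneg hT0 (u - v)
    have hf2 := fejer_le_lor hT0 (u + v)
    have hf3 := fejer_nonneg hT0 (u + v)
    have hd := norm_tentDivHat_le_lor ha hT0 (show 0 ≤ u + v by linarith)
    have ha4 : 1 / (1 / 2 - σ) ≤ 4 := by
      rw [div_le_iff₀ ha]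
      linarith
    have hd' := (Complex.abs_re_le_norm _).trans (hd.trans (mul_le_mul_of_nonneg_right ha4 l2))
    have hl := lor_le hT (show 0 < 1 + u by linarith) (show 1 + u ≤ u + v by linarith)
    rw [Complex.re_ofReal_mul]
    have hk : (kern (1 / 2 - σ) T v u).re = (fejer T (u - v) - fejer T (u + v) -
        2 * (1 / 2 - σ) * (tentDivHat (1 / 2 - σ) T (u + v)).re) / 2 := by
      have : kern (1 / 2 - σ) T v u = ((1 / 2 : ℝ) : ℂ) * (fejer T (u - v) - fejer T (u + v) -
          ((2 * (1 / 2 - σ) : ℝ) : ℂ) * tentDivHat (1 / 2 - σ) T (u + v)) := by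
        rw [kern]
        push_cast
        ring
      rw [this, Complex.re_ofReal_mul, Complex.sub_re, Complex.sub_re, Complex.re_ofReal_mul,
        Complex.ofReal_re, Complex.ofReal_re]
      ring
    rw [hk]
    set d := (tentDivHat (1 / 2 - σ) T (u + v)).re
    have h5 : η * (fR u * Real.exp (-σ * u) * ((fejer T (u - v) - fejer T (u + v) -
        2 * (1 / 2 - σ) * d) / 2)) =
        (η * fR u) * (Real.exp (-σ * u) * fejer T (u - v)) / 2 +
        η * fR u * Real.exp (-σ * u) * ((-fejer T (u + v) - 2 * (1 / 2 - σ) * d) / 2) := by ring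
    rw [h5]
    have h6 : (η * fR u) * (Real.exp (-σ * u) * fejer T (u - v)) ≤
        (L + √|u - v|) * lor T (u - v) := by
      refine mul_le_mul (hfL u hu0) ?_ (by positivity) (by positivity)
      exact (mul_le_of_le_one_left hf0 hexp).trans hf1
    have h7 : η * fR u * Real.exp (-σ * u) * ((-fejer T (u + v) - 2 * (1 / 2 - σ) * d) / 2) ≤
        |fR u| * (13 * (1 / (1 + u) ^ 2)) := by
      refine (le_abs_self _).trans ?_
      rw [abs_mul, abs_mul, abs_mul]
      have hη1 : |η| = 1 := by rcases hη with h | h <;> simp [h]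
      rw [hη1, one_mul, abs_of_pos hexp0]
      have h8 : |(-fejer T (u + v) - 2 * (1 / 2 - σ) * d) / 2| ≤ 13 * (1 / (1 + u) ^ 2) := by
        have h9 : |2 * (1 / 2 - σ) * d| ≤ |d| := by
          rw [abs_mul, abs_of_nonneg (by linarith)]
          exact mul_le_of_le_one_left (abs_nonneg d) (by linarith)
        have h10 : 5 / (1 + u) ^ 2 = 5 * (1 / (1 + u) ^ 2) := by ring
        have h11 : 0 ≤ 1 / (1 + u) ^ 2 := by positivity
        have := abs_le.1 (h9.trans hd')
        rw [abs_le]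
        constructor <;> linarith
      exact mul_le_mul (mul_le_of_le_one_right (abs_nonneg _) hexp) h8 (abs_nonneg _) (abs_nonneg _)
    rw [mul_left_comm, mul_one_div] at h7
    have h12 : 0 ≤ √|u - v| * lor T (u - v) := by positivity
    linarith
  refine key.trans ?_
  have h12 : IntegrableOn (fun u => L / 2 * lor T (u - v) + √|u - v| * lor T (u - v)) (Ioi 0) :=
    h1.integrableOn.add h2.integrableOn
  rw [integral_add h12 h4,
    integral_add h1.integrableOn h2.integrableOn, integral_const_mul 13]
  have := Real.pi_lt_d2
  nlinarith

end

section

variable {T η A σ v : ℝ}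

/-- The archimedean side of the smoothed explicit formula. -/
noncomputable def gammaSide (T v : ℝ) : ℂ := ∫ t : ℝ, testFun (1 / 2) T v t * (Bre t : ℂ)

/-- The side of the zeros of the smoothed explicit formula. -/
noncomputable def zeroSum (S : Finset ℝ) (m : ℝ → ℕ) (T v : ℝ) : ℂ :=
  ∑ γ ∈ S, m γ * testFun (1 / 2) T v γ

theorem testFun_of_le {t : ℝ} (hT : 0 < T) (ht : T ≤ |t|) (a v : ℝ) : testFun a T v t = 0 := by
  rw [testFun, tent_of_le hT ht]
  simp

theorem hasCompactSupport_of_le {f : ℝ → ℂ} (h : ∀ t, T ≤ |t| → f t = 0) : HasCompactSupport f := by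
  refine HasCompactSupport.of_support_subset_isCompact (isCompact_Icc (a := -T) (b := T)) ?_
  intro t ht
  by_contra hn
  rw [mem_Icc, ← abs_le, not_le] at hn
  exact ht (h t hn.le)

theorem measurable_testFun (a T v : ℝ) : Measurable (testFun a T v) := by
  have := (continuous_tent T).measurable
  unfold testFun
  exact Measurable.div (by fun_prop) (by fun_prop)

theorem continuousAt_testFun (T v t : ℝ) :
    ContinuousAt (Function.uncurry fun σ t => testFun (1 / 2 - σ) T v t) (0, t) := by
  have := continuous_tent T
  simp only [testFun, Function.uncurry_def]
  refine ContinuousAt.div (by fun_prop) (by fun_prop) ?_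
  simpa using neg_add_mul_I_ne_zero (show (0 : ℝ) < 1 / 2 by norm_num) t

theorem norm_testFun_le (hσ : σ ≤ 1 / 4) (T v t : ℝ) :
    ‖testFun (1 / 2 - σ) T v t‖ ≤ 4 * tent T t := by
  have h := le_norm_neg_add_mul_I (show 0 < 1 / 2 - σ by linarith) t
  rw [norm_testFun, div_le_iff₀ (by linarith)]
  nlinarith [tent_nonneg T t]

theorem continuous_Bfun_line (hσ : 0 ≤ σ) : Continuous fun t : ℝ => Bfun (σ + t * Complex.I) := by
  have h : MapsTo (fun t : ℝ => (σ + t * Complex.I : ℂ)) univ {z | 0 ≤ z.re} := fun t _ => by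
    simpa using hσ
  exact continuousOn_univ.1 (continuousOn_Bfun.comp (Continuous.continuousOn (by fun_prop)) h)

theorem integral_testFun_mul_logDeriv (hη : η = 1 ∨ η = -1) (hA : 0 ≤ A)
    (hle : ∀ u, 0 < u → η * fR u ≤ A + √u) (hT : 0 < T) (hσ : 0 < σ) (hσ' : σ ≤ 1 / 4) (v : ℝ) :
    ∫ t : ℝ, testFun (1 / 2 - σ) T v t * ((logDeriv Xi (σ + t * Complex.I)).re : ℂ) =
      (∫ t : ℝ, testFun (1 / 2 - σ) T v t * ((Bfun (σ + t * Complex.I)).re : ℂ)) -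
        primeSide σ T v := by
  have ha : 0 < 1 / 2 - σ := by linarith
  have hc := continuous_testFun ha T v
  rw [primeSide, ← integral_testFun_mul_FR (by linarith) hT (integrableOn_fR_of_le hη hA hle hσ),
    ← integral_sub]
  · refine integral_congr_ae (Eventually.of_forall fun t => ?_)
    simp only
    rw [logDeriv_Xi hη hA hle (by simpa using hσ) (by simp; linarith), Complex.sub_re]
    push_cast
    ring
  · have hB := continuous_Bfun_line hσ.le
    refine Continuous.integrable_of_hasCompactSupport ?_
      (hasCompactSupport_of_le (T := T) fun t ht => by rw [testFun_of_le hT ht, zero_mul])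
    exact hc.mul (Complex.continuous_ofReal.comp (Complex.continuous_re.comp hB))
  · have : Continuous fun t : ℝ => FR (σ + t * Complex.I) := continuous_iff_continuousAt.2 fun t =>
      ContinuousAt.comp (f := fun t : ℝ => (σ + t * Complex.I : ℂ)) (g := FR)
        (analyticAt_FR hη hA hle (by simpa using hσ)).continuousAt (by fun_prop)
    refine Continuous.integrable_of_hasCompactSupport ?_
      (hasCompactSupport_of_le (T := T) fun t ht => by rw [testFun_of_le hT ht, zero_mul])
    fun_prop

theorem tendsto_gammaSide (hT : 0 < T) (v : ℝ) :
    Tendsto (fun σ : ℝ => ∫ t : ℝ, testFun (1 / 2 - σ) T v t * ((Bfun (σ + t * Complex.I)).re : ℂ))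
      (𝓝[>] 0) (𝓝 (gammaSide T v)) := by
  refine tendsto_integral_filter_of_dominated_convergence
    (fun t => 4 * (tent T t * (|Bre t| + 1))) ?_ ?_ ?_ ?_
  · filter_upwards [Ioc_mem_nhdsGT (show (0 : ℝ) < 1 / 4 by norm_num)] with σ hσ
    exact ((continuous_testFun (show 0 < 1 / 2 - σ by linarith [hσ.2]) T v).mul
      (Complex.continuous_ofReal.comp (Complex.continuous_re.comp
        (continuous_Bfun_line hσ.1.le)))).aestronglyMeasurable
  · filter_upwards [Ioc_mem_nhdsGT (show (0 : ℝ) < 1 / 4 by norm_num)] with σ hσ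
    refine Eventually.of_forall fun t => ?_
    have h1 : |(Bfun (σ + t * Complex.I)).re| ≤ |Bre t| + 1 := by
      have h2 := norm_Bfun_sub_le (z := σ + t * Complex.I) (w := t * Complex.I)
        (by simpa using hσ.1.le) (by simp)
      have h3 := (Complex.abs_re_le_norm _).trans h2
      rw [Complex.sub_re, add_sub_cancel_right, Complex.norm_real,
          Real.norm_of_nonneg hσ.1.le] at h3
      have h4 := abs_sub_abs_le_abs_sub (Bfun (σ + t * Complex.I)).re (Bre t)
      rw [Bre] at h4 ⊢
      linarith [hσ.2]
    rw [norm_mul, Complex.norm_real, ← mul_assoc]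
    have := tent_nonneg T t
    exact mul_le_mul (norm_testFun_le hσ.2 T v t) h1 (norm_nonneg _) (by positivity)
  · have h1 := continuous_tent T
    have h2 := continuous_Bre
    refine ((Continuous.integrable_of_hasCompactSupport (f := fun t => tent T t * (|Bre t| + 1))
      (by fun_prop) ?_).const_mul 4)
    refine HasCompactSupport.of_support_subset_isCompact (isCompact_Icc (a := -T) (b := T)) ?_
    intro t ht
    by_contra hn
    rw [mem_Icc, ← abs_le, not_le] at hn
    exact ht (by simp only [tent_of_le hT hn.le, zero_mul])
  · refine Eventually.of_forall fun t => ?_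
    have h1 : Tendsto (fun σ => testFun (1 / 2 - σ) T v t)
        (𝓝[>] 0) (𝓝 (testFun (1 / 2) T v t)) := by
      have := (continuousAt_testFun T v t).comp (f := fun σ : ℝ => (σ, t)) (x := 0) (by fun_prop)
      have h := this.tendsto.mono_left (nhdsWithin_le_nhds (s := Ioi 0))
      simpa [Function.comp_def, Function.uncurry_def] using h
    have h2 : Tendsto (fun σ : ℝ => Bfun (σ + t * Complex.I))
        (𝓝[>] 0) (𝓝 (Bfun (t * Complex.I))) := by
      have h3 := continuousOn_Bfun.continuousWithinAt (x := t * Complex.I) (by simp)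
      refine h3.tendsto.comp (tendsto_nhdsWithin_iff.2 ⟨?_, ?_⟩)
      · have : ContinuousAt (fun σ : ℝ => (σ + t * Complex.I : ℂ)) 0 := by fun_prop
        have h := this.tendsto.mono_left (nhdsWithin_le_nhds (s := Ioi 0))
        simpa using h
      · filter_upwards [self_mem_nhdsWithin] with σ hσ
        have : 0 < σ := hσ
        simpa using this.le
    have h4 := (Complex.continuous_re.tendsto _).comp h2
    exact h1.mul ((Complex.continuous_ofReal.tendsto _).comp h4)

theorem explicit_formula (hη : η = 1 ∨ η = -1) (hA : 0 ≤ A)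
    (hle : ∀ u, 0 < u → η * fR u ≤ A + √u) :
    ∃ C, 0 ≤ C ∧ ∀ R, ∃ (S : Finset ℝ) (m : ℝ → ℕ), (∀ γ ∈ S, 1 ≤ m γ) ∧ ∀ T, 1 ≤ T → T ≤ R →
      (∀ v, |v| ≤ 1 → ‖gammaSide T v - Real.pi * zeroSum S m T v‖ ≤ C) ∧
      (∀ v, 1 ≤ v → ∀ L, 0 ≤ L → (∀ u, 0 < u → η * fR u ≤ L + √|u - v|) →
        η * (gammaSide T v - Real.pi * zeroSum S m T v).re ≤ 8 * L + C) := by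
  obtain ⟨C₁, h₁, hC₁⟩ := exists_norm_primeSide_le hη hA hle
  obtain ⟨C₂, h₂, hC₂⟩ := exists_re_primeSide_le hη hA hle
  refine ⟨C₁ + C₂, by positivity, fun R => ?_⟩
  obtain ⟨S, m, hm, hS⟩ := exists_zeros_tendsto differentiable_Xi
    ⟨1 / 2, by rw [Xi_half]; exact one_ne_zero⟩
    (fun z hz => Xi_zero_re hη hA hle hz) re_logDeriv_Xi R
  refine ⟨S, m, hm, fun T hT hTR => ?_⟩
  have hT0 : 0 < T := by linarith
  have hev := Ioc_mem_nhdsGT (show (0 : ℝ) < 1 / 4 by norm_num)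
  have hlim : ∀ v, Tendsto (fun σ => primeSide σ T v) (𝓝[>] 0)
      (𝓝 (gammaSide T v - Real.pi * zeroSum S m T v)) := fun v => by
    have h := hS (fun σ t => testFun (1 / 2 - σ) T v t) 4 (fun σ => measurable_testFun _ _ _)
      (continuousAt_testFun T v) ?_ (fun σ t ht => testFun_of_le hT0 (hTR.trans ht.le) _ _)
    · simp only [sub_zero] at h
      refine ((tendsto_gammaSide hT0 v).sub h).congr' ?_
      filter_upwards [hev] with σ hσ
      rw [integral_testFun_mul_logDeriv hη hA hle hT0 hσ.1 hσ.2, sub_sub_cancel]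
    · filter_upwards [hev] with σ hσ t
      refine (norm_testFun_le hσ.2 T v t).trans ?_
      linarith [tent_le_one hT0 t]
  refine ⟨fun v hv => ?_, fun v hv L hL hfL => ?_⟩
  · refine (le_of_tendsto (hlim v).norm ?_).trans (show C₁ ≤ C₁ + C₂ by linarith)
    filter_upwards [hev] with σ hσ
    exact hC₁ T hT σ hσ.1 hσ.2 v hv
  · refine (le_of_tendsto (((Complex.continuous_re.tendsto _).comp (hlim v)).const_mul η) ?_).trans
      (show 8 * L + C₂ ≤ 8 * L + (C₁ + C₂) by linarith)
    filter_upwards [hev] with σ hσ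
    exact hC₂ T hT σ hσ.1 hσ.2 v hv L hL hfL

end

section

variable {T v : ℝ}

theorem re_testFun (T v t : ℝ) : (testFun (1 / 2) T v t).re =
    tent T t * (t * Real.sin (t * v) - Real.cos (t * v) / 2) / (1 / 4 + t ^ 2) := by
  have hw := neg_add_mul_I_ne_zero (show (0 : ℝ) < 1 / 2 by norm_num) t
  have hp : (0 : ℝ) < 1 / 4 + t ^ 2 := by positivity
  have h : testFun (1 / 2) T v t = ((tent T t / (1 / 4 + t ^ 2) : ℝ) : ℂ) *
      ((Real.cos (t * v) + Real.sin (t * v) * Complex.I) * (-1 / 2 - t * Complex.I)) := by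
    have hp' : (1 / 4 + t ^ 2 : ℂ) ≠ 0 := fun h0 => hp.ne' (by
      apply Complex.ofReal_injective
      push_cast
      exact h0)
    have he : (1 / 4 + t ^ 2 : ℂ) = (-(1 / 2 : ℝ) + t * Complex.I) * (-1 / 2 - t * Complex.I) := by
      push_cast
      ring_nf
      rw [Complex.I_sq]
      ring
    have h2 : (-1 / 2 - t * Complex.I : ℂ) ≠ 0 := fun h0 => hp' (by rw [he, h0, mul_zero])
    rw [testFun, ← Complex.ofReal_mul, Complex.exp_mul_I]
    push_cast at he hw ⊢
    rw [he]
    generalize (-(1 / 2) + t * Complex.I : ℂ) = p at hw ⊢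
    generalize (-1 / 2 - t * Complex.I : ℂ) = q at h2 ⊢
    field_simp
  rw [h, Complex.re_ofReal_mul]
  generalize Real.cos (t * v) = c
  generalize Real.sin (t * v) = s
  simp
  ring

theorem integrable_Bre_div : Integrable fun t => Bre t / (1 / 4 + t ^ 2) := by
  obtain ⟨C, hC, h⟩ := exists_abs_Bre_le
  have h1 : Integrable fun t : ℝ => 4 * C * ((1 + t ^ 2)⁻¹ + √|t| * (1 + t ^ 2)⁻¹) :=
    (integrable_inv_one_add_sq.add integrable_sqrt_abs_div).const_mul _
  refine h1.mono' (Continuous.aestronglyMeasurable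
    (continuous_Bre.div (by fun_prop) fun t => by positivity)) (Eventually.of_forall fun t => ?_)
  have hp : (0 : ℝ) < 1 / 4 + t ^ 2 := by positivity
  rw [norm_div, Real.norm_of_nonneg hp.le, Real.norm_eq_abs, ← one_add_mul, ← div_eq_mul_inv,
    mul_div_assoc']
  rw [div_le_div_iff₀ hp (by positivity)]
  have h2 : 0 ≤ C * (1 + √|t|) := by positivity
  calc |Bre t| * (1 + t ^ 2) ≤ C * (1 + √|t|) * (4 * (1 / 4 + t ^ 2)) := by
        gcongr
        · exact h t
        · nlinarith [sq_nonneg t]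
    _ = _ := by ring

theorem integrable_testFun_mul_Bre (hT : 0 < T) (v : ℝ) :
    Integrable fun t => testFun (1 / 2) T v t * (Bre t : ℂ) := by
  have h1 := continuous_testFun (show (0 : ℝ) < 1 / 2 by norm_num) T v
  have h2 := continuous_Bre
  refine Continuous.integrable_of_hasCompactSupport (by fun_prop)
    (hasCompactSupport_of_le (T := T) fun t ht => by rw [testFun_of_le hT ht, zero_mul])

theorem re_gammaSide (hT : 0 < T) (v : ℝ) :
    (gammaSide T v).re = ∫ t, tent T t * (t * Real.sin (t * v) - Real.cos (t * v) / 2) *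
      (Bre t / (1 / 4 + t ^ 2)) := by
  have h := Complex.reCLM.integral_comp_comm (integrable_testFun_mul_Bre hT v)
  simp only [Complex.reCLM_apply] at h
  rw [gammaSide, ← h]
  refine integral_congr_ae (Eventually.of_forall fun t => ?_)
  simp only
  rw [mul_comm, Complex.re_ofReal_mul, re_testFun]
  ring

theorem re_gammaSide_zero_le (hT : 0 < T) :
    |(gammaSide T 0).re| ≤ ∫ t, |Bre t / (1 / 4 + t ^ 2)| := by
  rw [re_gammaSide hT]
  refine (abs_integral_le_integral_abs).trans ?_
  refine integral_mono_of_nonneg (Eventually.of_forall fun _ => abs_nonneg _)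
    integrable_Bre_div.abs (Eventually.of_forall fun t => ?_)
  simp only [mul_zero, Real.sin_zero, Real.cos_zero]
  rw [abs_mul]
  refine mul_le_of_le_one_left (abs_nonneg _) ?_
  rw [abs_mul, abs_of_nonneg (tent_nonneg T t)]
  have := tent_le_one hT t
  have := tent_nonneg T t
  norm_num
  linarith

/-- The weighted number of zeros is bounded, uniformly in the height. -/
theorem exists_sum_zeros_le {η A : ℝ} (hη : η = 1 ∨ η = -1) (hA : 0 ≤ A)
    (hle : ∀ u, 0 < u → η * fR u ≤ A + √u) :
    ∃ C, 0 ≤ C ∧ ∀ T, 1 ≤ T → ∃ (S : Finset ℝ) (m : ℝ → ℕ),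
      (∑ γ ∈ S with |γ| ≤ T, m γ / (1 / 4 + γ ^ 2) ≤ C) ∧
      ((S.filter fun γ => |γ| ≤ T).card ≤ C * T ^ 2) ∧
      (∀ v, |v| ≤ 1 → ‖gammaSide T v - Real.pi * zeroSum S m T v‖ ≤ C) ∧
      (∀ v, 1 ≤ v → ∀ L, 0 ≤ L → (∀ u, 0 < u → η * fR u ≤ L + √|u - v|) →
        η * (gammaSide T v - Real.pi * zeroSum S m T v).re ≤ 8 * L + C) := by
  obtain ⟨C, hC, h⟩ := explicit_formula hη hA hle
  set K := ∫ t, |Bre t / (1 / 4 + t ^ 2)|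
  have hK : 0 ≤ K := integral_nonneg fun t => abs_nonneg _
  refine ⟨8 * (C + K), by positivity, fun T hT => ?_⟩
  have hT0 : 0 < T := by linarith
  obtain ⟨S, m, hm, hS⟩ := h (2 * T)
  have h0 := (hS (2 * T) (by linarith) le_rfl).1 0 (by simp)
  have h1 := re_gammaSide_zero_le (show 0 < 2 * T by linarith)
  have h2 : (zeroSum S m (2 * T) 0).re =
      -(∑ γ ∈ S, m γ * (tent (2 * T) γ / (1 / 4 + γ ^ 2))) / 2 := by
    rw [zeroSum, Complex.re_sum, neg_div, Finset.sum_div, ← Finset.sum_neg_distrib]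
    refine Finset.sum_congr rfl fun γ _ => ?_
    rw [← Complex.ofReal_natCast, Complex.re_ofReal_mul, re_testFun]
    simp only [mul_zero, Real.sin_zero, Real.cos_zero]
    ring
  have h3 : ∑ γ ∈ S, m γ * (tent (2 * T) γ / (1 / 4 + γ ^ 2)) ≤ C + K := by
    have h4 := (Complex.abs_re_le_norm _).trans h0
    rw [Complex.sub_re, Complex.re_ofReal_mul, h2] at h4
    have h5 := abs_le.1 h4
    have h6 := abs_le.1 h1
    have h7 : 0 ≤ ∑ γ ∈ S, m γ * (tent (2 * T) γ / (1 / 4 + γ ^ 2)) :=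
      Finset.sum_nonneg fun γ _ => mul_nonneg (Nat.cast_nonneg _)
        (div_nonneg (tent_nonneg _ _) (by positivity))
    have := Real.pi_gt_three
    nlinarith
  have h8 : ∑ γ ∈ S with |γ| ≤ T, m γ / (1 / 4 + γ ^ 2) ≤ 2 * (C + K) := by
    refine le_trans ?_ (mul_le_mul_of_nonneg_left h3 zero_le_two)
    rw [Finset.mul_sum]
    refine le_trans ?_ (Finset.sum_le_sum_of_subset_of_nonneg
      (Finset.filter_subset (fun γ => |γ| ≤ T) S) fun γ _ _ => ?_)
    · refine Finset.sum_le_sum fun γ hγ => ?_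
      have hγT : |γ| ≤ T := (Finset.mem_filter.1 hγ).2
      have ht : 1 / 2 ≤ tent (2 * T) γ := by
        rw [tent_of_abs_le (by linarith) (by linarith)]
        have : |γ| / (2 * T) ≤ 1 / 2 := by
          rw [div_le_div_iff₀ (by linarith) (by norm_num)]
          linarith
        linarith
      have : (0 : ℝ) ≤ m γ / (1 / 4 + γ ^ 2) := by positivity
      calc (m γ : ℝ) / (1 / 4 + γ ^ 2) ≤
            2 * tent (2 * T) γ * (m γ / (1 / 4 + γ ^ 2)) := by nlinarith
        _ = _ := by ring
    · exact mul_nonneg zero_le_two (mul_nonneg (Nat.cast_nonneg _)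
        (div_nonneg (tent_nonneg _ _) (by positivity)))
  refine ⟨S, m, by linarith, ?_, fun v hv => ?_, fun v hv L hL hf => ?_⟩
  · have h9 : ∑ γ ∈ S with |γ| ≤ T, 1 / (1 / 4 + T ^ 2) ≤
        ∑ γ ∈ S with |γ| ≤ T, m γ / (1 / 4 + γ ^ 2) := by
      refine Finset.sum_le_sum fun γ hγ => ?_
      have hγT := Finset.mem_filter.1 hγ
      have : γ ^ 2 ≤ T ^ 2 := sq_le_sq.2 (by rw [abs_of_pos hT0]; exact hγT.2)
      have : (1 : ℝ) ≤ m γ := by exact_mod_cast hm γ hγT.1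
      gcongr
    rw [Finset.sum_const, nsmul_eq_mul, mul_one_div] at h9
    have h10 := h9.trans h8
    rw [div_le_iff₀ (by positivity)] at h10
    have : 1 ≤ T ^ 2 := one_le_pow₀ hT
    refine h10.trans ?_
    nlinarith
  · exact ((hS T hT (by linarith)).1 v hv).trans (by linarith)
  · exact ((hS T hT (by linarith)).2 v hv L hL hf).trans (by linarith)

end

section

variable {T v : ℝ}

theorem mul_sin_div_nonneg {t : ℝ} (hT : 0 < T) (ht : |t| ≤ T) : 0 ≤ t * Real.sin (t / T) := by
  have hpi := Real.pi_gt_three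
  rcases le_total 0 t with h | h
  · rw [abs_of_nonneg h] at ht
    have h1 : t / T ≤ 1 := (div_le_one hT).2 ht
    exact mul_nonneg h (Real.sin_nonneg_of_nonneg_of_le_pi (by positivity) (by linarith))
  · rw [abs_of_nonpos h] at ht
    have h1 : -t / T ≤ 1 := (div_le_one hT).2 ht
    have h2 := Real.sin_nonneg_of_nonneg_of_le_pi (x := -t / T)
      (div_nonneg (by linarith) hT.le) (by linarith)
    rw [neg_div, Real.sin_neg] at h2
    nlinarith

theorem mul_sin_div_le {t : ℝ} (hT : 0 < T) : t * Real.sin (t / T) ≤ t ^ 2 / T := by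
  have h := Real.abs_sin_le_abs (x := t / T)
  rw [abs_div, abs_of_pos hT] at h
  calc t * Real.sin (t / T) ≤ |t| * |Real.sin (t / T)| := by
        rw [← abs_mul]
        exact le_abs_self _
    _ ≤ |t| * (|t| / T) := by gcongr
    _ = t ^ 2 / T := by rw [← mul_div_assoc, ← sq, sq_abs]

/-- The archimedean side is of logarithmic size at distance `1 / T` from the origin. -/
theorem exists_log_le_gammaSide : ∃ C, ∀ T, 8 ≤ T → ∀ s : ℝ, s = 1 ∨ s = -1 →
    Real.log T / 128 - C ≤ s * (gammaSide T (s / T)).re := by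
  obtain ⟨C₁, hC₁⟩ := exists_log_le_Bre
  set K := ∫ t, |Bre t / (1 / 4 + t ^ 2)|
  set b := |Bre 0| with hb
  have hb0 : 0 ≤ b := abs_nonneg _
  have hbB : ∀ t, 0 ≤ Bre t + b := fun t => by
    linarith [Bre_zero_le t, neg_abs_le (Bre 0)]
  refine ⟨K + 2 * b + |C₁| + Real.log 4, fun T hT s hs => ?_⟩
  have hT0 : 0 < T := by linarith
  have i0 := integrable_Bre_div
  have hcB := continuous_Bre
  have hct := continuous_tent T
  set F₁ : ℝ → ℝ := fun t => tent T t * (-s * Real.cos (t / T) / 2) *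
      (Bre t / (1 / 4 + t ^ 2)) with hF₁
  set F₂ : ℝ → ℝ := fun t => tent T t * (t * Real.sin (t / T)) *
      ((Bre t + b) / (1 / 4 + t ^ 2)) with hF₂
  set F₃ : ℝ → ℝ := fun t => b * (tent T t * (t * Real.sin (t / T)) / (1 / 4 + t ^ 2)) with hF₃
  have hcp : ∀ {f : ℝ → ℝ}, Continuous f → Integrable fun t => tent T t * f t := fun {f} hf => by
    refine Continuous.integrable_of_hasCompactSupport (by fun_prop) ?_
    refine HasCompactSupport.of_support_subset_isCompact (isCompact_Icc (a := -T) (b := T)) ?_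
    intro t ht
    by_contra hn
    rw [mem_Icc, ← abs_le, not_le] at hn
    exact ht (by simp only [tent_of_le hT0 hn.le, zero_mul])
  have hden : Continuous fun t : ℝ => (1 / 4 + t ^ 2)⁻¹ :=
    Continuous.inv₀ (by fun_prop) fun t => by positivity
  have j1 : Integrable F₁ := by
    refine (hcp (f := fun t => (-s * Real.cos (t / T) / 2) * (Bre t * (1 / 4 + t ^ 2)⁻¹))
      (by fun_prop)).congr (Eventually.of_forall fun t => ?_)
    simp only [hF₁]
    ring
  have j2 : Integrable F₂ := by
    refine (hcp (f := fun t => (t * Real.sin (t / T)) * ((Bre t + b) * (1 / 4 + t ^ 2)⁻¹))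
      (by fun_prop)).congr (Eventually.of_forall fun t => ?_)
    simp only [hF₂]
    ring
  have j3 : Integrable F₃ := by
    refine (hcp (f := fun t => b * (t * Real.sin (t / T)) * (1 / 4 + t ^ 2)⁻¹)
      (by fun_prop)).congr (Eventually.of_forall fun t => ?_)
    simp only [hF₃]
    ring
  have hsplit : s * (gammaSide T (s / T)).re = (∫ t, F₁ t) + (∫ t, F₂ t) - ∫ t, F₃ t := by
    have j12 : Integrable fun t => F₁ t + F₂ t := j1.add j2
    rw [re_gammaSide hT0, ← integral_const_mul, ← integral_add j1 j2, ← integral_sub j12 j3]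
    refine integral_congr_ae (Eventually.of_forall fun t => ?_)
    simp only [hF₁, hF₂, hF₃]
    rcases hs with rfl | rfl
    · rw [mul_one_div]
      ring
    · rw [show t * (-1 / T) = -(t / T) by ring, Real.sin_neg, Real.cos_neg]
      ring
  have h1 : -K ≤ ∫ t, F₁ t := by
    refine neg_le_of_abs_le ((abs_integral_le_integral_abs).trans ?_)
    refine integral_mono_of_nonneg (Eventually.of_forall fun _ => abs_nonneg _)
      i0.abs (Eventually.of_forall fun t => ?_)
    simp only [hF₁]
    rw [abs_mul]
    refine mul_le_of_le_one_left (abs_nonneg _) ?_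
    rw [abs_mul, abs_of_nonneg (tent_nonneg T t), abs_div, abs_mul, abs_neg,
      show |s| = 1 by rcases hs with h | h <;> simp [h], abs_two, one_mul]
    have := Real.abs_cos_le_one (t / T)
    have := tent_le_one hT0 t
    have := tent_nonneg T t
    exact mul_le_one₀ (tent_le_one hT0 t) (by positivity) (by linarith)
  have h3 : ∫ t, F₃ t ≤ 2 * b := by
    have : ∫ t, F₃ t ≤ ∫ t, b * (tent T t / T) := by
      refine integral_mono j3 (((integrable_tent hT0).div_const T).const_mul b) fun t => ?_
      simp only [hF₃]
      refine mul_le_mul_of_nonneg_left ?_ hb0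
      rw [mul_div_assoc, div_eq_mul_one_div (tent T t) T]
      refine mul_le_mul_of_nonneg_left ?_ (tent_nonneg T t)
      rw [div_le_div_iff₀ (by positivity) hT0]
      have := mul_sin_div_le (t := t) hT0
      rw [le_div_iff₀ hT0] at this
      linarith
    refine this.trans ?_
    rw [integral_const_mul, integral_div]
    have : (∫ t, tent T t) / T ≤ 2 := (div_le_iff₀ hT0).2 (integral_tent_le hT0)
    nlinarith
  have h2 : Real.log T / 128 - (|C₁| + Real.log 4) ≤ ∫ t, F₂ t := by
    have hn : ∀ t, 0 ≤ F₂ t := fun t => by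
      simp only [hF₂]
      rcases le_or_gt |t| T with h | h
      · exact mul_nonneg (mul_nonneg (tent_nonneg T t) (mul_sin_div_nonneg hT0 h))
          (div_nonneg (hbB t) (by positivity))
      · rw [tent_of_le hT0 h.le, zero_mul, zero_mul]
    refine le_trans ?_ (setIntegral_le_integral (s := Icc (T / 4) (T / 2)) j2
      (Eventually.of_forall hn))
    set y := 1 / (8 * T) * (Real.log (T / 4) / 4 - C₁ + b) with hy
    have hlow : ∀ t ∈ Icc (T / 4) (T / 2), y ≤ F₂ t := fun t ht => by
      have ht0 : 0 < t := by linarith [ht.1]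
      have hB := hC₁ t (by linarith [ht.1])
      have hlog := Real.log_le_log (by linarith) ht.1
      have htent : 1 / 2 ≤ tent T t := by
        rw [tent_of_abs_le hT0 (by rw [abs_of_pos ht0]; linarith [ht.2]), abs_of_pos ht0]
        have : t / T ≤ 1 / 2 := by
          rw [div_le_div_iff₀ hT0 two_pos]
          linarith [ht.2]
        linarith
      have hpi := Real.pi_gt_three
      have hpi2 := Real.pi_lt_four
      have htT : t / T ≤ 1 / 2 := by
        rw [div_le_div_iff₀ hT0 two_pos]
        linarith [ht.2]
      have hsin : t / T / 2 ≤ Real.sin (t / T) := by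
        refine le_trans ?_ (Real.mul_le_sin (x := t / T) (by positivity) (by linarith))
        rw [div_eq_inv_mul]
        refine mul_le_mul_of_nonneg_right ?_ (by positivity)
        rw [inv_eq_one_div, div_le_div_iff₀ two_pos Real.pi_pos]
        linarith
      have hq : 1 / 2 * (1 / (2 * T)) * (Bre t + b) * (1 / 2) ≤ F₂ t := by
        simp only [hF₂]
        have e1 : 1 / (2 * T) * (1 / 2) ≤ t * Real.sin (t / T) * (1 / (1 / 4 + t ^ 2)) := by
          have : t * (t / T / 2) * (1 / (1 / 4 + t ^ 2)) ≤
            t * Real.sin (t / T) * (1 / (1 / 4 + t ^ 2)) := by gcongr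
          refine le_trans ?_ this
          rw [show t * (t / T / 2) * (1 / (1 / 4 + t ^ 2)) = 1 / (2 * T) *
              (t ^ 2 / (1 / 4 + t ^ 2)) by
            field_simp]
          refine mul_le_mul_of_nonneg_left ?_ (by positivity)
          rw [div_le_div_iff₀ (by norm_num) (by positivity)]
          nlinarith [ht.1]
        have e2 := mul_le_mul htent e1 (by positivity) (tent_nonneg T t)
        have e3 := mul_le_mul_of_nonneg_right e2 (hbB t)
        calc _ = 1 / 2 * (1 / (2 * T) * (1 / 2)) * (Bre t + b) := by ring
          _ ≤ _ := e3
          _ = _ := by ring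
      refine le_trans ?_ hq
      rw [hy]
      have : 0 < 1 / (8 * T) := by positivity
      calc 1 / (8 * T) * (Real.log (T / 4) / 4 - C₁ + b) ≤ 1 / (8 * T) * (Bre t + b) := by
            gcongr
            linarith
        _ = _ := by
          field_simp
          ring
    have hconst := setIntegral_mono_on (s := Icc (T / 4) (T / 2)) (f := fun _ => y) (g := F₂)
      (integrableOn_const measure_Icc_lt_top.ne) j2.integrableOn measurableSet_Icc hlow
    refine le_trans ?_ hconst
    rw [setIntegral_const, Measure.real, Real.volume_Icc, ENNReal.toReal_ofReal (by linarith),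
      smul_eq_mul, hy]
    have : (T / 2 - T / 4) * (1 / (8 * T) * (Real.log (T / 4) / 4 - C₁ + b)) =
        1 / 32 * (Real.log (T / 4) / 4 - C₁ + b) := by
      field_simp
      ring
    rw [this, Real.log_div hT0.ne' (by norm_num)]
    have := Real.log_nonneg (show (1 : ℝ) ≤ 4 by norm_num)
    linarith [le_abs_self C₁, abs_nonneg C₁]
  rw [hsplit]
  linarith

end

section

variable {T v : ℝ}

/-- The archimedean side is bounded for large arguments. -/
theorem exists_norm_gammaSide_le :
    ∃ C, 0 ≤ C ∧ ∀ T, 2 ≤ T → ∀ v, T ^ 2 ≤ v → ‖gammaSide T v‖ ≤ C := by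
  obtain ⟨C, hC, hB⟩ := exists_abs_Bre_le
  refine ⟨8 * (12 * C + 2), by positivity, fun T hT v hv => ?_⟩
  have hT0 : 0 < T := by linarith
  have hv4 : 4 ≤ v := by nlinarith
  have hv0 : 0 < v := by linarith
  have hpi := Real.pi_lt_four
  have hpi0 := Real.pi_pos
  set δ := Real.pi / v with hδ
  have hδ0 : 0 < δ := by positivity
  have hδ1 : δ ≤ 1 := by
    rw [hδ, div_le_one hv0]
    linarith
  have ha : (0 : ℝ) < 1 / 2 := by norm_num
  set w : ℝ → ℂ := fun t => -(1 / 2 : ℝ) + t * Complex.I with hw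
  have hw0 : ∀ t, w t ≠ 0 := neg_add_mul_I_ne_zero ha
  have hwn : ∀ t, ‖(w t)⁻¹‖ ≤ 2 := fun t => by
    rw [norm_inv]
    refine (inv_anti₀ ha (le_norm_neg_add_mul_I ha t)).trans (by norm_num)
  set g : ℝ → ℂ := fun t => (tent T t : ℂ) * (Bre t : ℂ) * (w t)⁻¹ with hg
  have hg0 : ∀ t, T ≤ |t| → g t = 0 := fun t ht => by simp [hg, tent_of_le hT0 ht]
  have hgc : Continuous g := by
    have := continuous_tent T
    have := continuous_Bre
    have h1 : Continuous fun t => (w t)⁻¹ := Continuous.inv₀ (by fun_prop) hw0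
    fun_prop
  set e : ℝ → ℂ := fun t => Complex.exp (t * v * Complex.I) with he
  have hec : Continuous e := by fun_prop
  have hen : ∀ t, ‖e t‖ = 1 := fun t => by
    rw [he]
    simp only
    rw [← Complex.ofReal_mul, Complex.norm_exp_ofReal_mul_I]
  have hgI : Integrable fun t => g t * e t :=
    Continuous.integrable_of_hasCompactSupport (by fun_prop)
      (hasCompactSupport_of_le (T := T) fun t ht => by rw [hg0 t ht, zero_mul])
  have h1 : gammaSide T v = ∫ t, g t * e t := by
    rw [gammaSide]
    refine integral_congr_ae (Eventually.of_forall fun t => ?_)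
    simp only [testFun, hg, he, hw]
    ring
  have heδ : ∀ t, e (t + δ) = -e t := fun t => by
    simp only [he]
    rw [show ((t + δ : ℝ) : ℂ) * v * Complex.I = t * v * Complex.I + Real.pi * Complex.I by
      rw [hδ]
      have : (v : ℂ) ≠ 0 := by exact_mod_cast hv0.ne'
      push_cast
      field_simp, Complex.exp_add, Complex.exp_pi_mul_I]
    ring
  have h2 : ∫ t, g t * e t = -∫ t, g (t + δ) * e t := by
    rw [← integral_add_right_eq_self (fun t => g t * e t) δ, ← integral_neg]
    refine integral_congr_ae (Eventually.of_forall fun t => ?_)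
    simp only
    rw [heδ]
    ring
  have hgI2 : Integrable fun t => g (t + δ) * e t := by
    refine ((hgI.comp_add_right δ).neg).congr (Eventually.of_forall fun t => ?_)
    simp [heδ]
  have h3 : 2 * gammaSide T v = ∫ t, (g t - g (t + δ)) * e t := by
    simp only [sub_mul]
    rw [integral_sub hgI hgI2, two_mul]
    nth_rw 2 [h1]
    rw [h1, h2]
    ring
  have hBb : ∀ t, |t| ≤ T + 2 → |Bre t| ≤ 2 * C * T := fun t ht => by
    refine (hB t).trans ?_
    have : √|t| ≤ T := Real.sqrt_le_iff.2 ⟨hT0.le, by nlinarith⟩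
    nlinarith
  have hlip : ∀ t ∈ Icc (-(T + 1)) (T + 1), ‖(g t - g (t + δ)) * e t‖ ≤ (12 * C * T + 2) * δ := by
    intro t ht
    have htT := abs_le.2 ht
    have htδ : |t + δ| ≤ T + 2 := (abs_add_le _ _).trans (by rw [abs_of_pos hδ0]; linarith)
    rw [norm_mul, hen, mul_one]
    have hdec : g t - g (t + δ) = ((tent T t - tent T (t + δ) : ℝ) : ℂ) * Bre t * (w t)⁻¹ +
        (tent T (t + δ) : ℂ) * ((Bre t - Bre (t + δ) : ℝ) : ℂ) * (w t)⁻¹ +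
        (tent T (t + δ) : ℂ) * (Bre (t + δ) : ℂ) * ((w t)⁻¹ - (w (t + δ))⁻¹) := by
      simp only [hg]
      push_cast
      ring
    have hd : |t - (t + δ)| = δ := by
      rw [sub_add_cancel_left, abs_neg, abs_of_pos hδ0]
    have b1 : |tent T t - tent T (t + δ)| ≤ δ := by
      refine (abs_tent_sub_le hT0 _ _).trans ?_
      rw [hd]
      exact div_le_self hδ0.le (by linarith)
    have b2 : |Bre t - Bre (t + δ)| ≤ δ := (abs_Bre_sub_le _ _).trans hd.le
    have b3 : ‖(w t)⁻¹ - (w (t + δ))⁻¹‖ ≤ 4 * δ := by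
      have : (w t)⁻¹ - (w (t + δ))⁻¹ = (w t)⁻¹ * (w (t + δ))⁻¹ * (δ * Complex.I) := by
        have e1 := hw0 t
        have e2 := hw0 (t + δ)
        have e3 : (δ * Complex.I : ℂ) = w (t + δ) - w t := by
          simp only [hw]
          push_cast
          ring
        rw [e3]
        field_simp
      rw [this, norm_mul, norm_mul, norm_mul, Complex.norm_I, mul_one, Complex.norm_real,
        Real.norm_of_nonneg hδ0.le]
      have := mul_le_mul (hwn t) (hwn (t + δ)) (norm_nonneg _) zero_le_two
      nlinarith
    have b4 : |tent T (t + δ)| ≤ 1 := by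
      rw [abs_of_nonneg (tent_nonneg _ _)]
      exact tent_le_one hT0 _
    have b5 := hBb t (by linarith)
    have b6 := hBb (t + δ) htδ
    rw [hdec]
    refine (norm_add₃_le).trans ?_
    simp only [norm_mul, Complex.norm_real, Real.norm_eq_abs]
    have hCT : 0 ≤ 2 * C * T := by positivity
    have c1 : |tent T t - tent T (t + δ)| * |Bre t| * ‖(w t)⁻¹‖ ≤ δ * (2 * C * T) * 2 := by
      gcongr
      exact hwn t
    have c2 : |tent T (t + δ)| * |Bre t - Bre (t + δ)| * ‖(w t)⁻¹‖ ≤ 1 * δ * 2 := by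
      gcongr
      exact hwn t
    have c3 : |tent T (t + δ)| * |Bre (t + δ)| * ‖(w t)⁻¹ - (w (t + δ))⁻¹‖ ≤
        1 * (2 * C * T) * (4 * δ) := by gcongr
    linarith
  have hsupp : ∀ t, t ∉ Icc (-(T + 1)) (T + 1) → (g t - g (t + δ)) * e t = 0 := fun t ht => by
    rw [mem_Icc, ← abs_le, not_le] at ht
    have h5 : |t| - |δ| ≤ |t + δ| := by
      have := abs_sub_abs_le_abs_sub t (-δ)
      rwa [abs_neg, sub_neg_eq_add] at this
    rw [abs_of_pos hδ0] at h5
    rw [hg0 t (by linarith), hg0 (t + δ) (by linarith), sub_zero, zero_mul]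
  have h6 := norm_setIntegral_le_of_norm_le_const (μ := volume) measure_Icc_lt_top hlip
  rw [setIntegral_eq_integral_of_forall_compl_eq_zero hsupp, ← h3, norm_mul, Complex.norm_ofNat,
    Measure.real, Real.volume_Icc, ENNReal.toReal_ofReal (by linarith)] at h6
  have h7 : (12 * C * T + 2) * δ * (T + 1 - -(T + 1)) ≤ 16 * (12 * C + 2) := by
    have e1 : δ * T ^ 2 ≤ 4 := by
      rw [hδ, div_mul_eq_mul_div, div_le_iff₀ hv0]
      nlinarith
    have e2 : (12 * C * T + 2) ≤ (12 * C + 2) * T := by nlinarith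
    have e3 : T + 1 - -(T + 1) ≤ 4 * T := by linarith
    calc (12 * C * T + 2) * δ * (T + 1 - -(T + 1)) ≤ ((12 * C + 2) * T) * δ * (4 * T) := by
          gcongr
          linarith
      _ = 4 * (12 * C + 2) * (δ * T ^ 2) := by ring
      _ ≤ 4 * (12 * C + 2) * 4 := by gcongr
      _ = _ := by ring
  linarith

/-- Simultaneous approximation in the style of Dirichlet. -/
theorem exists_norm_cexp_sub_one_le (S : Finset ℝ) {Q : ℕ} (hQ : 0 < Q) (d : ℝ) :
    ∃ n : ℕ, 1 ≤ n ∧ n ≤ Q ^ S.card ∧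
      ∀ γ ∈ S, ‖Complex.exp (γ * (n * d) * Complex.I) - 1‖ ≤ 2 * Real.pi / Q := by
  have hQ0 : (0 : ℝ) < Q := by exact_mod_cast hQ
  set x : ℝ → ℕ → ℝ := fun γ n => γ * (n * d) / (2 * Real.pi) with hx
  have hlt : ∀ γ n, ⌊Q * Int.fract (x γ n)⌋₊ < Q := fun γ n => by
    rw [Nat.floor_lt (mul_nonneg hQ0.le (Int.fract_nonneg _))]
    exact mul_lt_of_lt_one_right hQ0 (Int.fract_lt_one _)
  set f : Fin (Q ^ S.card + 1) → (S → Fin Q) :=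
    fun n γ => ⟨⌊Q * Int.fract (x γ n)⌋₊, hlt γ n⟩ with hf
  obtain ⟨i, j, hij, hfij⟩ := Fintype.exists_ne_map_eq_of_card_lt f (by simp)
  wlog hlt' : i < j generalizing i j
  · exact this j i hij.symm hfij.symm (lt_of_le_of_ne (not_lt.1 hlt') hij.symm)
  have hij' : (i : ℕ) < j := hlt'
  refine ⟨j - i, by omega, by omega, fun γ hγ => ?_⟩
  have h1 : ⌊Q * Int.fract (x γ i)⌋₊ = ⌊Q * Int.fract (x γ j)⌋₊ := by
    have := congrFun hfij ⟨γ, hγ⟩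
    simpa [hf] using this
  set p := Int.fract (x γ i) with hp
  set q := Int.fract (x γ j) with hq
  have a1 := Nat.floor_le (mul_nonneg hQ0.le (Int.fract_nonneg (x γ i)))
  have a2 := Nat.lt_floor_add_one (Q * p)
  have a3 := Nat.floor_le (mul_nonneg hQ0.le (Int.fract_nonneg (x γ j)))
  have a4 := Nat.lt_floor_add_one (Q * q)
  rw [← hp] at a1
  rw [← hq] at a3
  rw [← h1] at a3 a4
  have h2 : |q - p| ≤ 1 / Q := by
    rw [abs_le, ← neg_div, div_le_iff₀ hQ0, le_div_iff₀ hQ0]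
    constructor <;> linarith
  have h3 : (γ * (((j - i : ℕ) : ℂ) * d) * Complex.I : ℂ) =
      Complex.I * ((2 * Real.pi * (q - p) : ℝ) : ℂ) +
        ((⌊x γ j⌋ - ⌊x γ i⌋ : ℤ) : ℂ) * (2 * Real.pi * Complex.I) := by
    have e1 : γ * (((j - i : ℕ) : ℝ) * d) =
        2 * Real.pi * (q - p) + ((⌊x γ j⌋ - ⌊x γ i⌋ : ℤ) : ℝ) * (2 * Real.pi) := by
      have e2 := Int.floor_add_fract (x γ i)
      have e3 := Int.floor_add_fract (x γ j)
      have e4 : γ * (((j - i : ℕ) : ℝ) * d) = 2 * Real.pi * (x γ j - x γ i) := by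
        rw [Nat.cast_sub hij'.le]
        simp only [hx]
        field_simp
      rw [← hp] at e2
      rw [← hq] at e3
      rw [e4]
      push_cast
      linear_combination 2 * Real.pi * e2 - 2 * Real.pi * e3
    have e5 := congrArg (fun r : ℝ => (r : ℂ) * Complex.I) e1
    push_cast at e5 ⊢
    rw [e5]
    ring
  rw [h3, Complex.exp_add, Complex.exp_int_mul_two_pi_mul_I, mul_one]
  refine (Real.norm_exp_I_mul_ofReal_sub_one_le).trans ?_
  rw [Real.norm_eq_abs, abs_mul, abs_of_pos Real.two_pi_pos]
  calc 2 * Real.pi * |q - p| ≤ 2 * Real.pi * (1 / Q) := by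
        gcongr
    _ = _ := by ring

end

theorem log_log_le_two_mul_sqrt {u : ℝ} (hu : 1 ≤ u) : Real.log (Real.log u) ≤ 2 * √u := by
  have h1 : Real.log u = 2 * Real.log √u := by
    rw [Real.log_sqrt (by linarith)]
    ring
  have h2 := Real.log_le_self (Real.log_nonneg hu)
  have h3 := Real.log_le_self (Real.sqrt_nonneg u)
  linarith

theorem one_lt_log_of_three_le {v : ℝ} (hv : 3 ≤ v) : 1 < Real.log v := by
  rw [Real.lt_log_iff_exp_lt (by linarith)]
  exact Real.exp_one_lt_three.trans_le hv

theorem log_one_add_le_two_mul_sqrt {x : ℝ} (hx : 0 ≤ x) : Real.log (1 + x) ≤ 2 * √x := by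
  have h1 : Real.log (1 + x) = 2 * Real.log √(1 + x) := by
    rw [Real.log_sqrt (by linarith)]
    ring
  have h2 : √(1 + x) ≤ 1 + √x := by
    rw [Real.sqrt_le_iff]
    exact ⟨by positivity, by nlinarith [Real.sq_sqrt hx, Real.sqrt_nonneg x]⟩
  have h3 := Real.log_le_sub_one_of_pos (Real.sqrt_pos.2 (by linarith : 0 < 1 + x))
  linarith

theorem log_log_le_add_sqrt {u v : ℝ} (hv : 3 ≤ v) (huv : v ≤ u) :
    Real.log (Real.log u) ≤ Real.log (Real.log v) + 2 * √(u - v) := by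
  have hv1 := one_lt_log_of_three_le hv
  have h1 : Real.log u ≤ Real.log v * (1 + (u - v)) := by
    have e1 := Real.log_le_sub_one_of_pos (div_pos (by linarith) (by linarith) : 0 < u / v)
    rw [Real.log_div (by linarith) (by linarith)] at e1
    have e2 : u / v - 1 ≤ u - v := by
      rw [div_sub_one (by linarith), div_le_iff₀ (by linarith)]
      nlinarith
    nlinarith
  have h2 := Real.log_le_log (by linarith [one_lt_log_of_three_le (hv.trans huv)]) h1
  rw [Real.log_mul (by linarith) (by linarith)] at h2
  linarith [log_one_add_le_two_mul_sqrt (sub_nonneg.2 huv)]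

theorem le_add_sqrt_of_le_log_log {f : ℝ → ℝ} {A c u₀ : ℝ} (hA : 0 ≤ A) (hc : 0 ≤ c)
    (hc2 : 2 * c ≤ 1) (hu₀ : 3 ≤ u₀) (hf : ∀ u, 0 < u → u ≤ u₀ → f u ≤ A)
    (hle : ∀ u, u₀ ≤ u → f u ≤ c * Real.log (Real.log u)) :
    (∀ u, 0 < u → f u ≤ A + √u) ∧
      ∀ v, 3 ≤ v → ∀ u, 0 < u → f u ≤ A + c * Real.log (Real.log v) + √|u - v| := by
  constructor
  · intro u hu
    rcases le_total u u₀ with h | h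
    · linarith [hf u hu h, Real.sqrt_nonneg u]
    · have h1 := log_log_le_two_mul_sqrt (show 1 ≤ u by linarith)
      nlinarith [hle u h, mul_le_mul_of_nonneg_left h1 hc, Real.sqrt_nonneg u]
  · intro v hv u hu
    have hv1 := one_lt_log_of_three_le hv
    have hv2 : 0 ≤ c * Real.log (Real.log v) := mul_nonneg hc (Real.log_nonneg hv1.le)
    have hs := Real.sqrt_nonneg |u - v|
    rcases le_total u u₀ with h | h
    · linarith [hf u hu h]
    · refine (hle u h).trans ?_
      rcases le_total u v with h' | h'
      · have h1 : Real.log (Real.log u) ≤ Real.log (Real.log v) :=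
          Real.log_le_log (by linarith [one_lt_log_of_three_le (hu₀.trans h)])
            (Real.log_le_log hu h')
        linarith [mul_le_mul_of_nonneg_left h1 hc]
      · have h1 := log_log_le_add_sqrt hv h'
        rw [abs_of_nonneg (sub_nonneg.2 h')] at hs ⊢
        nlinarith [mul_le_mul_of_nonneg_left h1 hc]

theorem norm_zeroSum_sub_le {S : Finset ℝ} {m : ℝ → ℕ} {T C δ : ℝ} (hT : 0 < T) (hδ : 0 ≤ δ)
    (hS : ∑ γ ∈ S with |γ| ≤ T, m γ / (1 / 4 + γ ^ 2) ≤ C) (v τ : ℝ)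
    (hτ : ∀ γ ∈ S.filter (fun γ => |γ| ≤ T), ‖Complex.exp (γ * τ * Complex.I) - 1‖ ≤ δ) :
    ‖zeroSum S m T (v + τ) - zeroSum S m T v‖ ≤ δ * (T + 1) * C := by
  have h0 : zeroSum S m T (v + τ) - zeroSum S m T v =
      ∑ γ ∈ S with |γ| ≤ T, (m γ : ℂ) * (testFun (1 / 2) T v γ *
        (Complex.exp (γ * τ * Complex.I) - 1)) := by
    rw [zeroSum, zeroSum, ← Finset.sum_sub_distrib, Finset.sum_filter]
    refine Finset.sum_congr rfl fun γ _ => ?_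
    split_ifs with h
    · simp only [testFun]
      have : Complex.exp (γ * ((v + τ : ℝ) : ℂ) * Complex.I) =
          Complex.exp (γ * v * Complex.I) * Complex.exp (γ * τ * Complex.I) := by
        rw [← Complex.exp_add]
        push_cast
        ring_nf
      rw [this]
      ring
    · rw [testFun_of_le hT (not_le.1 h).le, testFun_of_le hT (not_le.1 h).le]
      simp
  rw [h0]
  refine (norm_sum_le _ _).trans ?_
  calc ∑ γ ∈ S with |γ| ≤ T, ‖(m γ : ℂ) * (testFun (1 / 2) T v γ *
        (Complex.exp (γ * τ * Complex.I) - 1))‖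
      ≤ ∑ γ ∈ S with |γ| ≤ T, δ * (T + 1) * (m γ / (1 / 4 + γ ^ 2)) := by
        refine Finset.sum_le_sum fun γ hγ => ?_
        have hγT : |γ| ≤ T := (Finset.mem_filter.1 hγ).2
        rw [norm_mul, norm_mul, Complex.norm_natCast, norm_testFun]
        have hw2 : ‖(-((1 / 2 : ℝ) : ℂ) + γ * Complex.I : ℂ)‖ ^ 2 = 1 / 4 + γ ^ 2 := by
          rw [← Complex.normSq_eq_norm_sq, Complex.normSq_apply]
          simp
          ring
        have hw : ‖(-((1 / 2 : ℝ) : ℂ) + γ * Complex.I : ℂ)‖ ≤ T + 1 := by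
          refine (norm_add_le _ _).trans ?_
          rw [norm_neg, norm_mul, Complex.norm_I, Complex.norm_real, Complex.norm_real]
          norm_num
          linarith
        have hwp : 0 < ‖(-((1 / 2 : ℝ) : ℂ) + γ * Complex.I : ℂ)‖ :=
          norm_pos_iff.2 (neg_add_mul_I_ne_zero (by norm_num) γ)
        generalize ‖(-((1 / 2 : ℝ) : ℂ) + γ * Complex.I : ℂ)‖ = w at *
        have h1 : tent T γ / w ≤ (T + 1) / (1 / 4 + γ ^ 2) := by
          rw [← hw2]
          calc tent T γ / w ≤ 1 / w := by
                gcongr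
                exact tent_le_one hT γ
            _ = w / w ^ 2 := by field_simp
            _ ≤ _ := by gcongr
        calc (m γ : ℝ) * (tent T γ / w * ‖Complex.exp (γ * τ * Complex.I) - 1‖)
            ≤ m γ * ((T + 1) / (1 / 4 + γ ^ 2) * δ) := by
              gcongr
              exact hτ γ hγ
          _ = _ := by ring
    _ = δ * (T + 1) * ∑ γ ∈ S with |γ| ≤ T, m γ / (1 / 4 + γ ^ 2) := by
        rw [Finset.mul_sum]
    _ ≤ _ := by gcongr

theorem log_log_le_of_le_pow {v T C : ℝ} {N : ℕ} (hT : 8 ≤ T) (hC : 0 ≤ C) (hv : 3 ≤ v)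
    (hN : N ≤ C * T ^ 2) (hle : v ≤ T ^ (N + 4)) :
    Real.log (Real.log v) ≤ Real.log (C + 4) + 3 * Real.log T := by
  have h1 : Real.log v ≤ (C + 4) * T ^ 3 := by
    have e1 := Real.log_le_log (by linarith) hle
    rw [Real.log_pow] at e1
    have e2 := Real.log_le_self (show 0 ≤ T by linarith)
    have e3 : ((N + 4 : ℕ) : ℝ) ≤ (C + 4) * T ^ 2 := by
      push_cast
      nlinarith
    calc Real.log v ≤ ((N + 4 : ℕ) : ℝ) * Real.log T := e1
      _ ≤ ((C + 4) * T ^ 2) * T := by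
          gcongr
          exact Real.log_nonneg (by linarith)
      _ = _ := by ring
  have h2 := Real.log_le_log (by linarith [one_lt_log_of_three_le hv]) h1
  rwa [Real.log_mul (by positivity) (by positivity), Real.log_pow] at h2

theorem exists_log_log_lt_mul_fR {η : ℝ} (hη : η = 1 ∨ η = -1) {u₀ : ℝ} (hu₀ : 3 ≤ u₀) :
    ∃ u, u₀ ≤ u ∧ 1 / 10000 * Real.log (Real.log u) < η * fR u := by
  by_contra! hcon
  have hη1 : |η| = 1 := by rcases hη with rfl | rfl <;> simp
  obtain ⟨A, hA, hfA⟩ := exists_abs_fR_le u₀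
  obtain ⟨hb1, hb2⟩ := le_add_sqrt_of_le_log_log (f := fun u => η * fR u) hA
    (by norm_num : (0 : ℝ) ≤ 1 / 10000) (by norm_num) hu₀
    (fun u hu huu => (le_abs_self _).trans (by
      rw [abs_mul, hη1, one_mul]
      exact hfA u hu huu)) hcon
  obtain ⟨C, hC, hmain⟩ := exists_sum_zeros_le hη hA hb1
  obtain ⟨C₁, hlow⟩ := exists_log_le_gammaSide
  obtain ⟨C₂, hC₂, hup⟩ := exists_norm_gammaSide_le
  set K := C₂ + C₁ + C + Real.pi * (4 * Real.pi * C) + 8 * A +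
    8 / 10000 * Real.log (C + 4) + C with hK
  obtain ⟨Q, hQ8, hQK⟩ := ((eventually_ge_atTop 8).and
    ((Real.tendsto_log_atTop.comp tendsto_natCast_atTop_atTop).eventually_gt_atTop
      (200 * |K|))).exists
  have hT : (8 : ℝ) ≤ (Q : ℝ) := by exact_mod_cast hQ8
  simp only [Function.comp_apply] at hQK
  obtain ⟨S, m, hS1, hS2, hS3, hS4⟩ := hmain Q (by linarith)
  obtain ⟨n, hn1, hn2, hn3⟩ := exists_norm_cexp_sub_one_le (S.filter fun γ => |γ| ≤ Q)
    (show 0 < Q by omega) (2 * (Q : ℝ) ^ 2)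
  set N := (S.filter fun γ => |γ| ≤ (Q : ℝ)).card
  generalize hTQ : (Q : ℝ) = T at *
  have hn2' : (n : ℝ) ≤ T ^ N := by
    rw [← hTQ]
    exact_mod_cast hn2
  have hn1' : (1 : ℝ) ≤ n := by exact_mod_cast hn1
  set τ : ℝ := n * (2 * T ^ 2) with hτ
  have hs : -η = 1 ∨ -η = -1 := by rcases hη with rfl | rfl <;> simp
  set v₀ := -η / T with hv₀
  have hv₀1 : |v₀| ≤ 1 := by
    rw [hv₀, abs_div, abs_neg, hη1, abs_of_pos (by linarith : 0 < T), div_le_one (by linarith)]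
    linarith
  have hv₀2 := abs_le.1 hv₀1
  have hτ1 : 2 * T ^ 2 ≤ τ := by nlinarith [sq_nonneg T]
  have hv1 : T ^ 2 ≤ v₀ + τ := by nlinarith
  have hv3 : 3 ≤ v₀ + τ := by nlinarith
  have hvN : v₀ + τ ≤ T ^ (N + 4) := by
    have e1 : 1 ≤ T ^ N := one_le_pow₀ (by linarith)
    have e2 : τ ≤ T ^ N * (2 * T ^ 2) := by
      rw [hτ]
      gcongr
    have e3 : T ^ N * (2 * T ^ 2) + 1 ≤ T ^ N * T ^ 4 := by
      have : 64 ≤ T ^ 2 := by nlinarith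
      have : 2 * T ^ 2 + 1 ≤ T ^ 4 := by nlinarith
      nlinarith
    rw [pow_add]
    linarith
  have hLL := log_log_le_of_le_pow hT hC hv3 hS2 hvN
  have hlv : 0 ≤ Real.log (Real.log (v₀ + τ)) := Real.log_nonneg (one_lt_log_of_three_le hv3).le
  have hz : ‖zeroSum S m T (v₀ + τ) - zeroSum S m T v₀‖ ≤ 4 * Real.pi * C := by
    refine (norm_zeroSum_sub_le (by linarith) (by positivity) hS1 v₀ τ
      (δ := 2 * Real.pi / T) fun γ hγ => ?_).trans ?_
    · have := hn3 γ hγ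
      rw [hτ]
      push_cast at this ⊢
      exact this
    · have : 2 * Real.pi / T * (T + 1) ≤ 4 * Real.pi := by
        rw [div_mul_eq_mul_div, div_le_iff₀ (by linarith)]
        nlinarith [Real.pi_pos]
      gcongr
  have k1 := hS4 (v₀ + τ) (by linarith) (A + 1 / 10000 * Real.log (Real.log (v₀ + τ)))
    (by positivity) (hb2 _ hv3)
  have k2 := hS3 v₀ hv₀1
  have k3 := hup T (by linarith) (v₀ + τ) hv1
  have k4 := hlow T hT (-η) hs
  rw [← hv₀] at k4
  have re_le : ∀ z : ℂ, -‖z‖ ≤ η * z.re := fun z => by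
    have := Complex.abs_re_le_norm z
    rw [← one_mul |z.re|, ← hη1, ← abs_mul] at this
    linarith [neg_abs_le (η * z.re)]
  have r1 := re_le (gammaSide T (v₀ + τ))
  have r2 := re_le (gammaSide T v₀ - Real.pi * zeroSum S m T v₀)
  have r3 := re_le (-(Real.pi * (zeroSum S m T (v₀ + τ) - zeroSum S m T v₀)))
  rw [norm_neg, norm_mul, Complex.norm_real, Real.norm_of_nonneg Real.pi_pos.le] at r3
  have r4 := mul_le_mul_of_nonneg_left hz Real.pi_pos.le
  have key : (gammaSide T (v₀ + τ) - Real.pi * zeroSum S m T (v₀ + τ)).re =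
      (gammaSide T (v₀ + τ)).re + (gammaSide T v₀ - Real.pi * zeroSum S m T v₀).re
      - (gammaSide T v₀).re +
      (-(Real.pi * (zeroSum S m T (v₀ + τ) - zeroSum S m T v₀) : ℂ)).re := by
    rw [← Complex.add_re, ← Complex.sub_re, ← Complex.add_re]
    congr 1
    ring
  rw [key] at k1
  have := le_abs_self K
  have hKa := abs_nonneg K
  nlinarith

theorem exists_log_log_log_lt_mul_Rfun {η : ℝ} (hη : η = 1 ∨ η = -1) (X : ℝ) :
    ∃ x, X ≤ x ∧
      1 / 10000 * Real.log (Real.log (Real.log x)) / Real.sqrt x < η * Rfun x := by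
  obtain ⟨u, hu, h⟩ := exists_log_log_lt_mul_fR hη (le_max_left 3 X)
  refine ⟨Real.exp u, ?_, ?_⟩
  · linarith [le_max_right 3 X, Real.add_one_le_exp u]
  · rw [Real.log_exp, ← Real.exp_half, div_lt_iff₀ (Real.exp_pos _)]
    calc _ < η * fR u := h
      _ = _ := by
        rw [fR]
        ring

end RfunOmega

/-- Unconditionally, `R(x) = Ω_±(x^{-1/2} log log log x)`. -/
theorem Rfun_omega_pm :
    ∃ c : ℝ, 0 < c ∧
      (∀ X : ℝ, ∃ x : ℝ, X ≤ x ∧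
        c * Real.log (Real.log (Real.log x)) / Real.sqrt x < Rfun x) ∧
      (∀ X : ℝ, ∃ x : ℝ, X ≤ x ∧
        Rfun x < -(c * Real.log (Real.log (Real.log x)) / Real.sqrt x)) := by
  refine ⟨1 / 10000, by norm_num, fun X => ?_, fun X => ?_⟩
  · obtain ⟨x, hx, h⟩ := RfunOmega.exists_log_log_log_lt_mul_Rfun (.inl rfl) X
    exact ⟨x, hx, by rwa [one_mul] at h⟩
  · obtain ⟨x, hx, h⟩ := RfunOmega.exists_log_log_log_lt_mul_Rfun (.inr rfl) X
    exact ⟨x, hx, by linarith⟩
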